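/- Critical weighted Hermite variation: Let q ≥ 2 be an integer, let x be a fractional Brownian motion with Hurst parameter ν = 1/(2q), and let (y^{(0)},…,y^{(q)}) be controlled by (x,1/2) in L₂ (so ℓ = q+1). Set σ² = q! Σ_{k∈ℤ} ρ(k)^q. Then (x, n^{−1/2} J_0^1(y^{(0)};h^{n,q})) converges stably in distribution to (x, σ∫₀¹ y^{(0)}_u dW_u + (−1/2)^q ∫₀¹ y^{(q)}_u du) with W a standard Brownian motion independent of x; explicitly, for all points u_1,…,u_m ∈ [0,1], every bounded continuous g : ℝ^m → ℂ and every λ ∈ ℝ, E[g(x_{u_1},…,x_{u_m}) exp(iλ n^{−1/2} J_0^1(y^{(0)};h^{n,q}))] → E[g(x_{u_1},…,x_{u_m}) exp(iλ(−1/2)^q ∫₀¹ y^{(q)}_u du − (λ²σ²/2) ∫₀¹ (y^{(0)}_u)² du)] as n → ∞. -/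

import Mathlib

/-!
The critical weighted Hermite variation, with `q = p + 1` throughout the auxiliary results.

Everything rests on Gaussian integration by parts for Hermite functionals (`gaussian_ibp`), used in
two ways. First, it gives recursions for the mixed moments of powers and Hermite polynomials of
jointly Gaussian variables, hence the second-moment bounds for sums of `H_q(n^ν δx)` weighted by
monomials `x^i` (`secondX`). Secondly, applied to the characteristic function, it gives a
quantitative central limit theorem (`CG.clt_ineq`): a sum `S` of Hermite functionals plus another
such sum `S'` has nearly the characteristic function of `S'` plus an independent Gaussian variable,
as soon as a quadratic form in the Hermite polynomials of degree `p` is close to a constant and `S`,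
`S'` are weakly correlated. The mean of the quadratic form converges by a Toeplitz limit
(`tendsto_toeplitz`), its fluctuations vanish because the correlations are summable
(`CG.var_form`).

For deterministic step weights this yields `clt_step`: the sums are asymptotically independent of
each of their own predecessors. A Hilbert space argument (`weak_of_self`) turns this into stable
convergence (`clt_step_stable`), and rounding extends it to random step weights (`clt_random`).

A controlled weight is reduced to step weights in two scales. On cells of length `1/m` the path
`y^{(0)}` is replaced by its expansion `∑ i, y^{(i)} x^i`; the remainders start at order
`(q + 1) ν = 1/2 + ν`, and discrete sewing (`discrete_sewing`, `sum_remd_cell_le`) makes their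
contribution to a cell of order `m ^ (-1 - ν)`, so that their sum over all cells vanishes. Then the
monomials `x^i` are frozen on a finer grid (`base_change`). Each normalised increment has covariance
close to `-n ^ (-ν) / 2` with the increment of the path leading up to it (`IsFBM.cov_Gi_base`).
Contracting all `q` degrees of `H_q` with `x^q` therefore produces the drift `(-1/2) ^ q / m` per
cell; for `i < q` there are too few factors for a complete contraction, and no drift appears. What
remains is a sum with random step weights and a Riemann sum of `y^{(q)}`. On the event where
`x` and `y^{(i)}` are bounded by `R` the approximation errors are controlled uniformly
(`clt_local`), and `R → ∞` concludes (`clt_weighted`).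
-/

open MeasureTheory ProbabilityTheory Filter
open scoped ENNReal NNReal

noncomputable section

variable {Ω : Type*} [MeasurableSpace Ω]

/-- The smallest point `⌈n s⌉ / n` of the uniform `n`-partition that is `≥ s`. -/
def eps (n : ℕ) (s : ℝ) : ℝ := (⌈(n : ℝ) * s⌉ : ℝ) / n

/-- Discrete integral `J_s^t(f;h)` of a two-parameter process `f` against the
increments `h k = h_{t_k t_{k+1}}` along the uniform `n`-partition. -/
def Jtwo (n : ℕ) (f : ℝ → ℝ → Ω → ℝ) (h : ℕ → Ω → ℝ) (s t : ℝ) (ω : Ω) : ℝ :=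
  ∑ k ∈ Finset.range n,
    if s ≤ (k : ℝ) / n ∧ (k : ℝ) / n < t then f (eps n s) ((k : ℝ) / n) ω * h k ω else 0

/-- Discrete integral `J_s^t(y;h)` of a one-parameter path `y`. -/
def Jone (n : ℕ) (y : ℝ → Ω → ℝ) (h : ℕ → Ω → ℝ) (s t : ℝ) (ω : Ω) : ℝ :=
  ∑ k ∈ Finset.range n,
    if s ≤ (k : ℝ) / n ∧ (k : ℝ) / n < t then (y ((k : ℝ) / n) ω - y (eps n s) ω) * h k ω else 0

/-- A scalar `(L_p, ν, ℓ)`-rough path over the continuous process `X`. -/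
def IsRoughPath (P : Measure Ω) (p : ℝ≥0∞) (ν : ℝ) (ℓ : ℕ) (C : ℝ)
    (X : ℝ → Ω → ℝ) (x : ℕ → ℝ → ℝ → Ω → ℝ) : Prop :=
  (∀ i s t, Measurable (x i s t)) ∧
  (∀ ω, ContinuousOn (fun t => X t ω) (Set.Icc 0 1)) ∧
  (∀ s t ω, x 0 s t ω = 1) ∧
  (∀ s t ω, x 1 s t ω = X t ω - X s ω) ∧
  (∀ k, 1 ≤ k → k ≤ ℓ - 1 → ∀ s u t : ℝ, 0 ≤ s → s ≤ u → u ≤ t → t ≤ 1 → ∀ ω,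
    x k s t ω = ∑ j ∈ Finset.range (k + 1), x (k - j) s u ω * x j u t ω) ∧
  (∀ k, k ≤ ℓ - 1 → ∀ s t : ℝ, 0 ≤ s → s ≤ t → t ≤ 1 →
    eLpNorm (x k s t) p P ≤ ENNReal.ofReal ((C * (t - s) ^ ν) ^ k))

/-- `(y^{(0)},…,y^{(ℓ-1)})` is controlled by the rough path `x` in `L₂`,
with remainder constant `K₀`. -/
def Controlled (P : Measure Ω) (ν : ℝ) (ℓ : ℕ) (K₀ : ℝ)
    (x : ℕ → ℝ → ℝ → Ω → ℝ) (y : ℕ → ℝ → Ω → ℝ) : Prop :=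
  (∀ k, k ≤ ℓ - 1 → ∀ t, Measurable (y k t)) ∧
  (∀ k, k ≤ ℓ - 1 → ∀ ω, ContinuousOn (fun t => y k t ω) (Set.Icc 0 1)) ∧
  (∀ ω, y 0 0 ω = 0) ∧
  (∀ k, k ≤ ℓ - 1 → ∀ s t : ℝ, 0 ≤ s → s ≤ t → t ≤ 1 →
    eLpNorm (fun ω => y k t ω - y k s ω -
        ∑ j ∈ Finset.Icc 1 (ℓ - 1 - k), y (k + j) s ω * x j s t ω) 2 P
      ≤ ENNReal.ofReal (K₀ * (t - s) ^ (((ℓ - k : ℕ) : ℝ) * ν)))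

/-- Covariance of one-dimensional fractional Brownian motion. -/
def fbmCov (ν s t : ℝ) : ℝ := (s ^ (2 * ν) + t ^ (2 * ν) - |t - s| ^ (2 * ν)) / 2

/-- `x` is a fractional Brownian motion with Hurst parameter `ν` on `[0,1]`:
a measurable process with (a.s.) continuous sample paths all of whose finite
linear combinations are centered Gaussian with the fBm covariance. -/
def IsFBM (P : Measure Ω) (ν : ℝ) (x : ℝ → Ω → ℝ) : Prop :=
  (∀ t, Measurable (x t)) ∧
  (∀ᵐ ω ∂P, ContinuousOn (fun t => x t ω) (Set.Icc 0 1)) ∧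
  ∀ (m : ℕ) (t : Fin m → ℝ), (∀ j, t j ∈ Set.Icc (0 : ℝ) 1) →
    ∀ a : Fin m → ℝ,
      P.map (fun ω => ∑ j, a j * x (t j) ω) =
        gaussianReal 0 (∑ j, ∑ k, a j * a k * fbmCov ν (t j) (t k)).toNNReal

/-- Correlation function of the increments of fBm. -/
def rho (ν : ℝ) (k : ℤ) : ℝ :=
  (|(k : ℝ) + 1| ^ (2 * ν) + |(k : ℝ) - 1| ^ (2 * ν) - 2 * |(k : ℝ)| ^ (2 * ν)) / 2

/-- Hermite polynomial `H_q` (probabilists' normalization). -/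
def Hq (q : ℕ) (t : ℝ) : ℝ := Polynomial.aeval t (Polynomial.hermite q)

/-- The increments `h^{n,q}_{t_k t_{k+1}} = H_q(n^ν δx_{t_k t_{k+1}})`. -/
def hermIncr (x : ℝ → Ω → ℝ) (ν : ℝ) (n q : ℕ) (k : ℕ) (ω : Ω) : ℝ :=
  Hq q ((n : ℝ) ^ ν * (x (((k : ℝ) + 1) / n) ω - x ((k : ℝ) / n) ω))

/-- Canonical rough-path lift of a one-dimensional process: `x^i_{st} = (δx_{st})^i / i!`. -/
def xlift (x : ℝ → Ω → ℝ) (i : ℕ) (s t : ℝ) (ω : Ω) : ℝ :=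
  (x t ω - x s ω) ^ i / (Nat.factorial i : ℝ)

/-- Hermite coefficient `a_q = (1/q!) ∫ f H_q dγ` of `f` in `L²(γ)`. -/
def hermCoeff (f : ℝ → ℝ) (q : ℕ) : ℝ :=
  (Nat.factorial q : ℝ)⁻¹ * ∫ t, f t * Hq q t ∂(gaussianReal 0 1)

/-- `c_p = E|N|^p = 2^{p/2} Γ((p+1)/2)/√π`. -/
def cconst (r : ℝ) : ℝ := (2 : ℝ) ^ (r / 2) * Real.Gamma ((r + 1) / 2) / Real.sqrt Real.pi

set_option linter.unusedSectionVars false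

/-! ### Gaussian integration by parts -/

section

/-- Continuous functions of at most polynomial growth. -/
def PG {V E : Type*} [NormedAddCommGroup V] [NormedAddCommGroup E] (f : V → E) : Prop :=
  Continuous f ∧ ∃ (C : ℝ) (N : ℕ), 0 ≤ C ∧ ∀ v, ‖f v‖ ≤ C * (1 + ‖v‖) ^ N

namespace PG

variable {V W E : Type*} [NormedAddCommGroup V] [NormedAddCommGroup W] [NormedAddCommGroup E]

lemma of_bound {f : V → E} (hf : Continuous f) (C : ℝ) (h : ∀ v, ‖f v‖ ≤ C) : PG f :=
  ⟨hf, C, 0, (norm_nonneg _).trans (h 0), by simpa using h⟩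

lemma const (c : E) : PG (fun _ : V => c) := of_bound continuous_const ‖c‖ (by simp)

lemma pow_le {v : V} {N M : ℕ} (h : N ≤ M) : (1 + ‖v‖) ^ N ≤ (1 + ‖v‖) ^ M :=
  pow_le_pow_right₀ (by linarith [norm_nonneg v]) h

lemma add {f g : V → E} (hf : PG f) (hg : PG g) : PG (fun v => f v + g v) := by
  obtain ⟨hfc, C, N, hC, hf⟩ := hf
  obtain ⟨hgc, D, M, hD, hg⟩ := hg
  refine ⟨hfc.add hgc, C + D, N + M, by positivity, fun v => (norm_add_le _ _).trans ?_⟩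
  have h1 := (hf v).trans (mul_le_mul_of_nonneg_left (pow_le (v := v) (Nat.le_add_right N M)) hC)
  have h2 := (hg v).trans (mul_le_mul_of_nonneg_left (pow_le (v := v) (Nat.le_add_left M N)) hD)
  linarith

lemma smul [NormedSpace ℝ E] {f : V → ℝ} {g : V → E} (hf : PG f) (hg : PG g) :
    PG (fun v => f v • g v) := by
  obtain ⟨hfc, C, N, hC, hf⟩ := hf
  obtain ⟨hgc, D, M, hD, hg⟩ := hg
  refine ⟨hfc.smul hgc, C * D, N + M, by positivity, fun v => ?_⟩
  rw [norm_smul, pow_add]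
  calc _ ≤ (C * (1 + ‖v‖) ^ N) * (D * (1 + ‖v‖) ^ M) := by
        gcongr
        · exact hf v
        · exact hg v
    _ = _ := by ring

lemma mul {f g : V → ℝ} (hf : PG f) (hg : PG g) : PG (fun v => f v * g v) := hf.smul hg

lemma mulC {f g : V → ℂ} (hf : PG f) (hg : PG g) : PG (fun v => f v * g v) := by
  obtain ⟨hfc, C, N, hC, hf⟩ := hf
  obtain ⟨hgc, D, M, hD, hg⟩ := hg
  refine ⟨hfc.mul hgc, C * D, N + M, by positivity, fun v => ?_⟩
  rw [norm_mul, pow_add]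
  calc _ ≤ (C * (1 + ‖v‖) ^ N) * (D * (1 + ‖v‖) ^ M) := by
        gcongr
        · exact hf v
        · exact hg v
    _ = _ := by ring

lemma ofReal {f : V → ℝ} (hf : PG f) : PG (fun v => (f v : ℂ)) := by
  obtain ⟨hfc, C, N, hC, hf⟩ := hf
  exact ⟨by fun_prop, C, N, hC, fun v => by simpa using hf v⟩

lemma sum {ι : Type*} (s : Finset ι) {f : ι → V → E} (hf : ∀ i ∈ s, PG (f i)) :
    PG (fun v => ∑ i ∈ s, f i v) := by
  classical
  induction s using Finset.induction_on with
  | empty => simpa using const (V := V) (0 : E)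
  | insert a s ha ih =>
    simp only [Finset.sum_insert ha]
    exact (hf a (by simp)).add (ih fun i hi => hf i (by simp [hi]))

lemma comp {f : W → E} {g : V → W} (hf : PG f) (hg : PG g) : PG (fun v => f (g v)) := by
  obtain ⟨hfc, C, N, hC, hf⟩ := hf
  obtain ⟨hgc, D, M, hD, hg⟩ := hg
  refine ⟨hfc.comp hgc, C * (1 + D) ^ N, M * N, by positivity, fun v => (hf _).trans ?_⟩
  rw [mul_assoc, pow_mul, ← mul_pow]
  have : 1 ≤ (1 + ‖v‖) ^ M := one_le_pow₀ (by linarith [norm_nonneg v])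
  gcongr
  nlinarith [hg v]

lemma id : PG (fun v : V => v) :=
  ⟨continuous_id, 1, 1, zero_le_one, fun v => by simp⟩

lemma clm [NormedSpace ℝ V] [NormedSpace ℝ E] (L : V →L[ℝ] E) : PG (fun v => L v) :=
  ⟨L.continuous, ‖L‖, 1, norm_nonneg _, fun v => by
    have := L.le_opNorm v
    have := norm_nonneg L
    nlinarith [norm_nonneg v]⟩

lemma eval {ι : Type*} [Fintype ι] (i : ι) : PG (fun v : ι → ℝ => v i) :=
  clm (ContinuousLinearMap.proj (R := ℝ) (φ := fun _ : ι => ℝ) i)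

lemma pow {f : V → ℝ} (hf : PG f) (n : ℕ) : PG (fun v => f v ^ n) := by
  induction n with
  | zero => simpa using const (V := V) (1 : ℝ)
  | succ n ih => simpa only [pow_succ] using ih.mul hf

lemma poly (p : Polynomial ℝ) : PG (fun t : ℝ => p.eval t) := by
  induction p using Polynomial.induction_on' with
  | add p q hp hq => simpa using hp.add hq
  | monomial n a => simpa using (const (V := ℝ) a).mul (id.pow n)

lemma integrable [NormedSpace ℝ V] [CompleteSpace V] [MeasurableSpace V] [BorelSpace V]
    [SecondCountableTopology V] {f : V → E}
    (hf : PG f) {P : Measure Ω} {X : Ω → V} (hX : HasGaussianLaw X P) :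
    Integrable (fun ω => f (X ω)) P := by
  obtain ⟨hfc, C, N, hC, hf⟩ := hf
  have := hX.isProbabilityMeasure
  have hm : AEStronglyMeasurable (fun ω => f (X ω)) P :=
    hfc.comp_aestronglyMeasurable hX.aemeasurable.aestronglyMeasurable
  have h1 : MemLp (fun ω => 1 + ‖X ω‖) ((N + 1 : ℕ) : ℝ≥0∞) P :=
    (memLp_const (1 : ℝ)).add (hX.memLp (ENNReal.natCast_ne_top _)).norm
  have h2 := (h1.integrable_norm_pow (Nat.succ_ne_zero N)).const_mul C
  refine h2.mono' hm (Eventually.of_forall fun ω => (hf _).trans ?_)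
  rw [Real.norm_of_nonneg (by positivity)]
  exact mul_le_mul_of_nonneg_left (pow_le (Nat.le_succ N)) hC

end PG

/-- The Hermite polynomials with real coefficients. -/
def HP (q : ℕ) : Polynomial ℝ := (Polynomial.hermite q).map (Int.castRingHom ℝ)

lemma Hq_eq (q : ℕ) (t : ℝ) : Hq q t = (HP q).eval t := by
  rw [Hq, HP, Polynomial.eval_map, Polynomial.aeval_def]; rfl

lemma HP_zero : HP 0 = 1 := by simp [HP]

lemma HP_succ (n : ℕ) : HP (n + 1) = Polynomial.X * HP n - Polynomial.derivative (HP n) := by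
  simp [HP, Polynomial.hermite_succ, Polynomial.derivative_map]

lemma HP_one : HP 1 = Polynomial.X := by simp [HP_succ, HP_zero]

/-- The Hermite polynomials form an Appell sequence. -/
lemma HP_derivative (n : ℕ) : Polynomial.derivative (HP n) = (n : Polynomial ℝ) * HP (n - 1) := by
  induction n with
  | zero => simp [HP_zero]
  | succ n ih =>
    rw [HP_succ, map_sub, Polynomial.derivative_mul, Polynomial.derivative_X, ih]
    cases n with
    | zero => simp [HP_zero]
    | succ n =>
      have h := HP_succ n
      simp only [Nat.add_sub_cancel, Polynomial.derivative_mul, Polynomial.derivative_natCast]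
      rw [h]
      push_cast
      ring

lemma PG_Hq (q : ℕ) : PG (Hq q) := by
  have : Hq q = fun t => (HP q).eval t := funext (Hq_eq q)
  rw [this]; exact PG.poly _

lemma hasDerivAt_Hq (n : ℕ) (t : ℝ) : HasDerivAt (Hq n) (n * Hq (n - 1) t) t := by
  have : Hq n = fun t => (HP n).eval t := funext (Hq_eq n)
  rw [this, Hq_eq]
  simpa [HP_derivative] using (HP n).hasDerivAt t

lemma Hq_zero (t : ℝ) : Hq 0 t = 1 := by simp [Hq_eq, HP_zero]

lemma Hq_succ_eq (p : ℕ) (t : ℝ) : Hq (p + 1) t = t * Hq p t - p * Hq (p - 1) t := by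
  simp [Hq_eq, HP_succ, HP_derivative]

lemma hasDerivAt_hermite_pdf (p : ℕ) (t : ℝ) :
    HasDerivAt (fun t => Hq p t * gaussianPDFReal 0 1 t) (-(Hq (p + 1) t * gaussianPDFReal 0 1 t)) t := by
  have h1 : HasDerivAt (fun t => gaussianPDFReal 0 1 t) (-t * gaussianPDFReal 0 1 t) t := by
    simp only [gaussianPDFReal_def]
    have h : HasDerivAt (fun x : ℝ => -(x - 0) ^ 2 / (2 * ((1 : ℝ≥0) : ℝ))) (-t) t := by
      have := (((hasDerivAt_id t).sub_const 0).pow 2).neg.div_const (2 * ((1 : ℝ≥0) : ℝ))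
      refine this.congr_deriv ?_
      simp
      ring
    refine (h.exp.const_mul ((Real.sqrt (2 * Real.pi * ((1 : ℝ≥0) : ℝ)))⁻¹)).congr_deriv ?_
    ring
  refine ((hasDerivAt_Hq p t).mul h1).congr_deriv ?_
  rw [Hq_succ_eq]; ring

variable {E : Type*} [NormedAddCommGroup E] [NormedSpace ℝ E]

lemma hermite_ibp_real (p : ℕ) {ψ ψ' : ℝ → E} (hψ : PG ψ) (hψ' : PG ψ')
    (hd : ∀ t, HasDerivAt ψ (ψ' t) t) :
    ∫ t, Hq (p + 1) t • ψ t ∂(gaussianReal 0 1) = ∫ t, Hq p t • ψ' t ∂(gaussianReal 0 1) := by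
  have hid : HasGaussianLaw (fun t : ℝ => t) (gaussianReal 0 1) :=
    IsGaussian.hasGaussianLaw_id
  have hint : ∀ f : ℝ → E, PG f → Integrable (fun t => gaussianPDFReal 0 1 t • f t) := by
    intro f hf
    have := hf.integrable hid
    rw [gaussianReal_of_var_ne_zero _ one_ne_zero,
      integrable_withDensity_iff_integrable_smul' (measurable_gaussianPDF _ _)
        (Eventually.of_forall fun _ => gaussianPDF_lt_top)] at this
    simpa using this
  rw [integral_gaussianReal_eq_integral_smul one_ne_zero,
    integral_gaussianReal_eq_integral_smul one_ne_zero]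
  have h := integral_bilinear_hasDerivAt_right_eq_neg_left_of_integrable
    (L := ContinuousLinearMap.lsmul ℝ ℝ (E := E))
    (u := fun t => Hq p t * gaussianPDFReal 0 1 t)
    (u' := fun t => -(Hq (p + 1) t * gaussianPDFReal 0 1 t)) (v := ψ) (v' := ψ')
    (fun t _ => hasDerivAt_hermite_pdf p t) (fun t _ => hd t) ?_ ?_ ?_
  · simp only [ContinuousLinearMap.lsmul_apply, neg_smul, integral_neg, neg_neg, smul_smul] at h ⊢
    simp only [mul_comm (gaussianPDFReal 0 1 _)]
    exact h.symm
  · refine (hint _ ((PG_Hq p).smul hψ')).congr (Eventually.of_forall fun t => ?_)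
    simp [smul_smul, mul_comm]
  · refine (hint _ ((PG_Hq (p + 1)).smul hψ)).neg.congr (Eventually.of_forall fun t => ?_)
    simp [smul_smul, mul_comm]
  · refine (hint _ ((PG_Hq p).smul hψ)).congr (Eventually.of_forall fun t => ?_)
    simp [smul_smul, mul_comm]

variable {P : Measure Ω} {ι : Type*} [Fintype ι]

/-- Gaussian integration by parts: on `H_{p+1}(V_{i₀})` with `V_{i₀}` standard Gaussian, one degree
of the Hermite polynomial is traded for a derivative of the other factor in the direction
of the covariances of `V_{i₀}` with the family. The family `V - c V_{i₀}` is independent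
of `V_{i₀}`, which reduces the claim to dimension one. -/
lemma gaussian_ibp (p : ℕ) {V : ι → Ω → ℝ} (hV : HasGaussianLaw (fun ω i => V i ω) P) (i₀ : ι)
    (h0 : ∫ ω, V i₀ ω ∂P = 0) (c : ι → ℝ) (hc : ∀ i, cov[V i₀, V i; P] = c i) (h1 : c i₀ = 1)
    {Φ Φ' : (ι → ℝ) → E} (hΦ : PG Φ) (hΦ' : PG Φ')
    (hd : ∀ v, HasDerivAt (fun r : ℝ => Φ (v + r • c)) (Φ' v) 0) :
    ∫ ω, Hq (p + 1) (V i₀ ω) • Φ (fun i => V i ω) ∂P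
      = ∫ ω, Hq p (V i₀ ω) • Φ' (fun i => V i ω) ∂P := by
  have hP := hV.isProbabilityMeasure
  have hL2 : ∀ i, MemLp (V i) 2 P := fun i => (hV.eval i).memLp_two
  have hmV : ∀ i, AEMeasurable (V i) P := fun i => (hV.eval i).aemeasurable
  let Y : ι → Ω → ℝ := fun i ω => V i ω - c i * V i₀ ω
  let L : (ι → ℝ) →L[ℝ] (Unit → ℝ) × (ι → ℝ) :=
    (ContinuousLinearMap.pi fun _ => ContinuousLinearMap.proj i₀).prod
      (ContinuousLinearMap.id ℝ _ - ContinuousLinearMap.pi fun i =>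
        c i • ContinuousLinearMap.proj (R := ℝ) (φ := fun _ : ι => ℝ) i₀)
  have hGL : HasGaussianLaw (fun ω => (fun _ : Unit => V i₀ ω, fun i => Y i ω)) P :=
    hV.map_fun L
  have hind0 := hGL.indepFun_of_covariance_eval (X := fun _ : Unit => V i₀) (Y := Y) (by
    intro _ i
    have : Y i = V i - c i • V i₀ := by ext ω; simp [Y]
    rw [this, covariance_sub_right (hL2 _) (hL2 _) ((hL2 _).const_smul _),
      covariance_smul_right, hc, hc, h1]
    ring)
  have hind : IndepFun (V i₀) (fun ω i => Y i ω) P :=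
    hind0.comp (φ := fun f : Unit → ℝ => f ()) (ψ := fun f => f) (by fun_prop) measurable_id
  have hmY : AEMeasurable (fun ω i => Y i ω) P := hGL.snd.aemeasurable
  have hlaw : P.map (V i₀) = gaussianReal 0 1 := by
    rw [(hV.eval i₀).map_eq_gaussianReal, h0, ← covariance_self (hmV _), hc, h1]
    simp
  have hjoint := (indepFun_iff_map_prod_eq_prod_map_map (hmV i₀) hmY).1 hind
  rw [hlaw] at hjoint
  have hprobY : IsProbabilityMeasure (P.map (fun ω i => Y i ω)) :=
    Measure.isProbabilityMeasure_map hmY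
  have hid : HasGaussianLaw (fun z : ℝ × (ι → ℝ) => z)
      ((gaussianReal 0 1).prod (P.map (fun ω i => Y i ω))) := by
    have h2 : HasGaussianLaw (fun ω => (V i₀ ω, fun i => Y i ω)) P :=
      hGL.map_fun (((ContinuousLinearMap.proj (R := ℝ) (φ := fun _ : Unit => ℝ) ()).comp
        (ContinuousLinearMap.fst ℝ _ _)).prod (ContinuousLinearMap.snd ℝ _ _))
    rw [← hjoint]
    have := h2.isGaussian_map
    exact IsGaussian.hasGaussianLaw_id
  have key : ∀ (r : ℕ) (F : (ι → ℝ) → E), PG F →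
      ∫ ω, Hq r (V i₀ ω) • F (fun i => V i ω) ∂P
        = ∫ y, ∫ t, Hq r t • F (y + t • c) ∂(gaussianReal 0 1) ∂(P.map (fun ω i => Y i ω)) := by
    intro r F hF
    have hPG : PG (fun z : ℝ × (ι → ℝ) => Hq r z.1 • F (z.2 + z.1 • c)) := by
      refine PG.smul ((PG_Hq r).comp (PG.clm (ContinuousLinearMap.fst ℝ ℝ (ι → ℝ)))) (hF.comp ?_)
      exact (PG.clm (ContinuousLinearMap.snd ℝ ℝ (ι → ℝ))).add
        ((PG.clm (ContinuousLinearMap.fst ℝ ℝ (ι → ℝ))).smul (PG.const c))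
    rw [← integral_prod_symm _ (hPG.integrable hid), ← hjoint, integral_map]
    · refine integral_congr_ae (Eventually.of_forall fun ω => ?_)
      have : (fun i => V i ω) = (fun i => Y i ω) + V i₀ ω • c := by
        ext i; simp [Y, mul_comm]
      simp only [this]
    · exact (hmV i₀).prodMk hmY
    · exact hPG.1.aestronglyMeasurable
  rw [key _ _ hΦ, key _ _ hΦ']
  congr 1
  ext y
  have hl : PG (fun t : ℝ => y + t • c) := (PG.const y).add (PG.id.smul (PG.const c))
  refine hermite_ibp_real p (hΦ.comp hl) (hΦ'.comp hl) fun t => ?_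
  have h := (hd (y + t • c))
  have h3 : HasDerivAt (fun r : ℝ => Φ (y + t • c + r • c)) (Φ' (y + t • c)) (t - t) := by
    simpa using h
  have h4 := h3.comp_sub_const t t
  refine h4.congr_of_eventuallyEq (Eventually.of_forall fun r => ?_)
  simp only [add_assoc, ← add_smul]
  congr 3
  ring

end

/-! ### Gaussian families and Hermite moments -/

section

/-- `S` is a set of centered jointly Gaussian random variables. -/
def CG (P : Measure Ω) (S : Set (Ω → ℝ)) : Prop :=
  ∀ (ι : Type) [Fintype ι] (V : ι → Ω → ℝ), (∀ i, V i ∈ S) →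
    HasGaussianLaw (fun ω i => V i ω) P ∧ ∀ i, ∫ ω, V i ω ∂P = 0

variable {P : Measure Ω} {S : Set (Ω → ℝ)}

lemma CG.integrable (hS : CG P S) {ι : Type} [Fintype ι] {V : ι → Ω → ℝ} (hV : ∀ i, V i ∈ S)
    {E : Type*} [NormedAddCommGroup E] {f : (ι → ℝ) → E} (hf : PG f) :
    Integrable (fun ω => f (fun i => V i ω)) P :=
  hf.integrable (hS ι V hV).1

open Polynomial in
/-- Gaussian integration by parts against a product of three polynomial factors. -/
lemma CG.ibp3 (hS : CG P S) {G U₁ U₂ U₃ : Ω → ℝ} (hG : G ∈ S) (h₁ : U₁ ∈ S) (h₂ : U₂ ∈ S)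
    (h₃ : U₃ ∈ S) (hv : cov[G, G; P] = 1) (p : ℕ) (f₁ f₂ f₃ : ℝ[X]) :
    ∫ ω, Hq (p + 1) (G ω) * (f₁.eval (U₁ ω) * f₂.eval (U₂ ω) * f₃.eval (U₃ ω)) ∂P =
      cov[G, U₁; P] * ∫ ω, Hq p (G ω) *
        ((derivative f₁).eval (U₁ ω) * f₂.eval (U₂ ω) * f₃.eval (U₃ ω)) ∂P +
      cov[G, U₂; P] * ∫ ω, Hq p (G ω) *
        (f₁.eval (U₁ ω) * (derivative f₂).eval (U₂ ω) * f₃.eval (U₃ ω)) ∂P +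
      cov[G, U₃; P] * ∫ ω, Hq p (G ω) *
        (f₁.eval (U₁ ω) * f₂.eval (U₂ ω) * (derivative f₃).eval (U₃ ω)) ∂P := by
  let V : Fin 4 → Ω → ℝ := ![G, U₁, U₂, U₃]
  have hV : ∀ i, V i ∈ S := by
    intro i; fin_cases i <;> assumption
  have hPG : ∀ (g : ℝ → ℝ) (f₁ f₂ f₃ : ℝ[X]), PG g → PG (fun v : Fin 4 → ℝ => g (v 0) *
      (f₁.eval (v 1) * f₂.eval (v 2) * f₃.eval (v 3))) := fun g f₁ f₂ f₃ hg =>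
    (hg.comp (PG.eval 0)).mul ((((PG.poly f₁).comp (PG.eval 1)).mul
      ((PG.poly f₂).comp (PG.eval 2))).mul ((PG.poly f₃).comp (PG.eval 3)))
  have hPG1 : ∀ (f₁ f₂ f₃ : ℝ[X]), PG (fun v : Fin 4 → ℝ =>
      (f₁.eval (v 1) * f₂.eval (v 2) * f₃.eval (v 3))) := fun f₁ f₂ f₃ => by
    simpa using hPG _ f₁ f₂ f₃ (PG.const 1)
  have hI : ∀ (f₁ f₂ f₃ : ℝ[X]), Integrable (fun ω => Hq p (G ω) *
      (f₁.eval (U₁ ω) * f₂.eval (U₂ ω) * f₃.eval (U₃ ω))) P := fun f₁ f₂ f₃ =>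
    hS.integrable hV (hPG (Hq p) f₁ f₂ f₃ (PG_Hq p))
  have hev : ∀ (f : ℝ[X]) (c x : ℝ),
      HasDerivAt (fun r : ℝ => f.eval (x + r * c)) (c * (derivative f).eval x) 0 := by
    intro f c x
    have h1 : HasDerivAt (fun r : ℝ => x + r * c) c 0 := by
      simpa using ((hasDerivAt_id (0 : ℝ)).mul_const c).const_add x
    have h2 : HasDerivAt (fun t => f.eval t) ((derivative f).eval x) (x + 0 * c) := by
      simpa using f.hasDerivAt x
    rw [mul_comm]
    exact h2.comp (0 : ℝ) h1
  have h := gaussian_ibp (E := ℝ) p (hS _ V hV).1 0 ((hS _ V hV).2 0) (fun i => cov[G, V i; P])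
    (fun i => rfl) hv
    (Φ := fun v => f₁.eval (v 1) * f₂.eval (v 2) * f₃.eval (v 3))
    (Φ' := fun v => cov[G, U₁; P] *
        ((derivative f₁).eval (v 1) * f₂.eval (v 2) * f₃.eval (v 3)) +
      cov[G, U₂; P] * (f₁.eval (v 1) * (derivative f₂).eval (v 2) * f₃.eval (v 3)) +
      cov[G, U₃; P] * (f₁.eval (v 1) * f₂.eval (v 2) * (derivative f₃).eval (v 3)))
    (hPG1 _ _ _) ((((PG.const _).mul (hPG1 _ _ _)).add ((PG.const _).mul (hPG1 _ _ _))).add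
      ((PG.const _).mul (hPG1 _ _ _)))
    (fun v => by
      have := ((hev f₁ (cov[G, U₁; P]) (v 1)).mul (hev f₂ (cov[G, U₂; P]) (v 2))).mul
        (hev f₃ (cov[G, U₃; P]) (v 3))
      refine this.congr_deriv ?_
      simp
      ring)
  simp only [smul_eq_mul] at h
  refine h.trans ?_
  rw [← integral_const_mul, ← integral_const_mul, ← integral_const_mul, ← integral_add,
    ← integral_add]
  · refine integral_congr_ae (Eventually.of_forall fun ω => ?_)
    simp only [V, Matrix.cons_val]
    ring
  · exact ((hI _ _ _).const_mul _).add ((hI _ _ _).const_mul _)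
  · exact (hI _ _ _).const_mul _
  · exact (hI _ _ _).const_mul _
  · exact (hI _ _ _).const_mul _

/-- The mixed moment `E[u^a w^b H_p(G) H_r(G')]`. -/
def mom (P : Measure Ω) (u w G G' : Ω → ℝ) (a b p r : ℕ) : ℝ :=
  ∫ ω, u ω ^ a * w ω ^ b * (Hq p (G ω) * Hq r (G' ω)) ∂P

/-- Gaussian integration by parts for mixed moments: one degree of the first Hermite factor is
removed, contracting it in turn with each of the other three factors. -/
lemma CG.mom_succ (hS : CG P S) {u w G G' : Ω → ℝ} (hu : u ∈ S) (hw : w ∈ S) (hG : G ∈ S)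
    (hG' : G' ∈ S) (hv : cov[G, G; P] = 1) (a b p r : ℕ) :
    mom P u w G G' a b (p + 1) r = cov[G, u; P] * (a * mom P u w G G' (a - 1) b p r) +
      cov[G, w; P] * (b * mom P u w G G' a (b - 1) p r) +
      cov[G, G'; P] * (r * mom P u w G G' a b p (r - 1)) := by
  have h := hS.ibp3 hG hu hw hG' hv p (Polynomial.X ^ a) (Polynomial.X ^ b) (HP r)
  simp only [Polynomial.derivative_X_pow, HP_derivative, Polynomial.eval_mul, Polynomial.eval_pow,
    Polynomial.eval_X, ← Hq_eq, Polynomial.eval_natCast, Polynomial.eval_C] at h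
  simp only [mom, ← integral_const_mul]
  simp only [← integral_const_mul] at h
  convert h using 1
  · congr 1; ext ω; ring
  · congr 1; congr 1
    all_goals congr 1; ext ω; ring

lemma CG.mom_zero_succ (hS : CG P S) {u w G G' : Ω → ℝ} (hu : u ∈ S) (hw : w ∈ S) (hG' : G' ∈ S)
    (hv : cov[G', G'; P] = 1) (a b r : ℕ) :
    mom P u w G G' a b 0 (r + 1) = cov[G', u; P] * (a * mom P u w G G' (a - 1) b 0 r) +
      cov[G', w; P] * (b * mom P u w G G' a (b - 1) 0 r) := by
  have h := hS.ibp3 hG' hu hw hG' hv r (Polynomial.X ^ a) (Polynomial.X ^ b) 1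
  simp only [Polynomial.derivative_X_pow, Polynomial.derivative_one, Polynomial.eval_mul,
    Polynomial.eval_pow, Polynomial.eval_X, Polynomial.eval_zero,
    Polynomial.eval_one, mul_zero, integral_zero, add_zero, mul_one, Polynomial.eval_C] at h
  simp only [mom, ← integral_const_mul, Hq_zero, one_mul]
  simp only [← integral_const_mul] at h
  convert h using 1
  · congr 1; ext ω; ring
  · congr 1
    all_goals congr 1; ext ω; ring

/-- The four-point Hermite moment. -/
def mom4 (P : Measure Ω) (G₁ G₂ G₃ G₄ : Ω → ℝ) (a b c d : ℕ) : ℝ :=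
  ∫ ω, Hq a (G₁ ω) * (Hq b (G₂ ω) * Hq c (G₃ ω) * Hq d (G₄ ω)) ∂P

lemma CG.mom4_succ (hS : CG P S) {G₁ G₂ G₃ G₄ : Ω → ℝ} (h₁ : G₁ ∈ S) (h₂ : G₂ ∈ S) (h₃ : G₃ ∈ S)
    (h₄ : G₄ ∈ S) (hv : cov[G₁, G₁; P] = 1) (a b c d : ℕ) :
    mom4 P G₁ G₂ G₃ G₄ (a + 1) b c d = cov[G₁, G₂; P] * (b * mom4 P G₁ G₂ G₃ G₄ a (b - 1) c d) +
      cov[G₁, G₃; P] * (c * mom4 P G₁ G₂ G₃ G₄ a b (c - 1) d) +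
      cov[G₁, G₄; P] * (d * mom4 P G₁ G₂ G₃ G₄ a b c (d - 1)) := by
  have h := hS.ibp3 h₁ h₂ h₃ h₄ hv a (HP b) (HP c) (HP d)
  simp only [HP_derivative, Polynomial.eval_mul, ← Hq_eq, Polynomial.eval_natCast] at h
  simp only [mom4, ← integral_const_mul]
  simp only [← integral_const_mul] at h
  convert h using 1
  congr 1; congr 1
  all_goals congr 1; ext ω; ring

lemma CG.mom4_zero (G₁ G₂ G₃ G₄ : Ω → ℝ) (b c d : ℕ) :
    mom4 P G₁ G₂ G₃ G₄ 0 b c d = mom4 P G₂ G₃ G₄ G₄ b c d 0 := by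
  simp only [mom4, Hq_zero]
  congr 1; ext ω; ring

end

/-! ### Recursions for mixed moments -/

section

/-- The solution of the recursion for the mixed moments with the correlation of the two Hermite
arguments set to zero, with initial values `B`. -/
def mom0 (α β β' α' : ℝ) (B : ℕ → ℕ → ℝ) : ℕ → ℕ → ℕ → ℕ → ℝ
  | 0, 0, a, b => B a b
  | 0, r + 1, a, b => β' * (a * mom0 α β β' α' B 0 r (a - 1) b) +
      α' * (b * mom0 α β β' α' B 0 r a (b - 1))
  | p + 1, r, a, b => α * (a * mom0 α β β' α' B p r (a - 1) b) +
      β * (b * mom0 α β β' α' B p r a (b - 1))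

/-- The recursion satisfied by mixed moments, Hermite degrees first. -/
structure MomRec (α β β' α' ρ : ℝ) (M : ℕ → ℕ → ℕ → ℕ → ℝ) : Prop where
  zero : ∀ r a b, M 0 (r + 1) a b = β' * (a * M 0 r (a - 1) b) + α' * (b * M 0 r a (b - 1))
  succ : ∀ p r a b, M (p + 1) r a b = α * (a * M p r (a - 1) b) + β * (b * M p r a (b - 1)) +
    ρ * (r * M p (r - 1) a b)

lemma abs_aux {A : ℕ} {a : ℕ} (ha : a ≤ A) {α γ x y : ℝ} (hα : |α| ≤ γ) (hx : |x| ≤ y) :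
    |α * (a * x)| ≤ γ * (A * y) := by
  rw [abs_mul, abs_mul, Nat.abs_cast]
  have : (a : ℝ) ≤ A := by exact_mod_cast ha
  have := (abs_nonneg α).trans hα
  gcongr

/-- Each Hermite degree has to be contracted with one of the powers, at the cost of one
covariance, which is at most `γ`; hence the order `γ ^ (p + r)`. -/
lemma mom0_bound (A : ℕ) (B₀ : ℝ) (p r : ℕ) : ∃ C : ℝ, 0 ≤ C ∧
    ∀ (α β β' α' γ : ℝ) (B : ℕ → ℕ → ℝ), |α| ≤ γ → |β| ≤ γ → |β'| ≤ γ → |α'| ≤ γ →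
      (∀ a b, a ≤ A → b ≤ A → |B a b| ≤ B₀) →
      ∀ a b, a ≤ A → b ≤ A → |mom0 α β β' α' B p r a b| ≤ C * γ ^ (p + r) := by
  induction p with
  | zero =>
    induction r with
    | zero =>
      refine ⟨|B₀|, abs_nonneg _, fun α β β' α' γ B _ _ _ _ hB a b ha hb => ?_⟩
      simpa [mom0] using (hB a b ha hb).trans (le_abs_self _)
    | succ r ih =>
      obtain ⟨C, hC, ih⟩ := ih
      refine ⟨2 * A * C, by positivity, fun α β β' α' γ B h1 h2 h3 h4 hB a b ha hb => ?_⟩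
      have e1 := abs_aux ha h3 (ih α β β' α' γ B h1 h2 h3 h4 hB (a - 1) b (by omega) hb)
      have e2 := abs_aux hb h4 (ih α β β' α' γ B h1 h2 h3 h4 hB a (b - 1) ha (by omega))
      rw [mom0]
      refine (abs_add_le _ _).trans ((add_le_add e1 e2).trans (le_of_eq ?_))
      ring
  | succ p ih =>
    obtain ⟨C, hC, ih⟩ := ih
    refine ⟨2 * A * C, by positivity, fun α β β' α' γ B h1 h2 h3 h4 hB a b ha hb => ?_⟩
    have e1 := abs_aux ha h1 (ih α β β' α' γ B h1 h2 h3 h4 hB (a - 1) b (by omega) hb)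
    have e2 := abs_aux hb h2 (ih α β β' α' γ B h1 h2 h3 h4 hB a (b - 1) ha (by omega))
    rw [mom0]
    refine (abs_add_le _ _).trans ((add_le_add e1 e2).trans (le_of_eq ?_))
    ring

/-- There is no complete contraction when the powers have a smaller total degree than the Hermite
factors, as the latter may not be contracted with each other. -/
lemma mom0_eq_zero (α β β' α' : ℝ) (B : ℕ → ℕ → ℝ) (p r : ℕ) :
    ∀ a b, a + b < p + r → mom0 α β β' α' B p r a b = 0 := by
  induction p with
  | zero =>
    induction r with
    | zero => intro a b h; omega
    | succ r ih =>
      intro a b h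
      rw [mom0]
      rcases a with _ | a <;> rcases b with _ | b
      · simp
      · simp [ih 0 b (by omega)]
      · simp [ih a 0 (by omega)]
      · simp [ih a (b + 1) (by omega), ih (a + 1) b (by omega)]
  | succ p ih =>
    intro a b h
    rw [mom0]
    rcases a with _ | a <;> rcases b with _ | b
    · simp
    · simp [ih 0 b (by omega)]
    · simp [ih a 0 (by omega)]
    · simp [ih a (b + 1) (by omega), ih (a + 1) b (by omega)]

lemma mom0_top_zero (α β β' α' : ℝ) (B : ℕ → ℕ → ℝ) (b : ℕ) :
    mom0 α β β' α' B 0 b 0 b = b.factorial * α' ^ b * B 0 0 := by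
  induction b with
  | zero => simp [mom0]
  | succ b ih =>
    rw [mom0]
    simp [ih, Nat.factorial_succ, pow_succ]
    ring

/-- In top degree the only contribution not involving `β` pairs each Hermite argument with its
own power. -/
lemma mom0_top (B₀ : ℝ) (p r : ℕ) : ∃ C : ℝ, 0 ≤ C ∧
    ∀ (α β β' α' γ : ℝ) (B : ℕ → ℕ → ℝ), |α| ≤ γ → |β| ≤ γ → |β'| ≤ γ → |α'| ≤ γ →
      (∀ a b, a ≤ p + r + 1 → b ≤ p + r + 1 → |B a b| ≤ B₀) →
      |mom0 α β β' α' B (p + 1) r (p + 1) r -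
        (p + 1).factorial * r.factorial * α ^ (p + 1) * α' ^ r * B 0 0| ≤
        C * |β| * γ ^ (p + r) := by
  induction p with
  | zero =>
    obtain ⟨C, hC, h⟩ := mom0_bound (r + 1) B₀ 0 r
    refine ⟨r * C, by positivity, fun α β β' α' γ B h1 h2 h3 h4 hB => ?_⟩
    have e := h α β β' α' γ B h1 h2 h3 h4 (fun a b ha hb => hB a b (by omega) (by omega))
      1 (r - 1) (by omega) (by omega)
    rw [mom0, Nat.add_sub_cancel, mom0_top_zero]
    simp only [zero_add, Nat.cast_one, Nat.factorial_one, pow_one] at e ⊢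
    have : α * (1 * (r.factorial * α' ^ r * B 0 0)) + β * (r * mom0 α β β' α' B 0 r 1 (r - 1)) -
      1 * r.factorial * α * α' ^ r * B 0 0 = β * (r * mom0 α β β' α' B 0 r 1 (r - 1)) := by ring
    rw [this]
    refine (abs_aux le_rfl le_rfl e).trans (le_of_eq (by ring))
  | succ p ih =>
    obtain ⟨C, hC, h⟩ := mom0_bound (p + 1 + r + 1) B₀ (p + 1) r
    obtain ⟨D, hD, ih⟩ := ih
    refine ⟨(p + 2) * D + r * C, by positivity, fun α β β' α' γ B h1 h2 h3 h4 hB => ?_⟩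
    have e := h α β β' α' γ B h1 h2 h3 h4 (fun a b ha hb => hB a b (by omega) (by omega))
      (p + 1 + 1) (r - 1) (by omega) (by omega)
    have e2 := ih α β β' α' γ B h1 h2 h3 h4 (fun a b ha hb => hB a b (by omega) (by omega))
    rw [mom0, Nat.add_sub_cancel]
    set X := mom0 α β β' α' B (p + 1) r (p + 1) r
    set Y := mom0 α β β' α' B (p + 1) r (p + 1 + 1) (r - 1)
    have : α * (((p + 1 + 1 : ℕ) : ℝ) * X) + β * (r * Y) -
      (p + 1 + 1).factorial * r.factorial * α ^ (p + 1 + 1) * α' ^ r * B 0 0 =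
      α * (((p + 1 + 1 : ℕ) : ℝ) * (X - (p + 1).factorial * r.factorial * α ^ (p + 1) * α' ^ r * B 0 0))
       + β * (r * Y) := by
      rw [Nat.factorial_succ (p + 1)]
      push_cast
      ring
    rw [this]
    refine (abs_add_le _ _).trans ((add_le_add (abs_aux le_rfl h1 e2)
      (abs_aux le_rfl le_rfl e)).trans (le_of_eq ?_))
    push_cast
    ring

/-- Mixed moments are, up to `γ|ρ|`, the sum of the moments with `ρ = 0` and of the total
contraction of the two Hermite factors. -/
lemma mom_main (A : ℕ) (B₀ : ℝ) (hB₀ : 0 ≤ B₀) (p r : ℕ) : ∃ C : ℝ, 0 ≤ C ∧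
    ∀ (α β β' α' ρ γ : ℝ) (M : ℕ → ℕ → ℕ → ℕ → ℝ), MomRec α β β' α' ρ M →
      |α| ≤ γ → |β| ≤ γ → |β'| ≤ γ → |α'| ≤ γ → γ ≤ 1 → |ρ| ≤ 1 →
      (∀ a b, a ≤ A → b ≤ A → |M 0 0 a b| ≤ B₀) → 1 ≤ p + r →
      ∀ a b, a ≤ A → b ≤ A → |M p r a b - mom0 α β β' α' (M 0 0) p r a b -
        (if p = r then p.factorial * ρ ^ p * M 0 0 a b else 0)| ≤ C * (γ * |ρ|) := by
  induction p generalizing r with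
  | zero =>
    refine ⟨0, le_rfl, fun α β β' α' ρ γ M hM h1 h2 h3 h4 hγ hρ hB hr a b ha hb => ?_⟩
    rw [if_neg (by omega), sub_zero, zero_mul]
    refine le_of_eq (abs_eq_zero.2 (sub_eq_zero.2 ?_))
    clear hr ha hb
    induction r generalizing a b with
    | zero => simp [mom0]
    | succ r ih => rw [hM.zero, mom0, ih, ih]
  | succ p ih =>
    rcases r with _ | r
    · refine ⟨0, le_rfl, fun α β β' α' ρ γ M hM h1 h2 h3 h4 hγ hρ hB hr a b ha hb => ?_⟩
      rw [if_neg (by omega), sub_zero, zero_mul]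
      refine le_of_eq (abs_eq_zero.2 (sub_eq_zero.2 ?_))
      clear ih hr ha hb
      induction p generalizing a b with
      | zero => simp [hM.succ, mom0]
      | succ p ih => rw [hM.succ, mom0, ih, ih]; simp
    · obtain ⟨C₁, hC₁, ih₁⟩ := ih (r + 1)
      obtain ⟨C₂, hC₂, ih₂⟩ := ih r
      obtain ⟨C₃, hC₃, h3b⟩ := mom0_bound A B₀ p r
      refine ⟨2 * (A * (C₁ + p.factorial * B₀)) + (r + 1) * (C₂ + C₃), by positivity,
        fun α β β' α' ρ γ M hM h1 h2 h3 h4 hγ hρ hB hr a b ha hb => ?_⟩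
      have hγ0 : 0 ≤ γ := (abs_nonneg _).trans h1
      -- the two contractions with a power carry a factor `γ`, the induction hypothesis a factor `ρ`
      have e1 : ∀ a b, a ≤ A → b ≤ A → |M p (r + 1) a b - mom0 α β β' α' (M 0 0) p (r + 1) a b| ≤
          (C₁ + p.factorial * B₀) * |ρ| := by
        intro a b ha hb
        have h := ih₁ α β β' α' ρ γ M hM h1 h2 h3 h4 hγ hρ hB (by omega) a b ha hb
        have hb2 : |(if p = r + 1 then p.factorial * ρ ^ p * M 0 0 a b else 0 : ℝ)| ≤
            p.factorial * B₀ * |ρ| := by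
          split_ifs with hp
          · rw [abs_mul, abs_mul, Nat.abs_cast, abs_pow]
            have : |ρ| ^ p ≤ |ρ| := pow_le_of_le_one (abs_nonneg _) hρ (by omega)
            calc _ ≤ p.factorial * |ρ| * B₀ := by
                  gcongr
                  exact hB a b ha hb
              _ = _ := by ring
          · simp; positivity
        have h5 := abs_sub_abs_le_abs_sub (M p (r + 1) a b - mom0 α β β' α' (M 0 0) p (r + 1) a b)
          (if p = r + 1 then p.factorial * ρ ^ p * M 0 0 a b else 0 : ℝ)
        have : C₁ * (γ * |ρ|) ≤ C₁ * |ρ| := by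
          have : γ * |ρ| ≤ 1 * |ρ| := by gcongr
          gcongr; linarith
        linarith
      have e2 : |M p r a b - (if p = r then p.factorial * ρ ^ p * M 0 0 a b else 0)| ≤
          (C₂ + C₃) * γ := by
        rcases Nat.eq_zero_or_pos (p + r) with h0 | h0
        · obtain ⟨rfl, rfl⟩ : p = 0 ∧ r = 0 := by omega
          simp; positivity
        · have h := ih₂ α β β' α' ρ γ M hM h1 h2 h3 h4 hγ hρ hB h0 a b ha hb
          have h' := h3b α β β' α' γ (M 0 0) h1 h2 h3 h4 hB a b ha hb
          have h6 : γ ^ (p + r) ≤ γ := pow_le_of_le_one hγ0 hγ (by omega)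
          have h7 : C₂ * (γ * |ρ|) ≤ C₂ * γ := by
            have : γ * |ρ| ≤ γ * 1 := by gcongr
            gcongr; linarith
          have h8 : C₃ * γ ^ (p + r) ≤ C₃ * γ := by gcongr
          rw [abs_le] at h h' ⊢
          constructor <;> linarith [h.1, h.2, h'.1, h'.2]
      have h9 : (if p + 1 = r + 1 then (p + 1).factorial * ρ ^ (p + 1) * M 0 0 a b else 0 : ℝ) =
          ρ * ((r + 1 : ℕ) * (if p = r then p.factorial * ρ ^ p * M 0 0 a b else 0)) := by
        by_cases h : p = r
        · subst h; simp [Nat.factorial_succ, pow_succ]; ring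
        · simp [h]
      rw [hM.succ, mom0, h9, Nat.add_sub_cancel]
      have key : ∀ x x' y y' z z' : ℝ, α * (a * x) + β * (b * y) + ρ * ((r + 1 : ℕ) * z) -
        (α * (a * x') + β * (b * y')) - ρ * ((r + 1 : ℕ) * z') =
        α * (a * (x - x')) + β * (b * (y - y')) + ρ * ((r + 1 : ℕ) * (z - z')) := by
        intros; ring
      rw [key]
      refine (abs_add_three _ _ _).trans ((add_le_add_three (abs_aux ha h1 (e1 _ _ (by omega) hb))
        (abs_aux hb h2 (e1 _ _ ha (by omega))) (abs_aux le_rfl le_rfl e2)).trans (le_of_eq ?_))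
      push_cast
      ring

end

/-! ### Bounds for Gaussian moments -/

section

variable {P : Measure Ω} {S : Set (Ω → ℝ)}

lemma CG.momRec (hS : CG P S) {u w G G' : Ω → ℝ} (hu : u ∈ S) (hw : w ∈ S) (hG : G ∈ S)
    (hG' : G' ∈ S) (hv : cov[G, G; P] = 1) (hv' : cov[G', G'; P] = 1) :
    MomRec cov[G, u; P] cov[G, w; P] cov[G', u; P] cov[G', w; P] cov[G, G'; P]
      (fun p r a b => mom P u w G G' a b p r) :=
  ⟨fun r a b => hS.mom_zero_succ hu hw hG' hv' a b r,
    fun p r a b => hS.mom_succ hu hw hG hG' hv a b p r⟩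

lemma CG.gauss (hS : CG P S) {u : Ω → ℝ} (hu : u ∈ S) : HasGaussianLaw u P :=
  (hS Unit (fun _ => u) (fun _ => hu)).1.eval ()

lemma CG.mean (hS : CG P S) {u : Ω → ℝ} (hu : u ∈ S) : ∫ ω, u ω ∂P = 0 :=
  (hS Unit (fun _ => u) (fun _ => hu)).2 ()

lemma CG.memLp (hS : CG P S) {u : Ω → ℝ} (hu : u ∈ S) : MemLp u 2 P := (hS.gauss hu).memLp_two

lemma CG.abs_cov_le_one (hS : CG P S) {u w : Ω → ℝ} (hu : u ∈ S) (hw : w ∈ S)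
    (h1 : cov[u, u; P] = 1) (h2 : cov[w, w; P] = 1) : |cov[u, w; P]| ≤ 1 := by
  have := (hS.gauss hu).isProbabilityMeasure
  have hu2 := hS.memLp hu
  have hw2 := hS.memLp hw
  have e1 := variance_nonneg (u - w) P
  have e2 := variance_nonneg (u + w) P
  rw [variance_sub hu2 hw2, ← covariance_self hu2.aemeasurable, ← covariance_self hw2.aemeasurable,
    h1, h2] at e1
  rw [variance_add hu2 hw2, ← covariance_self hu2.aemeasurable, ← covariance_self hw2.aemeasurable,
    h1, h2] at e2
  rw [abs_le]; constructor <;> linarith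

/-- Moments of order `2a` of centered Gaussian variables of variance at most one. -/
lemma CG.even_moment_le (hS : CG P S) {u : Ω → ℝ} (hu : u ∈ S) (h1 : cov[u, u; P] ≤ 1) (a : ℕ) :
    ∫ ω, u ω ^ (2 * a) ∂P ≤ ∫ t, t ^ (2 * a) ∂(gaussianReal 0 1) := by
  have hg := hS.gauss hu
  have := hg.isProbabilityMeasure
  have hv := covariance_self (μ := P) hg.aemeasurable
  have hlaw : P.map u = (gaussianReal 0 1).map (fun t => Real.sqrt (cov[u, u; P]) * t) := by
    rw [hg.map_eq_gaussianReal, hS.mean hu, gaussianReal_map_const_mul]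
    have : (0 : ℝ) ≤ cov[u, u; P] := by rw [hv]; exact variance_nonneg _ _
    congr 1
    · simp
    · ext
      simp [Real.coe_toNNReal _ (variance_nonneg u P), hv, Real.sq_sqrt (variance_nonneg u P)]
  have e1 : ∫ ω, u ω ^ (2 * a) ∂P = ∫ t, t ^ (2 * a) ∂(P.map u) := by
    rw [integral_map hg.aemeasurable]
    exact (continuous_pow _).aestronglyMeasurable
  have h0 : 0 ≤ cov[u, u; P] := by rw [hv]; exact variance_nonneg _ _
  rw [e1, hlaw, integral_map (by fun_prop) (continuous_pow _).aestronglyMeasurable]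
  simp only [mul_pow, integral_const_mul]
  rw [pow_mul, Real.sq_sqrt h0]
  refine mul_le_of_le_one_left (integral_nonneg fun t => ?_) (pow_le_one₀ h0 h1)
  exact (even_two_mul a).pow_nonneg t

/-- Moments of Gaussian variables of variance at most one are bounded, uniformly over all Gaussian
families. -/
lemma moment_le (P : Measure Ω) (S : Set (Ω → ℝ)) (A : ℕ) : ∃ B : ℝ, 0 ≤ B ∧
    ∀ {u w : Ω → ℝ}, CG P S → u ∈ S → w ∈ S → cov[u, u; P] ≤ 1 → cov[w, w; P] ≤ 1 →
      ∀ a b, a ≤ A → b ≤ A → ∫ ω, |u ω ^ a * w ω ^ b| ∂P ≤ B := by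
  have hnn : ∀ a : ℕ, 0 ≤ ∫ t, t ^ (2 * a) ∂(gaussianReal 0 1) := fun a =>
    integral_nonneg fun t => (even_two_mul a).pow_nonneg t
  refine ⟨∑ a ∈ Finset.range (A + 1), ∫ t, t ^ (2 * a) ∂(gaussianReal 0 1),
    Finset.sum_nonneg fun a _ => hnn a, ?_⟩
  intro u w hS hu hw h1 h2 a b ha hb
  have hle : ∀ a ≤ A, ∫ t, t ^ (2 * a) ∂(gaussianReal 0 1) ≤
      ∑ a ∈ Finset.range (A + 1), ∫ t, t ^ (2 * a) ∂(gaussianReal 0 1) := fun a ha =>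
    Finset.single_le_sum (f := fun a : ℕ => ∫ t, t ^ (2 * a) ∂(gaussianReal 0 1))
      (fun a _ => hnn a) (Finset.mem_range.2 (by omega))
  have hi : ∀ v ∈ S, ∀ a : ℕ, Integrable (fun ω => v ω ^ a) P := fun v hv a =>
    (PG.id.pow a).integrable (hS.gauss hv)
  have hV : ∀ i, (![u, w] : Fin 2 → Ω → ℝ) i ∈ S := by intro i; fin_cases i <;> assumption
  have hi2 : Integrable (fun ω => |u ω ^ a * w ω ^ b|) P :=
    (hS.integrable hV (((PG.eval 0).pow a).mul ((PG.eval 1).pow b))).abs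
  have : ∫ ω, |u ω ^ a * w ω ^ b| ∂P ≤ ∫ ω, (u ω ^ (2 * a) + w ω ^ (2 * b)) / 2 ∂P := by
    refine integral_mono hi2 (((hi u hu _).add (hi w hw _)).div_const 2) fun ω => ?_
    simp only [abs_mul, mul_comm 2 a, mul_comm 2 b, pow_mul, ← sq_abs (u ω ^ a), ← sq_abs (w ω ^ b)]
    nlinarith [sq_nonneg (|u ω ^ a| - |w ω ^ b|)]
  refine this.trans ?_
  rw [integral_div, integral_add (hi u hu _) (hi w hw _)]
  have := (hS.even_moment_le hu h1 a).trans (hle a ha)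
  have := (hS.even_moment_le hw h2 b).trans (hle b hb)
  linarith

/-- Two-point Hermite moments. -/
lemma CG.mom2 (hS : CG P S) {G G' : Ω → ℝ} (hG : G ∈ S) (hG' : G' ∈ S) (hv : cov[G, G; P] = 1)
    (hv' : cov[G', G'; P] = 1) (p r : ℕ) : mom4 P G G' G' G' p r 0 0 =
      if p = r then p.factorial * cov[G, G'; P] ^ p else 0 := by
  have := (hS.gauss hG).isProbabilityMeasure
  induction p generalizing r with
  | zero =>
    rw [CG.mom4_zero]
    cases r with
    | zero => simp [mom4, Hq_zero]
    | succ r => rw [hS.mom4_succ hG' hG' hG' hG' hv']; simp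
  | succ p ih =>
    rw [hS.mom4_succ hG hG' hG' hG' hv, ih]
    rcases r with _ | r
    · simp
    · by_cases h : p = r
      · subst h; simp [Nat.factorial_succ, pow_succ]; ring
      · simp [h]

lemma CG.mom4_bound (hS : CG P S) (N : ℕ) : ∃ C : ℝ, 0 ≤ C ∧ ∀ {G₁ G₂ G₃ G₄ : Ω → ℝ},
    G₁ ∈ S → G₂ ∈ S → G₃ ∈ S → G₄ ∈ S → cov[G₁, G₁; P] = 1 → cov[G₂, G₂; P] = 1 →
    cov[G₃, G₃; P] = 1 → cov[G₄, G₄; P] = 1 → ∀ a b c d, a + b + c + d ≤ N →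
    |mom4 P G₁ G₂ G₃ G₄ a b c d| ≤ C := by
  induction N with
  | zero =>
    refine ⟨1, zero_le_one, fun h1 h2 h3 h4 v1 v2 v3 v4 a b c d hN => ?_⟩
    have := (hS.gauss h1).isProbabilityMeasure
    obtain ⟨rfl, rfl, rfl, rfl⟩ : a = 0 ∧ b = 0 ∧ c = 0 ∧ d = 0 := by omega
    simp [mom4, Hq_zero]
  | succ N ih =>
    obtain ⟨C, hC, ih⟩ := ih
    have key : ∀ {G₁ G₂ G₃ G₄ : Ω → ℝ},
        G₁ ∈ S → G₂ ∈ S → G₃ ∈ S → G₄ ∈ S → cov[G₁, G₁; P] = 1 → cov[G₂, G₂; P] = 1 →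
        cov[G₃, G₃; P] = 1 → cov[G₄, G₄; P] = 1 → ∀ a b c d, a + 1 + b + c + d ≤ N + 1 →
        |mom4 P G₁ G₂ G₃ G₄ (a + 1) b c d| ≤ 3 * (N + 1) * C := by
      intro G₁ G₂ G₃ G₄ h1 h2 h3 h4 v1 v2 v3 v4 a b c d hN
      rw [hS.mom4_succ h1 h2 h3 h4 v1]
      refine (abs_add_three _ _ _).trans ((add_le_add_three
        (abs_aux (A := N + 1) (by omega) (hS.abs_cov_le_one h1 h2 v1 v2)
          (ih h1 h2 h3 h4 v1 v2 v3 v4 _ _ _ _ (by omega)))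
        (abs_aux (A := N + 1) (by omega) (hS.abs_cov_le_one h1 h3 v1 v3)
          (ih h1 h2 h3 h4 v1 v2 v3 v4 _ _ _ _ (by omega)))
        (abs_aux (A := N + 1) (by omega) (hS.abs_cov_le_one h1 h4 v1 v4)
          (ih h1 h2 h3 h4 v1 v2 v3 v4 _ _ _ _ (by omega)))).trans (le_of_eq ?_))
      push_cast; ring
    refine ⟨3 * (N + 1) * C + C, by positivity, fun h1 h2 h3 h4 v1 v2 v3 v4 a b c d hN => ?_⟩
    have e : (0 : ℝ) ≤ 3 * (N + 1) * C := by positivity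
    rcases a with _ | a
    · rw [CG.mom4_zero]
      rcases b with _ | b
      · rw [CG.mom4_zero]
        rcases c with _ | c
        · rw [CG.mom4_zero]
          rcases d with _ | d
          · exact (ih h4 h4 h4 h4 v4 v4 v4 v4 0 0 0 0 (by omega)).trans (by linarith)
          · exact (key h4 h4 h4 h4 v4 v4 v4 v4 _ _ _ _ (by omega)).trans (by linarith)
        · exact (key h3 h4 h4 h4 v3 v4 v4 v4 _ _ _ _ (by omega)).trans (by linarith)
      · exact (key h2 h3 h4 h4 v2 v3 v4 v4 _ _ _ _ (by omega)).trans (by linarith)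
    · exact (key h1 h2 h3 h4 v1 v2 v3 v4 _ _ _ _ (by omega)).trans (by linarith)

/-- Asymptotic decorrelation of the four-point Hermite moments. -/
lemma CG.mom4_sub (hS : CG P S) (N a : ℕ) : ∃ C : ℝ, 0 ≤ C ∧ ∀ {G₁ G₂ G₃ G₄ : Ω → ℝ},
    G₁ ∈ S → G₂ ∈ S → G₃ ∈ S → G₄ ∈ S → cov[G₁, G₁; P] = 1 → cov[G₂, G₂; P] = 1 →
    cov[G₃, G₃; P] = 1 → cov[G₄, G₄; P] = 1 → ∀ b c d, a + b + c + d ≤ N →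
    |mom4 P G₁ G₂ G₃ G₄ a b c d - mom4 P G₁ G₂ G₂ G₂ a b 0 0 * mom4 P G₃ G₄ G₄ G₄ c d 0 0| ≤
      C * (|cov[G₁, G₃; P]| + |cov[G₁, G₄; P]| + |cov[G₂, G₃; P]| + |cov[G₂, G₄; P]|) := by
  obtain ⟨D, hD, hb⟩ := hS.mom4_bound N
  induction a with
  | zero =>
    refine ⟨N * D, by positivity, fun {G₁ G₂ G₃ G₄} h1 h2 h3 h4 v1 v2 v3 v4 b c d hN => ?_⟩
    have := (hS.gauss h1).isProbabilityMeasure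
    rcases b with _ | b
    · have : mom4 P G₁ G₂ G₃ G₄ 0 0 c d -
        mom4 P G₁ G₂ G₂ G₂ 0 0 0 0 * mom4 P G₃ G₄ G₄ G₄ c d 0 0 = 0 := by
        simp [mom4, Hq_zero]
      rw [this, abs_zero]; positivity
    · rw [hS.mom2 h1 h2 v1 v2, if_neg (by omega), zero_mul, sub_zero, CG.mom4_zero,
        hS.mom4_succ h2 h3 h4 h4 v2]
      have e1 := abs_aux (A := N) (a := c) (by omega) (le_refl |cov[G₂, G₃; P]|)
        (hb h2 h3 h4 h4 v2 v3 v4 v4 b (c - 1) d 0 (by omega))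
      have e2 := abs_aux (A := N) (a := d) (by omega) (le_refl |cov[G₂, G₄; P]|)
        (hb h2 h3 h4 h4 v2 v3 v4 v4 b c (d - 1) 0 (by omega))
      simp only [Nat.cast_zero, zero_mul, mul_zero, add_zero]
      have e3 : 0 ≤ N * D * |cov[G₁, G₃; P]| := by positivity
      have e4 : 0 ≤ N * D * |cov[G₁, G₄; P]| := by positivity
      refine (abs_add_le _ _).trans ?_
      linarith
  | succ a ih =>
    obtain ⟨C, hC, ih⟩ := ih
    refine ⟨N * C + N * D, by positivity, fun {G₁ G₂ G₃ G₄} h1 h2 h3 h4 v1 v2 v3 v4 b c d hN => ?_⟩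
    rw [hS.mom4_succ h1 h2 h3 h4 v1, hS.mom4_succ h1 h2 h2 h2 v1]
    have e1 := abs_aux (A := N) (a := b) (by omega) (hS.abs_cov_le_one h1 h2 v1 v2)
        (ih h1 h2 h3 h4 v1 v2 v3 v4 (b - 1) c d (by omega))
    have e2 := abs_aux (A := N) (a := c) (by omega) (le_refl |cov[G₁, G₃; P]|)
        (hb h1 h2 h3 h4 v1 v2 v3 v4 a b (c - 1) d (by omega))
    have e3 := abs_aux (A := N) (a := d) (by omega) (le_refl |cov[G₁, G₄; P]|)
        (hb h1 h2 h3 h4 v1 v2 v3 v4 a b c (d - 1) (by omega))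
    have e4 : 0 ≤ N * D * |cov[G₂, G₃; P]| := by positivity
    have e5 : 0 ≤ N * D * |cov[G₂, G₄; P]| := by positivity
    simp only [Nat.cast_zero, zero_mul, mul_zero, add_zero]
    have key : ∀ ρ x y z t w : ℝ, ρ * (b * x) + y + z - ρ * (b * t) * w =
      ρ * (b * (x - t * w)) + y + z := by intros; ring
    rw [key]
    refine (abs_add_three _ _ _).trans ?_
    linarith

end

/-! ### A quantitative central limit theorem for sums of Hermite functionals -/

section

variable {P : Measure Ω} {S : Set (Ω → ℝ)}

lemma PG.hermSum {ι : Type*} [Fintype ι] (q : ℕ) (a : ι → ℝ) :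
    PG (fun v : ι → ℝ => ∑ k, a k * Hq q (v k)) :=
  PG.sum _ fun k _ => (PG.const _).mul ((PG_Hq q).comp (PG.eval k))

lemma PG.cexp {V : Type*} [NormedAddCommGroup V] {f : V → ℝ} (hf : PG f) :
    PG (fun v => Complex.exp (f v * Complex.I)) :=
  PG.of_bound (by have := hf.1; fun_prop) 1 fun v => by rw [Complex.norm_exp_ofReal_mul_I]

/-- Gaussian integration by parts in the characteristic function of a sum of Hermite functionals:
the Hermite degree of one term is lowered by differentiating the exponential. -/
lemma CG.charfun_ibp (hS : CG P S) {ι : Type} [Fintype ι] {G : ι → Ω → ℝ} (hG : ∀ k, G k ∈ S)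
    (hv : ∀ k, cov[G k, G k; P] = 1) (p : ℕ) (a : ι → ℝ) (k : ι) :
    ∫ ω, Hq (p + 1) (G k ω) • Complex.exp ((∑ l, a l * Hq (p + 1) (G l ω) : ℝ) * Complex.I) ∂P =
    ∫ ω, Hq p (G k ω) • ((((p + 1 : ℕ) * ∑ l, a l * cov[G k, G l; P] * Hq p (G l ω) : ℝ) *
      Complex.I) * Complex.exp ((∑ l, a l * Hq (p + 1) (G l ω) : ℝ) * Complex.I)) ∂P := by
  have hs := PG.hermSum (p + 1) a
  have hs' := PG.hermSum p (fun l => a l * cov[G k, G l; P])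
  refine gaussian_ibp (E := ℂ) p (hS _ G hG).1 k ((hS _ G hG).2 k) (fun i => cov[G k, G i; P])
    (fun i => rfl) (hv k)
    (Φ := fun v => Complex.exp ((∑ l, a l * Hq (p + 1) (v l) : ℝ) * Complex.I))
    (Φ' := fun v => ((((p + 1 : ℕ) * ∑ l, a l * cov[G k, G l; P] * Hq p (v l) : ℝ) *
      Complex.I) * Complex.exp ((∑ l, a l * Hq (p + 1) (v l) : ℝ) * Complex.I)))
    hs.cexp ?_ ?_
  · exact (((PG.const _).mul hs').ofReal.mulC (PG.const _)).mulC hs.cexp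
  · intro v
    have h1 : ∀ l, HasDerivAt (fun r : ℝ => a l * Hq (p + 1) (v l + r * cov[G k, G l; P]))
        (a l * (((p + 1 : ℕ) * Hq p (v l)) * cov[G k, G l; P])) 0 := by
      intro l
      have e1 : HasDerivAt (fun r : ℝ => v l + r * cov[G k, G l; P]) cov[G k, G l; P] 0 := by
        simpa using ((hasDerivAt_id (0 : ℝ)).mul_const _).const_add (v l)
      have e2 : HasDerivAt (Hq (p + 1)) ((p + 1 : ℕ) * Hq p (v l))
          (v l + 0 * cov[G k, G l; P]) := by
        simpa using hasDerivAt_Hq (p + 1) (v l)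
      exact (e2.comp (0 : ℝ) e1).const_mul _
    have h2 := HasDerivAt.fun_sum (u := Finset.univ) fun l _ => h1 l
    have h3 := ((h2.ofReal_comp).mul_const Complex.I).cexp
    refine h3.congr_deriv ?_
    simp only [zero_mul, add_zero]
    rw [mul_comm]
    congr 3
    rw [Finset.mul_sum]
    exact Finset.sum_congr rfl fun l _ => by ring

/-- Comparison of the characteristic function of a linear combination `F` of Hermite functionals,
tilted by `e^{iF'}`, with a Gaussian one. Along `λ ↦ e^{λ²s/2} E[e^{i(λF+F')}]` integration by
parts produces the Malliavin-type quadratic forms whose fluctuations appear on the right. -/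
lemma CG.clt_ineq (hS : CG P S) {ι : Type} [Fintype ι] {G : ι → Ω → ℝ} (hG : ∀ k, G k ∈ S)
    (hv : ∀ k, cov[G k, G k; P] = 1) [IsProbabilityMeasure P] (p : ℕ) (a b : ι → ℝ) (s : ℝ)
    (hs : 0 ≤ s) :
    ‖∫ ω, Complex.exp (((∑ k, a k * Hq (p + 1) (G k ω)) + (∑ k, b k * Hq (p + 1) (G k ω)) : ℝ) *
        Complex.I) ∂P -
      Real.exp (-s / 2) * ∫ ω, Complex.exp ((∑ k, b k * Hq (p + 1) (G k ω) : ℝ) * Complex.I) ∂P‖ ≤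
    ∫ ω, |((p + 1 : ℕ) * ∑ k, ∑ l, a k * a l * cov[G k, G l; P] * (Hq p (G k ω) * Hq p (G l ω))) -
      s| ∂P +
    ∫ ω, |(p + 1 : ℕ) * ∑ k, ∑ l, a k * b l * cov[G k, G l; P] * (Hq p (G k ω) * Hq p (G l ω))|
      ∂P := by
  set F : Ω → ℝ := fun ω => ∑ k, a k * Hq (p + 1) (G k ω) with hF
  set F' : Ω → ℝ := fun ω => ∑ k, b k * Hq (p + 1) (G k ω) with hF'
  set T : Ω → ℝ := fun ω => (p + 1 : ℕ) *
    ∑ k, ∑ l, a k * a l * cov[G k, G l; P] * (Hq p (G k ω) * Hq p (G l ω)) with hT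
  set R : Ω → ℝ := fun ω => (p + 1 : ℕ) *
    ∑ k, ∑ l, a k * b l * cov[G k, G l; P] * (Hq p (G k ω) * Hq p (G l ω)) with hR
  have pgT : ∀ c : ι → ι → ℝ, PG (fun v : ι → ℝ => ((p + 1 : ℕ) : ℝ) *
      ∑ k, ∑ l, c k l * (Hq p (v k) * Hq p (v l))) := fun c =>
    (PG.const _).mul (PG.sum _ fun k _ => PG.sum _ fun l _ => (PG.const _).mul
      (((PG_Hq p).comp (PG.eval k)).mul ((PG_Hq p).comp (PG.eval l))))
  have hFi : Integrable F P := hS.integrable hG (PG.hermSum (p + 1) a)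
  have hF'i : Integrable F' P := hS.integrable hG (PG.hermSum (p + 1) b)
  have hTi : Integrable T P := hS.integrable hG (pgT _)
  have hRi : Integrable R P := hS.integrable hG (pgT _)
  have hZm : ∀ r : ℝ, AEStronglyMeasurable
      (fun ω => Complex.exp ((r * F ω + F' ω : ℝ) * Complex.I)) P := fun r => by
    have h := hFi.aestronglyMeasurable
    have h' := hF'i.aestronglyMeasurable
    exact Continuous.comp_aestronglyMeasurable (g := fun x : ℝ => Complex.exp (x * Complex.I))
      (by fun_prop) ((h.const_mul r).add h')
  have hZb : ∀ (r : ℝ) ω, ‖Complex.exp ((r * F ω + F' ω : ℝ) * Complex.I)‖ ≤ 1 := fun r ω => by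
    rw [Complex.norm_exp_ofReal_mul_I]
  have hXZ : ∀ (X : Ω → ℝ) (r : ℝ), Integrable X P →
      Integrable (fun ω => (X ω : ℂ) * Complex.exp ((r * F ω + F' ω : ℝ) * Complex.I)) P :=
    fun X r hX => hX.ofReal.mul_bdd (c := 1) (hZm r) (Eventually.of_forall (hZb r))
  set φ : ℝ → ℂ := fun r => ∫ ω, Complex.exp ((r * F ω + F' ω : ℝ) * Complex.I) ∂P with hφ
  have hZi : ∀ r : ℝ, Integrable (fun ω => Complex.exp ((r * F ω + F' ω : ℝ) * Complex.I)) P :=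
    fun r => by simpa using hXZ (fun _ => 1) r (integrable_const 1)
  -- integration by parts inside the derivative of the characteristic function
  have hderiv : ∀ r : ℝ, HasDerivAt φ (-∫ ω, ((r * T ω + R ω : ℝ) : ℂ) *
      Complex.exp ((r * F ω + F' ω : ℝ) * Complex.I) ∂P) r := by
    intro r
    have h1 : HasDerivAt φ (∫ ω, (F ω * Complex.I) *
        Complex.exp ((r * F ω + F' ω : ℝ) * Complex.I) ∂P) r := by
      refine (hasDerivAt_integral_of_dominated_loc_of_deriv_le (bound := fun ω => |F ω|)
        (F := fun r ω => Complex.exp ((r * F ω + F' ω : ℝ) * Complex.I))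
        (F' := fun r ω => (F ω * Complex.I) * Complex.exp ((r * F ω + F' ω : ℝ) * Complex.I))
        (s := Set.univ) univ_mem
        (Eventually.of_forall hZm) (hZi r) ?_ ?_ hFi.abs ?_).2
      · exact (hFi.ofReal.aestronglyMeasurable.mul_const _).mul (hZm r)
      · refine Eventually.of_forall fun ω y _ => ?_
        rw [norm_mul, norm_mul, Complex.norm_I, Complex.norm_exp_ofReal_mul_I]
        simp
      · refine Eventually.of_forall fun ω y _ => ?_
        have e : HasDerivAt (fun y : ℝ => y * F ω + F' ω) (F ω) y := by
          simpa using ((hasDerivAt_id y).mul_const (F ω)).add_const (F' ω)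
        refine ((e.ofReal_comp.mul_const Complex.I).cexp).congr_deriv ?_
        ring
    convert h1 using 1
    have e0 : ∀ ω, r * F ω + F' ω = ∑ l, (r * a l + b l) * Hq (p + 1) (G l ω) := fun ω => by
      rw [hF, hF', Finset.mul_sum, ← Finset.sum_add_distrib]
      exact Finset.sum_congr rfl fun l _ => by ring
    have e1 : ∫ ω, (F ω * Complex.I) * Complex.exp ((r * F ω + F' ω : ℝ) * Complex.I) ∂P =
        ∑ k, (a k * Complex.I) * ∫ ω, Hq (p + 1) (G k ω) •
          Complex.exp ((∑ l, (r * a l + b l) * Hq (p + 1) (G l ω) : ℝ) * Complex.I) ∂P := by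
      simp only [← integral_const_mul]
      rw [← integral_finsetSum]
      · refine integral_congr_ae (Eventually.of_forall fun ω => ?_)
        simp only [e0]
        rw [hF]
        simp only [Complex.ofReal_sum, Finset.sum_mul, Complex.real_smul]
        exact Finset.sum_congr rfl fun l _ => by push_cast; ring
      · intro k _
        have := (hXZ (fun ω => Hq (p + 1) (G k ω)) r (hS.integrable hG
          ((PG_Hq (p + 1)).comp (PG.eval k)))).const_mul (a k * Complex.I)
        simpa only [e0, Complex.real_smul] using this
    rw [e1, ← integral_neg]
    simp only [hS.charfun_ibp hG hv p (fun l => r * a l + b l)]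
    simp only [← integral_const_mul]
    rw [← integral_finsetSum]
    · refine integral_congr_ae (Eventually.of_forall fun ω => ?_)
      simp only [← e0]
      rw [← neg_mul, Finset.sum_congr rfl fun k _ => show _ = (-(a k * (Hq p (G k ω) *
        ((p + 1 : ℕ) * ∑ l, (r * a l + b l) * cov[G k, G l; P] * Hq p (G l ω)))) : ℂ) *
        Complex.exp ((r * F ω + F' ω : ℝ) * Complex.I) by
          simp only [Complex.real_smul]
          push_cast
          linear_combination (norm := (push_cast; ring)) (a k * (Hq p (G k ω) *
            ((p + 1) * ∑ l, (r * a l + b l) * cov[G k, G l; P] * Hq p (G l ω)))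
            * Complex.exp ((r * F ω + F' ω) * Complex.I) : ℂ) * Complex.I_mul_I]
      rw [← Finset.sum_mul, Finset.sum_neg_distrib]
      congr 2
      rw [hT, hR]
      push_cast
      simp only [Finset.mul_sum, ← Finset.sum_add_distrib]
      refine Finset.sum_congr rfl fun k _ => Finset.sum_congr rfl fun l _ => ?_
      ring
    · intro k _
      have := (hXZ (fun ω => Hq p (G k ω) *
        ((p + 1 : ℕ) * ∑ l, (r * a l + b l) * cov[G k, G l; P] * Hq p (G l ω))) r (hS.integrable hG
          (((PG_Hq p).comp (PG.eval k)).mul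
            ((PG.const _).mul (PG.hermSum p _))))).const_mul (a k * Complex.I * Complex.I)
      simp only [e0] at this
      refine this.congr (Eventually.of_forall fun ω => ?_)
      simp only [Complex.real_smul]
      push_cast
      ring
  set B : ℝ := ∫ ω, |T ω - s| ∂P + ∫ ω, |R ω| ∂P with hB
  have hTsi : Integrable (fun ω => T ω - s) P := hTi.sub (integrable_const s)
  have hψ : ∀ r : ℝ, HasDerivAt (fun r : ℝ => (Real.exp (r ^ 2 * s / 2) : ℂ) * φ r)
      (Real.exp (r ^ 2 * s / 2) * ∫ ω, ((-(r * (T ω - s) + R ω) : ℝ) : ℂ) *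
        Complex.exp ((r * F ω + F' ω : ℝ) * Complex.I) ∂P) r := by
    intro r
    have h1 : HasDerivAt (fun r : ℝ => Real.exp (r ^ 2 * s / 2))
        (Real.exp (r ^ 2 * s / 2) * (r * s)) r := by
      have := (((hasDerivAt_pow 2 r).mul_const s).div_const 2).exp
      refine this.congr_deriv ?_
      simp; ring
    refine (h1.ofReal_comp.mul (hderiv r)).congr_deriv ?_
    have : ∫ ω, ((-(r * (T ω - s) + R ω) : ℝ) : ℂ) *
        Complex.exp ((r * F ω + F' ω : ℝ) * Complex.I) ∂P = r * s * φ r -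
        ∫ ω, ((r * T ω + R ω : ℝ) : ℂ) *
          Complex.exp ((r * F ω + F' ω : ℝ) * Complex.I) ∂P := by
      rw [hφ, ← integral_const_mul, ← integral_sub]
      · refine integral_congr_ae (Eventually.of_forall fun ω => ?_)
        push_cast; ring
      · exact (hZi r).const_mul _
      · exact hXZ _ r ((hTi.const_mul r).add hRi)
    rw [this]
    push_cast
    ring
  have hmain : ‖(Real.exp ((1 : ℝ) ^ 2 * s / 2) : ℂ) * φ 1 -
      (Real.exp ((0 : ℝ) ^ 2 * s / 2) : ℂ) * φ 0‖ ≤ Real.exp (s / 2) * B * ‖(1 : ℝ) - 0‖ := by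
    refine Convex.norm_image_sub_le_of_norm_hasDerivWithin_le (s := Set.Icc (0 : ℝ) 1)
      (f := fun r : ℝ => (Real.exp (r ^ 2 * s / 2) : ℂ) * φ r)
      (fun r _ => (hψ r).hasDerivWithinAt) (fun r hr => ?_) (convex_Icc 0 1) (by simp) (by simp)
    rw [norm_mul, Complex.norm_real, Real.norm_of_nonneg (Real.exp_pos _).le]
    have hr2 : r ^ 2 ≤ 1 := pow_le_one₀ hr.1 hr.2
    gcongr
    · nlinarith
    · refine (norm_integral_le_integral_norm _).trans ?_
      rw [hB, ← integral_add hTsi.abs hRi.abs]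
      refine integral_mono_of_nonneg (Eventually.of_forall fun _ => norm_nonneg _)
        (hTsi.abs.add hRi.abs) (Eventually.of_forall fun ω => ?_)
      beta_reduce
      rw [norm_mul, Complex.norm_exp_ofReal_mul_I, mul_one, Complex.norm_real, Real.norm_eq_abs,
        abs_neg]
      refine (abs_add_le _ _).trans ?_
      rw [abs_mul, abs_of_nonneg hr.1]
      have := mul_le_of_le_one_left (abs_nonneg (T ω - s)) hr.2
      linarith
  have e2 : (Real.exp (s / 2) : ℂ) * Real.exp (-s / 2) = 1 := by
    rw [← Complex.ofReal_mul, ← Real.exp_add]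
    simp [neg_div]
  have e3 : ∫ ω, Complex.exp ((F ω + F' ω : ℝ) * Complex.I) ∂P -
      Real.exp (-s / 2) * ∫ ω, Complex.exp ((F' ω : ℝ) * Complex.I) ∂P =
      Real.exp (-s / 2) * ((Real.exp ((1 : ℝ) ^ 2 * s / 2) : ℂ) * φ 1 -
      (Real.exp ((0 : ℝ) ^ 2 * s / 2) : ℂ) * φ 0) := by
    have p1 : φ 1 = ∫ ω, Complex.exp ((F ω + F' ω : ℝ) * Complex.I) ∂P := by simp [hφ]
    have p0 : φ 0 = ∫ ω, Complex.exp ((F' ω : ℝ) * Complex.I) ∂P := by simp [hφ]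
    rw [← p1, ← p0, one_pow, one_mul, zero_pow two_ne_zero, zero_mul, zero_div, Real.exp_zero]
    generalize (Real.exp (s / 2) : ℂ) = x at e2 ⊢
    push_cast
    push_cast at e2
    linear_combination (-φ 1) * e2
  change ‖∫ ω, Complex.exp ((F ω + F' ω : ℝ) * Complex.I) ∂P -
      Real.exp (-s / 2) * ∫ ω, Complex.exp ((F' ω : ℝ) * Complex.I) ∂P‖ ≤ B
  rw [e3, norm_mul, Complex.norm_real, Real.norm_of_nonneg (Real.exp_pos _).le]
  calc _ ≤ Real.exp (-s / 2) * (Real.exp (s / 2) * B * ‖(1 : ℝ) - 0‖) := by gcongr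
    _ = B := by
      have : Real.exp (-s / 2) * Real.exp (s / 2) = 1 := by rw [← Real.exp_add]; simp [neg_div]
      simp only [sub_zero, norm_one, mul_one]
      rw [← mul_assoc, this, one_mul]

end

/-! ### Fractional Brownian motion: Gaussianity and covariances -/

section

variable {P : Measure Ω} {ν : ℝ} {x : ℝ → Ω → ℝ}

lemma IsFBM.map_sum (hx : IsFBM P ν x) {ι : Type} [Fintype ι] {t : ι → ℝ}
    (ht : ∀ j, t j ∈ Set.Icc (0 : ℝ) 1) (a : ι → ℝ) :
    P.map (fun ω => ∑ j, a j * x (t j) ω) =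
      gaussianReal 0 (∑ j, ∑ k, a j * a k * fbmCov ν (t j) (t k)).toNNReal := by
  let e : Fin (Fintype.card ι) ≃ ι := (Fintype.equivFin ι).symm
  have := hx.2.2 (Fintype.card ι) (fun i => t (e i)) (fun i => ht _) (fun i => a (e i))
  rw [← (e.sum_comp fun j => ∑ k, a j * a k * fbmCov ν (t j) (t k)),
    show (fun ω => ∑ j, a j * x (t j) ω) = fun ω => ∑ j, a (e j) * x (t (e j)) ω from
      funext fun ω => (e.sum_comp fun j => a j * x (t j) ω).symm, this]
  congr 2
  refine Finset.sum_congr rfl fun i _ => ?_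
  rw [← e.sum_comp]

/-- The scaled increments of `x` between times in `[0,1]`. -/
def incr (x : ℝ → Ω → ℝ) : Set (Ω → ℝ) :=
  {V | ∃ c s t : ℝ, s ∈ Set.Icc (0 : ℝ) 1 ∧ t ∈ Set.Icc (0 : ℝ) 1 ∧
    V = fun ω => c * (x t ω - x s ω)}

/-- The increments of `x` are centered and jointly Gaussian. Joint Gaussianity follows from that
of all one-dimensional projections, which is what `IsFBM` provides. -/
lemma IsFBM.cg (hx : IsFBM P ν x) : CG P (incr x) := by
  intro ι _ V hV
  choose c s t hs ht hV using hV
  have key : ∀ b : ι → ℝ, ∃ v : ℝ≥0, P.map (fun ω => ∑ i, b i * V i ω) = gaussianReal 0 v := by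
    intro b
    refine ⟨Real.toNNReal (∑ j, ∑ k, (Sum.elim (fun i => b i * c i) (fun i => -(b i * c i)) j) *
      (Sum.elim (fun i => b i * c i) (fun i => -(b i * c i)) k) *
        fbmCov ν (Sum.elim t s j) (Sum.elim t s k)), ?_⟩
    · convert hx.map_sum (ι := ι ⊕ ι) (t := Sum.elim t s) ?_
        (Sum.elim (fun i => b i * c i) (fun i => -(b i * c i))) using 1
      · congr 1
        funext ω
        rw [Fintype.sum_sum_type, ← Finset.sum_add_distrib]
        refine Finset.sum_congr rfl fun i _ => ?_
        rw [hV i]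
        simp only [Sum.elim_inl, Sum.elim_inr]
        ring
      · rintro (j | j)
        · exact ht j
        · exact hs j
  have hm : ∀ i, Measurable (V i) := fun i => by
    rw [hV i]
    exact ((hx.1 _).sub (hx.1 _)).const_mul _
  have hm' : Measurable (fun ω i => V i ω) := measurable_pi_lambda _ hm
  refine ⟨⟨isGaussian_of_map_eq_gaussianReal fun L => ?_⟩, fun i => ?_⟩
  · classical
    obtain ⟨v, hv⟩ := key fun i => L (Pi.single i 1)
    refine ⟨0, v, ?_⟩
    rw [Measure.map_map L.continuous.measurable hm', ← hv]
    congr 1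
    funext ω
    have h := L.toLinearMap.pi_apply_eq_sum_univ (fun i => V i ω)
    simp only [Function.comp]
    refine h.trans (Finset.sum_congr rfl fun i _ => ?_)
    rw [smul_eq_mul, mul_comm]
    have e : (fun j => if i = j then (1:ℝ) else 0) = Pi.single i 1 := by
      funext j
      simp [Pi.single_apply, eq_comm]
    rw [e]
    rfl
  · classical
    obtain ⟨v, hv⟩ := key (Pi.single i 1)
    have : (fun ω => ∑ j, (Pi.single i 1 : ι → ℝ) j * V j ω) = V i := by
      funext ω
      simp [Pi.single_apply]
    rw [this] at hv
    have h2 : ∫ ω, V i ω ∂P = ∫ r, r ∂(P.map (V i)) :=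
      (integral_map (hm i).aemeasurable (continuous_id.aestronglyMeasurable)).symm
    rw [h2, hv, integral_id_gaussianReal]

lemma IsFBM.prob (hx : IsFBM P ν x) : IsProbabilityMeasure P := by
  have : (fun _ => 0 : Ω → ℝ) ∈ incr x := ⟨0, 0, 0, by simp, by simp, by simp⟩
  exact (hx.cg.gauss this).isProbabilityMeasure

lemma incr_mem {s t : ℝ} (c : ℝ) (hs : s ∈ Set.Icc (0 : ℝ) 1) (ht : t ∈ Set.Icc (0 : ℝ) 1) :
    (fun ω => c * (x t ω - x s ω)) ∈ incr x := ⟨c, s, t, hs, ht, rfl⟩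

lemma incr_mem' {s t : ℝ} (hs : s ∈ Set.Icc (0 : ℝ) 1) (ht : t ∈ Set.Icc (0 : ℝ) 1) :
    (fun ω => x t ω - x s ω) ∈ incr x := ⟨1, s, t, hs, ht, by simp⟩

lemma IsFBM.memLp_sub (hx : IsFBM P ν x) {s t : ℝ} (hs : s ∈ Set.Icc (0 : ℝ) 1)
    (ht : t ∈ Set.Icc (0 : ℝ) 1) : MemLp (fun ω => x t ω - x s ω) 2 P :=
  hx.cg.memLp (incr_mem' hs ht)

lemma IsFBM.var_sub (hx : IsFBM P ν x) (hν : 0 < ν) {s t : ℝ} (hs : s ∈ Set.Icc (0 : ℝ) 1)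
    (ht : t ∈ Set.Icc (0 : ℝ) 1) :
    Var[fun ω => x t ω - x s ω; P] = |t - s| ^ (2 * ν) := by
  have h := hx.map_sum (t := ![t, s]) (by intro j; fin_cases j <;> assumption) ![1, -1]
  simp only [Fin.sum_univ_two, Matrix.cons_val_zero, Matrix.cons_val_one] at h
  have e : (fun ω => 1 * x t ω + -1 * x s ω) = fun ω => x t ω - x s ω := by
    funext ω; ring
  rw [e] at h
  have h0 : (0 : ℝ) ^ (2 * ν) = 0 := Real.zero_rpow (by linarith)
  have e2 : 1 * 1 * fbmCov ν t t + 1 * -1 * fbmCov ν t s +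
      (-1 * 1 * fbmCov ν s t + -1 * -1 * fbmCov ν s s) = |t - s| ^ (2 * ν) := by
    simp only [fbmCov, sub_self, abs_zero, h0, abs_sub_comm s t]
    ring
  rw [e2] at h
  have hm : AEMeasurable (fun ω => x t ω - x s ω) P := ((hx.1 _).sub (hx.1 _)).aemeasurable
  have h3 := variance_id_map hm
  rw [← h3, h, variance_id_gaussianReal, Real.coe_toNNReal _ (by positivity)]

lemma IsFBM.cov_sub (hx : IsFBM P ν x) (hν : 0 < ν) {s t s' t' : ℝ} (hs : s ∈ Set.Icc (0 : ℝ) 1)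
    (ht : t ∈ Set.Icc (0 : ℝ) 1) (hs' : s' ∈ Set.Icc (0 : ℝ) 1) (ht' : t' ∈ Set.Icc (0 : ℝ) 1) :
    cov[fun ω => x t ω - x s ω, fun ω => x t' ω - x s' ω; P] =
      (|t - s'| ^ (2 * ν) + |t' - s| ^ (2 * ν) - |s - s'| ^ (2 * ν) - |t - t'| ^ (2 * ν)) / 2 := by
  have := hx.prob
  have base : ∀ a ∈ Set.Icc (0:ℝ) 1, ∀ b ∈ Set.Icc (0:ℝ) 1, ∀ c ∈ Set.Icc (0:ℝ) 1,
      cov[fun ω => x b ω - x a ω, fun ω => x c ω - x a ω; P] =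
        (|b - a| ^ (2 * ν) + |c - a| ^ (2 * ν) - |b - c| ^ (2 * ν)) / 2 := by
    intro a ha b hb c hc
    have h := variance_sub (hx.memLp_sub ha hb) (hx.memLp_sub ha hc)
    have e : (fun ω => x b ω - x a ω) - (fun ω => x c ω - x a ω) = fun ω => x b ω - x c ω := by
      funext ω; simp
    rw [e, hx.var_sub hν hc hb, hx.var_sub hν ha hb, hx.var_sub hν ha hc] at h
    linarith
  have e : (fun ω => x t' ω - x s' ω) = (fun ω => x t' ω - x s ω) - (fun ω => x s' ω - x s ω) := by
    funext ω; simp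
  rw [e, covariance_sub_right (hx.memLp_sub hs ht) (hx.memLp_sub hs ht') (hx.memLp_sub hs hs'),
    base s hs t ht t' ht', base s hs t ht s' hs', abs_sub_comm s s']
  ring

/-- The normalised increment `n^ν (x_{t_{k+1}} - x_{t_k})` over a cell of the `n`-partition. -/
def Gi (x : ℝ → Ω → ℝ) (ν : ℝ) (n k : ℕ) (ω : Ω) : ℝ :=
  (n : ℝ) ^ ν * (x (((k : ℝ) + 1) / n) ω - x ((k : ℝ) / n) ω)

lemma grid_mem {n k : ℕ} (hk : k ≤ n) : (k : ℝ) / n ∈ Set.Icc (0 : ℝ) 1 :=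
  ⟨by positivity, div_le_one_of_le₀ (by exact_mod_cast hk) (by positivity)⟩

lemma grid_mem' {n k : ℕ} (hk : k < n) : ((k : ℝ) + 1) / n ∈ Set.Icc (0 : ℝ) 1 := by
  have := grid_mem (n := n) (k := k + 1) hk
  push_cast at this
  exact this

lemma Gi_mem {n k : ℕ} (hk : k < n) : Gi x ν n k ∈ incr x :=
  incr_mem _ (grid_mem hk.le) (grid_mem' hk)

lemma abs_nat_div_rpow {n : ℕ} (a h : ℝ) :
    |a / n| ^ h = |a| ^ h / (n : ℝ) ^ h := by
  rw [abs_div, Nat.abs_cast, Real.div_rpow (abs_nonneg _) (Nat.cast_nonneg _)]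

lemma IsFBM.cov_Gi (hx : IsFBM P ν x) (hν : 0 < ν) {n k l : ℕ} (hk : k < n) (hl : l < n) :
    cov[Gi x ν n k, Gi x ν n l; P] = rho ν ((k : ℤ) - l) := by
  have hn : (0 : ℝ) < n := by exact_mod_cast (by omega : 0 < n)
  unfold Gi
  rw [covariance_const_mul_left, covariance_const_mul_right,
    hx.cov_sub hν (grid_mem hk.le) (grid_mem' hk) (grid_mem hl.le) (grid_mem' hl)]
  simp only [← sub_div, abs_nat_div_rpow]
  have h2 : (n : ℝ) ^ (2 * ν) = n ^ ν * n ^ ν := by rw [two_mul, Real.rpow_add hn]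
  rw [h2, rho]
  have : (n : ℝ) ^ ν ≠ 0 := (Real.rpow_pos_of_pos hn _).ne'
  push_cast
  have e1 : ((k:ℝ) + 1 - l) = (k - l) + 1 := by ring
  have e2 : |(l:ℝ) + 1 - k| = |(k:ℝ) - l - 1| := by rw [← abs_neg]; congr 1; ring
  have e3 : ((k:ℝ) + 1 - (l + 1)) = k - l := by ring
  rw [e1, e2, e3]
  field_simp
  ring

lemma rho_zero (hν : 0 < ν) : rho ν 0 = 1 := by
  simp [rho, Real.zero_rpow (by linarith : 2 * ν ≠ 0)]

lemma rho_neg (k : ℤ) : rho ν (-k) = rho ν k := by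
  unfold rho
  push_cast
  rw [abs_neg, show -(k:ℝ) + 1 = -(k - 1) by ring, show -(k:ℝ) - 1 = -(k + 1) by ring, abs_neg,
    abs_neg]
  ring

lemma IsFBM.var_Gi (hx : IsFBM P ν x) (hν : 0 < ν) {n k : ℕ} (hk : k < n) :
    cov[Gi x ν n k, Gi x ν n k; P] = 1 := by
  rw [hx.cov_Gi hν hk hk, sub_self, rho_zero hν]

lemma IsFBM.var_incr (hx : IsFBM P ν x) (hν : 0 < ν) {s t : ℝ} (hs : s ∈ Set.Icc (0 : ℝ) 1)
    (ht : t ∈ Set.Icc (0 : ℝ) 1) (c : ℝ) :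
    cov[fun ω => c * (x t ω - x s ω), fun ω => c * (x t ω - x s ω); P] =
      c ^ 2 * |t - s| ^ (2 * ν) := by
  rw [covariance_const_mul_left, covariance_const_mul_right,
    covariance_self (X := fun ω => x t ω - x s ω) ((hx.1 _).sub (hx.1 _)).aemeasurable, hx.var_sub hν hs ht]
  ring

lemma abs_rpow_sub_rpow_le {h : ℝ} (h0 : 0 ≤ h) (h1 : h ≤ 1) (a b : ℝ) :
    |(|a| ^ h) - |b| ^ h| ≤ |a - b| ^ h := by
  have key : ∀ a b : ℝ, |a| ^ h - |b| ^ h ≤ |a - b| ^ h := by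
    intro a b
    have h2 := Real.rpow_add_le_add_rpow (abs_nonneg (a - b)) (abs_nonneg b) h0 h1
    have h3 : |a| ^ h ≤ (|a - b| + |b|) ^ h :=
      Real.rpow_le_rpow (abs_nonneg _) (by simpa using abs_add_le (a - b) b) h0
    linarith
  rw [abs_le]
  have := key b a
  rw [abs_sub_comm b a] at this
  constructor <;> linarith [key a b]

lemma IsFBM.cov_Gi_incr (hx : IsFBM P ν x) (hν : 0 < ν) {n k : ℕ} (hk : k < n) {s t : ℝ}
    (hs : s ∈ Set.Icc (0 : ℝ) 1) (ht : t ∈ Set.Icc (0 : ℝ) 1) :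
    cov[Gi x ν n k, fun ω => x t ω - x s ω; P] = (n : ℝ) ^ ν / 2 *
      ((|((k : ℝ) + 1) / n - s| ^ (2 * ν) - |(k : ℝ) / n - s| ^ (2 * ν)) -
        (|((k : ℝ) + 1) / n - t| ^ (2 * ν) - |(k : ℝ) / n - t| ^ (2 * ν))) := by
  unfold Gi
  rw [covariance_const_mul_left, hx.cov_sub hν (grid_mem hk.le) (grid_mem' hk) hs ht,
    abs_sub_comm t]
  ring

lemma abs_cell_le (hν : 0 < ν) (hν1 : 2 * ν ≤ 1) (n k : ℕ) (s : ℝ) :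
    |(|((k : ℝ) + 1) / n - s| ^ (2 * ν) - |(k : ℝ) / n - s| ^ (2 * ν))| ≤
      ((n : ℝ) ^ (2 * ν))⁻¹ := by
  refine (abs_rpow_sub_rpow_le (by linarith) hν1 _ _).trans ?_
  have : ((k : ℝ) + 1) / n - s - (k / n - s) = 1 / n := by ring
  rw [this, abs_nat_div_rpow]
  simp

/-- A normalised increment has covariance at most `n ^ (-ν)` with any increment of `x`; the
exponent `2 * ν ≤ 1` makes `t ↦ t ^ (2 * ν)` subadditive. -/
lemma IsFBM.abs_cov_Gi_incr_le (hx : IsFBM P ν x) (hν : 0 < ν) (hν1 : 2 * ν ≤ 1) {n k : ℕ}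
    (hk : k < n) {s t : ℝ} (hs : s ∈ Set.Icc (0 : ℝ) 1) (ht : t ∈ Set.Icc (0 : ℝ) 1) :
    |cov[Gi x ν n k, fun ω => x t ω - x s ω; P]| ≤ ((n : ℝ) ^ ν)⁻¹ := by
  have hn : (0 : ℝ) < n := by exact_mod_cast (by omega : 0 < n)
  have hnν : 0 < (n : ℝ) ^ ν := Real.rpow_pos_of_pos hn _
  rw [hx.cov_Gi_incr hν hk hs ht, abs_mul, abs_of_pos (by positivity)]
  have h1 := abs_cell_le hν hν1 n k s
  have h2 := abs_cell_le hν hν1 n k t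
  have h3 := abs_sub (|((k : ℝ) + 1) / n - s| ^ (2 * ν) - |(k : ℝ) / n - s| ^ (2 * ν))
    (|((k : ℝ) + 1) / n - t| ^ (2 * ν) - |(k : ℝ) / n - t| ^ (2 * ν))
  have e : (n : ℝ) ^ (2 * ν) = n ^ ν * n ^ ν := by rw [two_mul, Real.rpow_add hn]
  calc _ ≤ (n : ℝ) ^ ν / 2 * (((n : ℝ) ^ (2 * ν))⁻¹ + ((n : ℝ) ^ (2 * ν))⁻¹) := by
        gcongr; linarith
    _ = _ := by rw [e]; field_simp; ring

end

/-! ### Summability of the correlations -/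

section

variable {P : Measure Ω} {ν : ℝ} {x : ℝ → Ω → ℝ}

/-- Disjoint increments are negatively correlated, by concavity of `t ↦ t ^ (2 * ν)`. -/
lemma rho_nonpos (hν : 0 < ν) (hν1 : 2 * ν ≤ 1) (k : ℕ) : rho ν ((k + 1 : ℕ) : ℤ) ≤ 0 := by
  have hc : ConcaveOn ℝ (Set.Ici 0) fun x : ℝ => x ^ (2 * ν) :=
    Real.concaveOn_rpow (by linarith) hν1
  have h := hc.2 (Set.mem_Ici.2 (by positivity : (0 : ℝ) ≤ k + 2))
    (Set.mem_Ici.2 (by positivity : (0 : ℝ) ≤ k))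
    (by norm_num : (0 : ℝ) ≤ 1 / 2) (by norm_num : (0 : ℝ) ≤ 1 / 2) (by norm_num)
  simp only [smul_eq_mul] at h
  have e : 1 / 2 * ((k : ℝ) + 2) + 1 / 2 * k = k + 1 := by ring
  rw [e] at h
  unfold rho
  push_cast
  rw [abs_of_nonneg (by positivity : (0 : ℝ) ≤ k + 1 + 1), abs_of_nonneg (by simp : (0:ℝ) ≤ k + 1 - 1),
    abs_of_nonneg (by positivity : (0 : ℝ) ≤ k + 1)]
  have e1 : (k : ℝ) + 1 + 1 = k + 2 := by ring
  have e2 : (k : ℝ) + 1 - 1 = k := by ring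
  rw [e1, e2]
  linarith

/-- The correlations telescope, which together with `rho_nonpos` gives their summability. -/
lemma rho_sum (N : ℕ) (hν : 0 < ν) : ∑ k ∈ Finset.range N, rho ν ((k + 1 : ℕ) : ℤ) =
    (((N : ℝ) + 1) ^ (2 * ν) - (N : ℝ) ^ (2 * ν) - 1) / 2 := by
  induction N with
  | zero => simp [Real.zero_rpow (by linarith : 2 * ν ≠ 0)]
  | succ N ih =>
    rw [Finset.sum_range_succ, ih]
    unfold rho
    push_cast
    rw [abs_of_nonneg (by positivity : (0 : ℝ) ≤ N + 1 + 1),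
      abs_of_nonneg (by simp : (0:ℝ) ≤ N + 1 - 1), abs_of_nonneg (by positivity : (0 : ℝ) ≤ N + 1)]
    have e2 : (N : ℝ) + 1 - 1 = N := by ring
    rw [e2]
    ring

lemma summable_rho (hν : 0 < ν) (hν1 : 2 * ν ≤ 1) : Summable fun k : ℤ => |rho ν k| := by
  have h1 : Summable fun k : ℕ => |rho ν ((k + 1 : ℕ) : ℤ)| := by
    refine summable_of_sum_range_le (c := 1 / 2) (fun _ => abs_nonneg _) fun N => ?_
    have e : ∑ k ∈ Finset.range N, |rho ν ((k + 1 : ℕ) : ℤ)| =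
        -∑ k ∈ Finset.range N, rho ν ((k + 1 : ℕ) : ℤ) := by
      rw [← Finset.sum_neg_distrib]
      exact Finset.sum_congr rfl fun k _ => abs_of_nonpos (rho_nonpos hν hν1 k)
    rw [e, rho_sum N hν]
    have : (N : ℝ) ^ (2 * ν) ≤ ((N : ℝ) + 1) ^ (2 * ν) :=
      Real.rpow_le_rpow (by positivity) (by linarith) (by linarith)
    linarith
  have h2 : Summable fun k : ℕ => |rho ν (k : ℤ)| := (summable_nat_add_iff 1).1 h1
  refine Summable.of_nat_of_neg h2 ?_
  simpa [rho_neg] using h2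

lemma sum_rho_le (hν : 0 < ν) (hν1 : 2 * ν ≤ 1) (s : Finset ℕ) (k : ℤ) :
    ∑ l ∈ s, |rho ν (k - l)| ≤ ∑' j : ℤ, |rho ν j| := by
  have hinj : Function.Injective fun l : ℕ => k - (l : ℤ) := fun a b h => by
    simpa using h
  have := (summable_rho hν hν1).sum_le_tsum (s.map ⟨_, hinj⟩) (fun _ _ => abs_nonneg _)
  simpa using this

lemma sum_rho_le' (hν : 0 < ν) (hν1 : 2 * ν ≤ 1) (s : Finset ℕ) (k : ℤ) :
    ∑ l ∈ s, |rho ν (l - k)| ≤ ∑' j : ℤ, |rho ν j| := by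
  refine le_trans (Finset.sum_le_sum fun l _ => ?_) (sum_rho_le hν hν1 s k)
  rw [← rho_neg, neg_sub]

/-! ### Correlations between cells and long increments -/

/-- Total variation of `t ↦ |t - s|^{2ν}` along the partition. -/
lemma sum_cell_le (hν : 0 < ν) {s : ℝ} (hs : s ∈ Set.Icc (0 : ℝ) 1) (n : ℕ) (I : Finset ℕ)
    (hI : I ⊆ Finset.range n) :
    ∑ k ∈ I, |(|((k : ℝ) + 1) / n - s| ^ (2 * ν) - |(k : ℝ) / n - s| ^ (2 * ν))| ≤ 2 := by
  rcases Nat.eq_zero_or_pos n with rfl | hn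
  · have : I = ∅ := by simpa using hI
    simp [this]
  have hn' : (0 : ℝ) < n := by exact_mod_cast hn
  set f : ℝ → ℝ := fun t => (max (t - s) 0) ^ (2 * ν) with hf
  set g : ℝ → ℝ := fun t => (max (s - t) 0) ^ (2 * ν) with hg
  have h0 : (0 : ℝ) ^ (2 * ν) = 0 := Real.zero_rpow (by linarith)
  have hfg : ∀ t, |t - s| ^ (2 * ν) = f t + g t := by
    intro t
    rcases le_total s t with h | h
    · simp [hf, hg, max_eq_left (sub_nonneg.2 h), max_eq_right (sub_nonpos.2 h), h0,
        abs_of_nonneg (sub_nonneg.2 h)]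
    · simp [hf, hg, max_eq_left (sub_nonneg.2 h), max_eq_right (sub_nonpos.2 h), h0,
        abs_of_nonpos (sub_nonpos.2 h)]
  have hfm : Monotone f := fun a b hab =>
    Real.rpow_le_rpow (le_max_right _ _) (max_le_max (by linarith) le_rfl) (by linarith)
  have hgm : Antitone g := fun a b hab =>
    Real.rpow_le_rpow (le_max_right _ _) (max_le_max (by linarith) le_rfl) (by linarith)
  have hb : ∀ r : ℝ, r ≤ 1 → (max r 0) ^ (2 * ν) ≤ 1 := fun r hr =>
    Real.rpow_le_one (le_max_right _ _) (max_le hr zero_le_one) (by linarith)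
  have hnn : ∀ r : ℝ, 0 ≤ (max r 0) ^ (2 * ν) := fun r => Real.rpow_nonneg (le_max_right _ _) _
  calc _ ≤ ∑ k ∈ Finset.range n,
        |(|((k : ℝ) + 1) / n - s| ^ (2 * ν) - |(k : ℝ) / n - s| ^ (2 * ν))| :=
        Finset.sum_le_sum_of_subset_of_nonneg hI fun _ _ _ => abs_nonneg _
    _ ≤ ∑ k ∈ Finset.range n, ((f (((k + 1 : ℕ) : ℝ) / n) - g (((k + 1 : ℕ) : ℝ) / n)) -
        (f ((k : ℝ) / n) - g ((k : ℝ) / n))) := by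
        refine Finset.sum_le_sum fun k _ => ?_
        have hle : (k : ℝ) / n ≤ ((k : ℝ) + 1) / n := by gcongr; linarith
        have h1 := hfm hle
        have h2 := hgm hle
        rw [hfg, hfg]
        push_cast
        rw [abs_le]
        constructor <;> linarith
    _ ≤ 2 := by
        rw [Finset.sum_range_sub (fun k : ℕ => f ((k : ℝ) / n) - g ((k : ℝ) / n))]
        rw [div_self hn'.ne']
        have h1 : f 1 ≤ 1 := hb _ (by linarith [hs.1])
        have h2 : g ((0 : ℕ) / n) ≤ 1 := hb _ (by simpa using hs.2)
        have h3 : 0 ≤ g 1 := hnn _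
        have h4 : 0 ≤ f ((0 : ℕ) / n) := hnn _
        linarith

lemma rpow_two_mul' (n : ℕ) (hn : 0 < n) : (n : ℝ) ^ (2 * ν) = n ^ ν * n ^ ν := by
  rw [two_mul, Real.rpow_add (by exact_mod_cast hn)]

/-- The covariances of all normalised increments with a fixed increment sum up to order `n ^ ν`
only, instead of the order `n ^ (1 - ν)` given by the termwise bound. -/
lemma IsFBM.sum_cov_Gi_incr_le (hx : IsFBM P ν x) (hν : 0 < ν) {n : ℕ} {I : Finset ℕ}
    (hI : I ⊆ Finset.range n) {s t : ℝ} (hs : s ∈ Set.Icc (0 : ℝ) 1)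
    (ht : t ∈ Set.Icc (0 : ℝ) 1) :
    ∑ k ∈ I, |cov[Gi x ν n k, fun ω => x t ω - x s ω; P]| ≤ 2 * (n : ℝ) ^ ν := by
  calc _ ≤ ∑ k ∈ I, ((n : ℝ) ^ ν / 2 *
        |(|((k : ℝ) + 1) / n - s| ^ (2 * ν) - |(k : ℝ) / n - s| ^ (2 * ν))| + (n : ℝ) ^ ν / 2 *
        |(|((k : ℝ) + 1) / n - t| ^ (2 * ν) - |(k : ℝ) / n - t| ^ (2 * ν))|) := by
        refine Finset.sum_le_sum fun k hk => ?_
        rw [hx.cov_Gi_incr hν (Finset.mem_range.1 (hI hk)) hs ht, abs_mul,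
          abs_of_nonneg (by positivity), ← mul_add]
        gcongr
        exact abs_sub _ _
    _ ≤ (n : ℝ) ^ ν / 2 * 2 + (n : ℝ) ^ ν / 2 * 2 := by
        rw [Finset.sum_add_distrib, ← Finset.mul_sum, ← Finset.mul_sum]
        gcongr <;> exact sum_cell_le hν ‹_› n I hI
    _ = _ := by ring

/-- The covariance of a normalised increment with the increment of the path from `s` up to its
left endpoint is `-n ^ (-ν) / 2` up to a difference of consecutive values of `|· - s| ^ (2 * ν)`,
which telescopes along the partition. This `-1/2` is the origin of the factor `(-1/2) ^ q`. -/
lemma IsFBM.cov_Gi_base (hx : IsFBM P ν x) (hν : 0 < ν) {n k : ℕ} (hk : k < n) {s : ℝ}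
    (hs : s ∈ Set.Icc (0 : ℝ) 1) :
    (n : ℝ) ^ ν * cov[Gi x ν n k, fun ω => x ((k : ℝ) / n) ω - x s ω; P] + 1 / 2 =
      (n : ℝ) ^ (2 * ν) / 2 * (|((k : ℝ) + 1) / n - s| ^ (2 * ν) - |(k : ℝ) / n - s| ^ (2 * ν)) := by
  have hn : (0 : ℝ) < n := by exact_mod_cast (by omega : 0 < n)
  rw [hx.cov_Gi_incr hν hk hs (grid_mem hk.le), rpow_two_mul' n (by omega)]
  have e : ((k : ℝ) + 1) / n - k / n = 1 / n := by ring
  rw [e, sub_self, abs_zero, Real.zero_rpow (by linarith), abs_nat_div_rpow,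
    rpow_two_mul' n (by omega)]
  have := (Real.rpow_pos_of_pos hn ν).ne'
  simp only [abs_one, Real.one_rpow]
  field_simp
  ring

lemma IsFBM.sum_base_le (hx : IsFBM P ν x) (hν : 0 < ν) {n : ℕ} {I : Finset ℕ}
    (hI : I ⊆ Finset.range n) {s : ℝ} (hs : s ∈ Set.Icc (0 : ℝ) 1) :
    ∑ k ∈ I, |(n : ℝ) ^ ν * cov[Gi x ν n k, fun ω => x ((k : ℝ) / n) ω - x s ω; P] + 1 / 2| ≤
      (n : ℝ) ^ (2 * ν) := by
  calc _ = (n : ℝ) ^ (2 * ν) / 2 * ∑ k ∈ I,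
        |(|((k : ℝ) + 1) / n - s| ^ (2 * ν) - |(k : ℝ) / n - s| ^ (2 * ν))| := by
        rw [Finset.mul_sum]
        refine Finset.sum_congr rfl fun k hk => ?_
        rw [hx.cov_Gi_base hν (Finset.mem_range.1 (hI hk)) hs, abs_mul,
          abs_of_nonneg (by positivity)]
    _ ≤ (n : ℝ) ^ (2 * ν) / 2 * 2 := by
        gcongr; exact sum_cell_le hν hs n I hI
    _ = _ := by ring

end

/-! ### Second moments of weighted Hermite sums -/

section

variable {P : Measure Ω} {S : Set (Ω → ℝ)}

lemma CG.int_mom (hS : CG P S) {u w G G' : Ω → ℝ} (hu : u ∈ S) (hw : w ∈ S) (hG : G ∈ S)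
    (hG' : G' ∈ S) (a b p r : ℕ) :
    Integrable (fun ω => u ω ^ a * w ω ^ b * (Hq p (G ω) * Hq r (G' ω))) P := by
  have hV : ∀ i, (![u, w, G, G'] : Fin 4 → Ω → ℝ) i ∈ S := by intro i; fin_cases i <;> assumption
  exact hS.integrable hV ((((PG.eval 0).pow a).mul ((PG.eval 1).pow b)).mul
    (((PG_Hq p).comp (PG.eval 2)).mul ((PG_Hq r).comp (PG.eval 3))))

lemma CG.mom_single (hS : CG P S) {u G : Ω → ℝ} (hu : u ∈ S) (hG : G ∈ S)
    (hv : cov[G, G; P] = 1) (p : ℕ) :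
    ∫ ω, u ω ^ p * Hq p (G ω) ∂P = p.factorial * cov[G, u; P] ^ p := by
  have key : ∀ p, mom P u u G G p 0 p 0 = p.factorial * cov[G, u; P] ^ p := by
    have := (hS.gauss hu).isProbabilityMeasure
    intro p
    induction p with
    | zero => simp [mom, Hq_zero]
    | succ p ih =>
      rw [hS.mom_succ hu hu hG hG hv]
      simp only [Nat.add_sub_cancel, ih, Nat.factorial_succ]
      push_cast
      ring
  rw [← key]
  simp [mom, Hq_zero]

/-- Leading terms of the mixed moment of two weighted Hermite variables: the diagonal pairing of the
two Hermite factors, and, in top degree, the pairing of each factor with its own weight. -/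
lemma mom_pair (P : Measure Ω) (S : Set (Ω → ℝ)) (p : ℕ) : ∃ C : ℝ, 0 ≤ C ∧
    ∀ {u w G G' : Ω → ℝ} {γ : ℝ}, CG P S → u ∈ S → w ∈ S → G ∈ S → G' ∈ S →
      cov[u, u; P] ≤ 1 → cov[w, w; P] ≤ 1 → cov[G, G; P] = 1 → cov[G', G'; P] = 1 →
      γ ≤ 1 → |cov[G, u; P]| ≤ γ → |cov[G, w; P]| ≤ γ → |cov[G', u; P]| ≤ γ →
      |cov[G', w; P]| ≤ γ → ∀ i ≤ p + 1,
      |mom P u w G G' i i (p + 1) (p + 1) -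
        (p + 1).factorial * cov[G, G'; P] ^ (p + 1) * ∫ ω, u ω ^ i * w ω ^ i ∂P -
        (if i = p + 1 then ((p + 1).factorial : ℝ) ^ 2 * cov[G, u; P] ^ (p + 1) *
          cov[G', w; P] ^ (p + 1) else 0)| ≤
      C * (γ * |cov[G, G'; P]| + |cov[G, w; P]| * γ ^ (2 * p + 1)) := by
  obtain ⟨B, hB0, hB⟩ := moment_le P S (2 * p + 2)
  obtain ⟨C₁, hC₁, h₁⟩ := mom_main (2 * p + 2) B hB0 (p + 1) (p + 1)
  obtain ⟨C₂, hC₂, h₂⟩ := mom0_top B p (p + 1)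
  refine ⟨C₁ + C₂, by positivity, ?_⟩
  intro u w G G' γ hS hu hw hG hG' hu1 hw1 hv hv' hγ c1 c2 c3 c4 i hi
  have hγ0 : 0 ≤ γ := (abs_nonneg _).trans c1
  have hprob := (hS.gauss hu).isProbabilityMeasure
  set M : ℕ → ℕ → ℕ → ℕ → ℝ := fun p r a b => mom P u w G G' a b p r with hM
  have hM00 : ∀ a b, M 0 0 a b = ∫ ω, u ω ^ a * w ω ^ b ∂P := by
    intro a b; simp [hM, mom, Hq_zero]
  have hMB : ∀ a b, a ≤ 2 * p + 2 → b ≤ 2 * p + 2 → |M 0 0 a b| ≤ B := by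
    intro a b ha hb
    rw [hM00]
    exact abs_integral_le_integral_abs.trans (hB hS hu hw hu1 hw1 a b ha hb)
  have e1 := h₁ _ _ _ _ _ γ M (hS.momRec hu hw hG hG' hv hv') c1 c2 c3 c4 hγ
    (hS.abs_cov_le_one hG hG' hv hv') hMB (by omega) i i (by omega) (by omega)
  rw [if_pos rfl, hM00 i i] at e1
  have e2 : |mom0 cov[G, u; P] cov[G, w; P] cov[G', u; P] cov[G', w; P] (M 0 0)
      (p + 1) (p + 1) i i - (if i = p + 1 then ((p + 1).factorial : ℝ) ^ 2 *
        cov[G, u; P] ^ (p + 1) * cov[G', w; P] ^ (p + 1) else 0)| ≤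
      C₂ * |cov[G, w; P]| * γ ^ (2 * p + 1) := by
    split_ifs with h
    · subst h
      have := h₂ _ _ _ _ γ (M 0 0) c1 c2 c3 c4
        (fun a b ha hb => hMB a b (by omega) (by omega))
      rw [hM00 0 0] at this
      simp only [pow_zero, mul_one, integral_const, probReal_univ, smul_eq_mul] at this
      rw [show 2 * p + 1 = p + (p + 1) by ring, pow_two]
      exact this
    · rw [mom0_eq_zero _ _ _ _ _ _ _ _ _ (by omega), sub_zero, abs_zero]
      positivity
  rw [abs_le] at e1 e2 ⊢
  have hx : 0 ≤ C₂ * (γ * |cov[G, G'; P]|) := by positivity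
  have hy : 0 ≤ C₁ * (|cov[G, w; P]| * γ ^ (2 * p + 1)) := by positivity
  constructor <;> nlinarith [e1.1, e1.2, e2.1, e2.2]

lemma CG.int_prod (hS : CG P S) {u w : Ω → ℝ} (hu : u ∈ S) (hw : w ∈ S) (a b : ℕ) :
    Integrable (fun ω => u ω ^ a * w ω ^ b) P := by
  have hV : ∀ i, (![u, w] : Fin 2 → Ω → ℝ) i ∈ S := by intro i; fin_cases i <;> assumption
  exact hS.integrable hV (((PG.eval 0).pow a).mul ((PG.eval 1).pow b))

lemma mom_abs (P : Measure Ω) (S : Set (Ω → ℝ)) (p : ℕ) : ∃ C : ℝ, 0 ≤ C ∧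
    ∀ {u w G G' : Ω → ℝ} {γ : ℝ}, CG P S → u ∈ S → w ∈ S → G ∈ S → G' ∈ S →
      cov[u, u; P] ≤ 1 → cov[w, w; P] ≤ 1 → cov[G, G; P] = 1 → cov[G', G'; P] = 1 →
      γ ≤ 1 → |cov[G, u; P]| ≤ γ → |cov[G, w; P]| ≤ γ → |cov[G', u; P]| ≤ γ →
      |cov[G', w; P]| ≤ γ → ∀ i ≤ p + 1,
      |mom P u w G G' i i (p + 1) (p + 1)| ≤ C * (|cov[G, G'; P]| + γ ^ (2 * (p + 1))) := by
  obtain ⟨B, hB0, hB⟩ := moment_le P S (p + 1)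
  obtain ⟨C, hC, h⟩ := mom_pair P S p
  refine ⟨C + (p + 1).factorial * B + ((p + 1).factorial : ℝ) ^ 2, by positivity, ?_⟩
  intro u w G G' γ hS hu hw hG hG' hu1 hw1 hv hv' hγ c1 c2 c3 c4 i hi
  have hγ0 : 0 ≤ γ := (abs_nonneg _).trans c1
  have hm := h hS hu hw hG hG' hu1 hw1 hv hv' hγ c1 c2 c3 c4 i hi
  have hρ := hS.abs_cov_le_one hG hG' hv hv'
  set ρ := cov[G, G'; P]
  have t1 : |(p + 1).factorial * ρ ^ (p + 1) * ∫ ω, u ω ^ i * w ω ^ i ∂P| ≤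
      (p + 1).factorial * B * |ρ| := by
    rw [abs_mul, abs_mul, Nat.abs_cast, abs_pow]
    have a1 := abs_integral_le_integral_abs.trans (hB hS hu hw hu1 hw1 i i hi hi)
    have a2 : |ρ| ^ (p + 1) ≤ |ρ| := pow_le_of_le_one (abs_nonneg _) hρ (by omega)
    calc _ ≤ (p + 1).factorial * |ρ| * B := by gcongr
      _ = _ := by ring
  have t2 : |(if i = p + 1 then ((p + 1).factorial : ℝ) ^ 2 * cov[G, u; P] ^ (p + 1) *
          cov[G', w; P] ^ (p + 1) else 0)| ≤ ((p + 1).factorial : ℝ) ^ 2 * γ ^ (2 * (p + 1)) := by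
    split_ifs
    · rw [abs_mul, abs_mul, abs_pow, abs_pow, abs_pow, Nat.abs_cast, mul_assoc]
      have e : γ ^ (2 * (p + 1)) = γ ^ (p + 1) * γ ^ (p + 1) := by rw [← pow_add]; congr 1; ring
      rw [e]
      gcongr
    · rw [abs_zero]; positivity
  have t3 : |cov[G, w; P]| * γ ^ (2 * p + 1) ≤ γ ^ (2 * (p + 1)) := by
    rw [show 2 * (p + 1) = (2 * p + 1) + 1 by ring, pow_succ γ (2 * p + 1), mul_comm]
    gcongr
  have t4 : γ * |ρ| ≤ |ρ| := mul_le_of_le_one_left (abs_nonneg _) hγ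
  have t5 : 0 ≤ γ ^ (2 * (p + 1)) := by positivity
  have t6 : C * (γ * |ρ| + |cov[G, w; P]| * γ ^ (2 * p + 1)) ≤ C * (|ρ| + γ ^ (2 * (p + 1))) := by
    gcongr
  have t7 : 0 ≤ (p + 1).factorial * B * γ ^ (2 * (p + 1)) := by positivity
  have t8 : 0 ≤ ((p + 1).factorial : ℝ) ^ 2 * |ρ| := by positivity
  rw [abs_le] at hm t1 t2 ⊢
  constructor <;> nlinarith [hm.1, hm.2, t1.1, t1.2, t2.1, t2.2]

/-- Second moment of a weighted Hermite sum whose weights are powers of Gaussian variables with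
small correlation to the Hermite arguments. -/
lemma secondA (P : Measure Ω) (S : Set (Ω → ℝ)) (p : ℕ) : ∃ C : ℝ, 0 ≤ C ∧
    ∀ {I : Finset ℕ} {u G : ℕ → Ω → ℝ} {γ A : ℝ}, CG P S → (∀ k ∈ I, u k ∈ S) → (∀ k ∈ I, G k ∈ S) →
      (∀ k ∈ I, cov[u k, u k; P] ≤ 1) → (∀ k ∈ I, cov[G k, G k; P] = 1) → γ ≤ 1 →
      (∀ k ∈ I, ∀ l ∈ I, |cov[G k, u l; P]| ≤ γ) →
      (∀ k ∈ I, ∑ l ∈ I, |cov[G k, G l; P]| ≤ A) → ∀ i ≤ p + 1,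
      ∫ ω, (∑ k ∈ I, u k ω ^ i * Hq (p + 1) (G k ω)) ^ 2 ∂P ≤
        C * (I.card * A + I.card ^ 2 * γ ^ (2 * (p + 1))) := by
  obtain ⟨C, hC, h⟩ := mom_abs P S p
  refine ⟨C, hC, ?_⟩
  intro I u G γ A hS hu hG hu1 hv hγ hc hA i hi
  have e : ∀ ω, (∑ k ∈ I, u k ω ^ i * Hq (p + 1) (G k ω)) ^ 2 = ∑ k ∈ I, ∑ l ∈ I,
      u k ω ^ i * u l ω ^ i * (Hq (p + 1) (G k ω) * Hq (p + 1) (G l ω)) := by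
    intro ω
    rw [pow_two, Finset.sum_mul_sum]
    refine Finset.sum_congr rfl fun k _ => Finset.sum_congr rfl fun l _ => by ring
  simp only [e]
  have hint : ∀ k ∈ I, ∀ l ∈ I, Integrable (fun ω => u k ω ^ i * u l ω ^ i *
      (Hq (p + 1) (G k ω) * Hq (p + 1) (G l ω))) P := fun k hk l hl =>
    hS.int_mom (hu k hk) (hu l hl) (hG k hk) (hG l hl) _ _ _ _
  rw [integral_finsetSum _ fun k hk => integrable_finsetSum _ fun l hl => hint k hk l hl]
  calc _ ≤ ∑ k ∈ I, ∑ l ∈ I, C * (|cov[G k, G l; P]| + γ ^ (2 * (p + 1))) := by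
        refine Finset.sum_le_sum fun k hk => ?_
        rw [integral_finsetSum _ fun l hl => hint k hk l hl]
        refine Finset.sum_le_sum fun l hl => (le_abs_self _).trans ?_
        exact h hS (hu k hk) (hu l hl) (hG k hk) (hG l hl) (hu1 k hk) (hu1 l hl) (hv k hk)
          (hv l hl) hγ (hc k hk k hk) (hc k hk l hl) (hc l hl k hk) (hc l hl l hl) i hi
    _ ≤ ∑ k ∈ I, C * (A + I.card * γ ^ (2 * (p + 1))) := by
        refine Finset.sum_le_sum fun k hk => ?_
        rw [← Finset.mul_sum, Finset.sum_add_distrib]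
        gcongr
        · exact hA k hk
        · simp
    _ = _ := by rw [Finset.sum_const, nsmul_eq_mul]; ring

lemma abs_pow_sub_pow_le' (a b : ℝ) (i : ℕ) :
    |a ^ (i + 1) - b ^ (i + 1)| ≤ (i + 1) * |a - b| * (|a| ^ i + |b| ^ i) := by
  have h := (Commute.all a b).geom_sum₂_mul (i + 1)
  rw [← h, abs_mul, mul_comm, mul_comm ((i : ℝ) + 1), mul_assoc]
  gcongr
  refine (Finset.abs_sum_le_sum_abs _ _).trans ?_
  calc _ ≤ ∑ j ∈ Finset.range (i + 1), (|a| ^ i + |b| ^ i) := by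
        refine Finset.sum_le_sum fun j hj => ?_
        have hj' : j ≤ i := by simpa [Nat.lt_succ_iff] using hj
        rw [abs_mul, abs_pow, abs_pow, Nat.add_sub_cancel]
        set M := max |a| |b|
        have hM : 0 ≤ M := (abs_nonneg a).trans (le_max_left _ _)
        calc _ ≤ M ^ j * M ^ (i - j) := by
              gcongr
              · exact le_max_left _ _
              · exact le_max_right _ _
          _ = M ^ i := by rw [← pow_add]; congr 1; omega
          _ ≤ _ := by
              rcases max_choice |a| |b| with h | h <;> simp only [M, h]
              · have : 0 ≤ |b| ^ i := by positivity
                linarith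
              · have : 0 ≤ |a| ^ i := by positivity
                linarith
    _ = _ := by simp; ring

/-- Powers of nearby Gaussian variables are close in mean square. -/
lemma sq_pow_sub_pow (P : Measure Ω) (S : Set (Ω → ℝ)) (q : ℕ) : ∃ C : ℝ, 0 ≤ C ∧
    ∀ {u v z : Ω → ℝ} {δ : ℝ}, CG P S → u ∈ S → v ∈ S → z ∈ S →
      cov[u, u; P] ≤ 1 → cov[v, v; P] ≤ 1 → cov[z, z; P] ≤ 1 →
      (∀ ω, u ω - v ω = δ * z ω) → ∀ i ≤ q,
      ∫ ω, (u ω ^ i - v ω ^ i) ^ 2 ∂P ≤ C * δ ^ 2 := by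
  obtain ⟨B, hB0, hB⟩ := moment_le P S (2 * q + 2)
  refine ⟨4 * (q + 1) ^ 2 * B, by positivity, ?_⟩
  intro u v z δ hS hu hv hz hu1 hv1 hz1 huv i hi
  rcases i with _ | i
  · simp; positivity
  have hb : ∀ w ∈ S, cov[w, w; P] ≤ 1 → ∫ ω, z ω ^ 2 * w ω ^ (2 * i) ∂P ≤ B := fun w hw hw1 =>
    (le_abs_self _).trans (abs_integral_le_integral_abs.trans
      (hB hS hz hw hz1 hw1 _ _ (by omega) (by omega)))
  have hint : Integrable (fun ω => (u ω ^ (i + 1) - v ω ^ (i + 1)) ^ 2) P := by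
    have := ((hS.int_prod hu hv (2 * (i + 1)) 0).sub
      ((hS.int_prod hu hv (i + 1) (i + 1)).const_mul 2)).add (hS.int_prod hu hv 0 (2 * (i + 1)))
    refine this.congr (ae_of_all _ fun ω => ?_)
    simp only [Pi.add_apply, Pi.sub_apply]
    ring
  calc _ ≤ ∫ ω, (2 * (q + 1) ^ 2 * δ ^ 2 * (z ω ^ 2 * u ω ^ (2 * i)) +
        2 * (q + 1) ^ 2 * δ ^ 2 * (z ω ^ 2 * v ω ^ (2 * i))) ∂P := by
        refine integral_mono hint (((hS.int_prod hz hu 2 (2 * i)).const_mul _).add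
          ((hS.int_prod hz hv 2 (2 * i)).const_mul _)) fun ω => ?_
        have h := abs_pow_sub_pow_le' (u ω) (v ω) i
        have h2 : |u ω ^ (i + 1) - v ω ^ (i + 1)| ≤
            (q + 1) * |δ * z ω| * (|u ω| ^ i + |v ω| ^ i) := by
          rw [← huv]
          refine h.trans ?_
          gcongr
          omega
        have h3 := pow_le_pow_left₀ (abs_nonneg _) h2 2
        rw [sq_abs, mul_pow, mul_pow, sq_abs] at h3
        have h4 : (|u ω| ^ i + |v ω| ^ i) ^ 2 ≤ 2 * (u ω ^ (2 * i) + v ω ^ (2 * i)) := by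
          have e : ∀ a : ℝ, a ^ (2 * i) = (|a| ^ i) ^ 2 := fun a => by
            rw [← pow_mul, mul_comm i 2, pow_mul, pow_mul, sq_abs]
          rw [e, e]
          nlinarith [sq_nonneg (|u ω| ^ i - |v ω| ^ i)]
        calc _ ≤ _ := h3
          _ ≤ ((q : ℝ) + 1) ^ 2 * (δ * z ω) ^ 2 * (2 * (u ω ^ (2 * i) + v ω ^ (2 * i))) := by
            gcongr
          _ = _ := by ring
    _ ≤ 2 * (q + 1) ^ 2 * δ ^ 2 * B + 2 * (q + 1) ^ 2 * δ ^ 2 * B := by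
        rw [integral_add ((hS.int_prod hz hu 2 (2 * i)).const_mul _)
          ((hS.int_prod hz hv 2 (2 * i)).const_mul _), integral_const_mul, integral_const_mul]
        gcongr
        · exact hb u hu hu1
        · exact hb v hv hv1
    _ = _ := by ring

/-- Replacing the weights `u k` by nearby weights `v k` in a weighted Hermite sum: the mean square
distance of the difference to the constant `e` (to zero below the top degree). -/
lemma secondE (P : Measure Ω) (S : Set (Ω → ℝ)) (p : ℕ) : ∃ C : ℝ, 0 ≤ C ∧
    ∀ {I : Finset ℕ} {u v z G : ℕ → Ω → ℝ} {γ A δ : ℝ}, CG P S → (∀ k ∈ I, u k ∈ S) →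
      (∀ k ∈ I, v k ∈ S) → (∀ k ∈ I, z k ∈ S) → (∀ k ∈ I, G k ∈ S) →
      (∀ k ∈ I, cov[u k, u k; P] ≤ 1) → (∀ k ∈ I, cov[v k, v k; P] ≤ 1) →
      (∀ k ∈ I, cov[z k, z k; P] ≤ 1) → (∀ k ∈ I, cov[G k, G k; P] = 1) →
      (∀ k ∈ I, ∀ ω, u k ω - v k ω = δ * z k ω) → 0 ≤ γ → γ ≤ 1 →
      (∀ k ∈ I, ∀ l ∈ I, |cov[G k, u l; P]| ≤ γ) → (∀ k ∈ I, ∀ l ∈ I, |cov[G k, v l; P]| ≤ γ) →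
      (∀ k ∈ I, ∑ l ∈ I, |cov[G k, G l; P]| ≤ A) → ∀ i ≤ p + 1, ∀ e : ℝ,
      ∫ ω, ((∑ k ∈ I, (u k ω ^ i - v k ω ^ i) * Hq (p + 1) (G k ω)) -
          if i = p + 1 then e else 0) ^ 2 ∂P ≤
        C * (I.card * A * (δ ^ 2 + γ) + γ ^ (2 * p + 1) *
          ∑ k ∈ I, ∑ l ∈ I, (|cov[G k, u l; P]| + |cov[G k, v l; P]|)) +
        ((p + 1).factorial * ∑ k ∈ I, (cov[G k, u k; P] ^ (p + 1) - cov[G k, v k; P] ^ (p + 1)) -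
          e) ^ 2 := by
  obtain ⟨C₁, hC₁, h₁⟩ := mom_pair P S p
  obtain ⟨C₂, hC₂, h₂⟩ := sq_pow_sub_pow P S (p + 1)
  refine ⟨4 * C₁ + (p + 1).factorial * C₂, by positivity, ?_⟩
  intro I u v z G γ A δ hS hu hv hz hG hu1 hv1 hz1 hG1 huv hγ0 hγ cu cv hA i hi e
  by_cases hI : I = ∅
  · subst hI
    rcases eq_or_ne i (p + 1) with h | h
    · simp only [h, if_true, Finset.sum_empty, zero_sub, mul_zero, add_zero, Finset.card_empty,
        neg_sq, Nat.cast_zero, zero_mul, integral_const, smul_eq_mul]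
      rw [zero_add]
      refine mul_le_of_le_one_left (sq_nonneg e) ?_
      rcases hS PEmpty (fun i => i.elim) (fun i => i.elim) with ⟨hg, -⟩
      have := hg.isProbabilityMeasure
      simp
    · simp only [h, if_false, Finset.sum_empty, sub_zero, mul_zero, zero_sub]
      have := sq_nonneg e
      simpa using this
  obtain ⟨k₀, hk₀⟩ := Finset.nonempty_iff_ne_empty.2 hI
  have hprob := (hS.gauss (hu k₀ hk₀)).isProbabilityMeasure
  set F : ℝ := (((p + 1).factorial : ℕ) : ℝ) with hF
  set D : ℕ → Ω → ℝ := fun k ω => (u k ω ^ i - v k ω ^ i) * Hq (p + 1) (G k ω) with hD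
  set c : ℕ → ℝ := fun k => if i = p + 1 then
    F * (cov[G k, u k; P] ^ (p + 1) - cov[G k, v k; P] ^ (p + 1)) else 0 with hc
  have i4 : ∀ a ∈ S, ∀ b ∈ S, ∀ k ∈ I, ∀ l ∈ I, Integrable (fun ω => a ω ^ i * b ω ^ i *
      (Hq (p + 1) (G k ω) * Hq (p + 1) (G l ω))) P := fun a ha b hb k hk l hl =>
    hS.int_mom ha hb (hG k hk) (hG l hl) _ _ _ _
  have eDD : ∀ k l, (fun ω => D k ω * D l ω) = fun ω =>
      (u k ω ^ i * u l ω ^ i * (Hq (p + 1) (G k ω) * Hq (p + 1) (G l ω)) -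
      u k ω ^ i * v l ω ^ i * (Hq (p + 1) (G k ω) * Hq (p + 1) (G l ω))) -
      (v k ω ^ i * u l ω ^ i * (Hq (p + 1) (G k ω) * Hq (p + 1) (G l ω)) -
      v k ω ^ i * v l ω ^ i * (Hq (p + 1) (G k ω) * Hq (p + 1) (G l ω))) := by
    intro k l; funext ω; simp only [hD]; ring
  have iDD : ∀ k ∈ I, ∀ l ∈ I, Integrable (fun ω => D k ω * D l ω) P := by
    intro k hk l hl
    rw [eDD]
    exact ((i4 _ (hu k hk) _ (hu l hl) k hk l hl).sub (i4 _ (hu k hk) _ (hv l hl) k hk l hl)).sub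
      ((i4 _ (hv k hk) _ (hu l hl) k hk l hl).sub (i4 _ (hv k hk) _ (hv l hl) k hk l hl))
  have iD1 : ∀ a ∈ S, ∀ k ∈ I, Integrable (fun ω => a ω ^ i * Hq (p + 1) (G k ω)) P := by
    intro a ha k hk
    have := hS.int_mom ha ha (hG k hk) (hG k hk) i 0 (p + 1) 0
    simpa [Hq_zero] using this
  have eD : ∀ k, D k = fun ω => u k ω ^ i * Hq (p + 1) (G k ω) - v k ω ^ i * Hq (p + 1) (G k ω) := by
    intro k; funext ω; simp only [hD]; ring
  have iD : ∀ k ∈ I, Integrable (D k) P := by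
    intro k hk
    rw [eD]
    exact (iD1 _ (hu k hk) k hk).sub (iD1 _ (hv k hk) k hk)
  have ip : ∀ a ∈ S, ∀ b ∈ S, Integrable (fun ω => a ω ^ i * b ω ^ i) P := fun a ha b hb =>
    hS.int_prod ha hb i i
  have hDsq : ∀ k ∈ I, Integrable (fun ω => (u k ω ^ i - v k ω ^ i) ^ 2) P := by
    intro k hk
    have := ((ip _ (hu k hk) _ (hu k hk)).sub ((ip _ (hu k hk) _ (hv k hk)).const_mul 2)).add
      (ip _ (hv k hk) _ (hv k hk))
    refine this.congr (ae_of_all _ fun ω => ?_)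
    simp only [Pi.add_apply, Pi.sub_apply]
    ring
  -- the second moments
  have main : ∀ k ∈ I, ∀ l ∈ I, ∫ ω, D k ω * D l ω ∂P ≤ c k * c l +
      F * C₂ * δ ^ 2 * |cov[G k, G l; P]| + C₁ * (4 * (γ * |cov[G k, G l; P]|) +
        2 * (γ ^ (2 * p + 1) * (|cov[G k, u l; P]| + |cov[G k, v l; P]|))) := by
    intro k hk l hl
    have m1 := h₁ hS (hu k hk) (hu l hl) (hG k hk) (hG l hl) (hu1 k hk) (hu1 l hl) (hG1 k hk)
      (hG1 l hl) hγ (cu k hk k hk) (cu k hk l hl) (cu l hl k hk) (cu l hl l hl) i hi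
    have m2 := h₁ hS (hu k hk) (hv l hl) (hG k hk) (hG l hl) (hu1 k hk) (hv1 l hl) (hG1 k hk)
      (hG1 l hl) hγ (cu k hk k hk) (cv k hk l hl) (cu l hl k hk) (cv l hl l hl) i hi
    have m3 := h₁ hS (hv k hk) (hu l hl) (hG k hk) (hG l hl) (hv1 k hk) (hu1 l hl) (hG1 k hk)
      (hG1 l hl) hγ (cv k hk k hk) (cu k hk l hl) (cv l hl k hk) (cu l hl l hl) i hi
    have m4 := h₁ hS (hv k hk) (hv l hl) (hG k hk) (hG l hl) (hv1 k hk) (hv1 l hl) (hG1 k hk)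
      (hG1 l hl) hγ (cv k hk k hk) (cv k hk l hl) (cv l hl k hk) (cv l hl l hl) i hi
    have hρ := hS.abs_cov_le_one (hG k hk) (hG l hl) (hG1 k hk) (hG1 l hl)
    have i1 : ∫ ω, D k ω * D l ω ∂P = (mom P (u k) (u l) (G k) (G l) i i (p + 1) (p + 1) -
        mom P (u k) (v l) (G k) (G l) i i (p + 1) (p + 1)) -
        (mom P (v k) (u l) (G k) (G l) i i (p + 1) (p + 1) -
        mom P (v k) (v l) (G k) (G l) i i (p + 1) (p + 1)) := by
      rw [eDD, integral_sub, integral_sub, integral_sub]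
      · rfl
      · exact i4 _ (hv k hk) _ (hu l hl) k hk l hl
      · exact i4 _ (hv k hk) _ (hv l hl) k hk l hl
      · exact i4 _ (hu k hk) _ (hu l hl) k hk l hl
      · exact i4 _ (hu k hk) _ (hv l hl) k hk l hl
      · exact (i4 _ (hu k hk) _ (hu l hl) k hk l hl).sub (i4 _ (hu k hk) _ (hv l hl) k hk l hl)
      · exact (i4 _ (hv k hk) _ (hu l hl) k hk l hl).sub (i4 _ (hv k hk) _ (hv l hl) k hk l hl)
    have i2 : ∫ ω, (u k ω ^ i - v k ω ^ i) * (u l ω ^ i - v l ω ^ i) ∂P =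
        (∫ ω, u k ω ^ i * u l ω ^ i ∂P - ∫ ω, u k ω ^ i * v l ω ^ i ∂P) -
        (∫ ω, v k ω ^ i * u l ω ^ i ∂P - ∫ ω, v k ω ^ i * v l ω ^ i ∂P) := by
      rw [← integral_sub, ← integral_sub, ← integral_sub]
      · congr 1; funext ω; ring
      · exact (ip _ (hu k hk) _ (hu l hl)).sub (ip _ (hu k hk) _ (hv l hl))
      · exact (ip _ (hv k hk) _ (hu l hl)).sub (ip _ (hv k hk) _ (hv l hl))
      · exact ip _ (hv k hk) _ (hu l hl)
      · exact ip _ (hv k hk) _ (hv l hl)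
      · exact ip _ (hu k hk) _ (hu l hl)
      · exact ip _ (hu k hk) _ (hv l hl)
    have i3 : |∫ ω, (u k ω ^ i - v k ω ^ i) * (u l ω ^ i - v l ω ^ i) ∂P| ≤ C₂ * δ ^ 2 := by
      have a1 := h₂ hS (hu k hk) (hv k hk) (hz k hk) (hu1 k hk) (hv1 k hk) (hz1 k hk) (huv k hk) i hi
      have a2 := h₂ hS (hu l hl) (hv l hl) (hz l hl) (hu1 l hl) (hv1 l hl) (hz1 l hl) (huv l hl) i hi
      refine abs_integral_le_integral_abs.trans ?_
      have : ∫ ω, |(u k ω ^ i - v k ω ^ i) * (u l ω ^ i - v l ω ^ i)| ∂P ≤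
          ∫ ω, ((u k ω ^ i - v k ω ^ i) ^ 2 * (1 / 2) +
            (u l ω ^ i - v l ω ^ i) ^ 2 * (1 / 2)) ∂P := by
        refine integral_mono_of_nonneg (ae_of_all _ fun _ => abs_nonneg _)
          (((hDsq k hk).mul_const _).add ((hDsq l hl).mul_const _)) (ae_of_all _ fun ω => ?_)
        simp only [abs_mul]
        rw [← sq_abs (u k ω ^ i - v k ω ^ i), ← sq_abs (u l ω ^ i - v l ω ^ i)]
        nlinarith [sq_nonneg (|u k ω ^ i - v k ω ^ i| - |u l ω ^ i - v l ω ^ i|)]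
      rw [integral_add ((hDsq k hk).mul_const _) ((hDsq l hl).mul_const _), integral_mul_const,
        integral_mul_const] at this
      linarith
    have i5 : F * cov[G k, G l; P] ^ (p + 1) *
        ∫ ω, (u k ω ^ i - v k ω ^ i) * (u l ω ^ i - v l ω ^ i) ∂P ≤
        F * C₂ * δ ^ 2 * |cov[G k, G l; P]| := by
      refine (le_abs_self _).trans ?_
      rw [abs_mul, abs_mul, abs_pow, abs_of_nonneg (by positivity : 0 ≤ F)]
      have a2 : |cov[G k, G l; P]| ^ (p + 1) ≤ |cov[G k, G l; P]| :=
        pow_le_of_le_one (abs_nonneg _) hρ (by omega)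
      calc _ ≤ F * |cov[G k, G l; P]| * (C₂ * δ ^ 2) := by gcongr
        _ = _ := by ring
    have i6 : c k * c l = (if i = p + 1 then F ^ 2 * cov[G k, u k; P] ^ (p + 1) *
          cov[G l, u l; P] ^ (p + 1) else 0) - (if i = p + 1 then F ^ 2 * cov[G k, u k; P] ^ (p + 1) *
          cov[G l, v l; P] ^ (p + 1) else 0) - ((if i = p + 1 then F ^ 2 * cov[G k, v k; P] ^ (p + 1) *
          cov[G l, u l; P] ^ (p + 1) else 0) - (if i = p + 1 then F ^ 2 * cov[G k, v k; P] ^ (p + 1) *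
          cov[G l, v l; P] ^ (p + 1) else 0)) := by
      simp only [hc]
      split_ifs
      · ring
      · ring
    rw [i2] at i5
    rw [i1, i6]
    rw [abs_le] at m1 m2 m3 m4
    linarith [m1.2, m2.1, m3.1, m4.2]
  have mean : ∫ ω, ∑ k ∈ I, D k ω ∂P = ∑ k ∈ I, ∫ ω, D k ω ∂P :=
    integral_finsetSum _ fun k hk => iD k hk
  have mean' : i = p + 1 → ∀ k ∈ I, ∫ ω, D k ω ∂P = c k := by
    intro h k hk
    subst h
    simp only [hc, if_true]
    rw [eD, integral_sub (iD1 _ (hu k hk) k hk) (iD1 _ (hv k hk) k hk),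
      hS.mom_single (hu k hk) (hG k hk) (hG1 k hk), hS.mom_single (hv k hk) (hG k hk) (hG1 k hk)]
    ring
  have isq : Integrable (fun ω => (∑ k ∈ I, D k ω) ^ 2) P := by
    simp only [pow_two, Finset.sum_mul_sum]
    exact integrable_finsetSum _ fun k hk => integrable_finsetSum _ fun l hl => iDD k hk l hl
  have sq_le : ∫ ω, (∑ k ∈ I, D k ω) ^ 2 ∂P ≤ (∑ k ∈ I, c k) ^ 2 +
      (4 * C₁ + F * C₂) * (I.card * A * (δ ^ 2 + γ) + γ ^ (2 * p + 1) *
          ∑ k ∈ I, ∑ l ∈ I, (|cov[G k, u l; P]| + |cov[G k, v l; P]|)) := by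
    simp only [pow_two (∑ k ∈ I, D k _), Finset.sum_mul_sum]
    rw [integral_finsetSum _ fun k hk => integrable_finsetSum _ fun l hl => iDD k hk l hl]
    set T := ∑ k ∈ I, ∑ l ∈ I, (|cov[G k, u l; P]| + |cov[G k, v l; P]|) with hT
    have hT0 : 0 ≤ T := Finset.sum_nonneg fun _ _ => Finset.sum_nonneg fun _ _ => by positivity
    set R := ∑ k ∈ I, ∑ l ∈ I, |cov[G k, G l; P]| with hR
    have hR0 : 0 ≤ R := Finset.sum_nonneg fun _ _ => Finset.sum_nonneg fun _ _ => by positivity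
    have hRA : R ≤ I.card * A := by
      refine (Finset.sum_le_sum fun k hk => hA k hk).trans ?_
      simp
    calc _ ≤ ∑ k ∈ I, ∑ l ∈ I, (c k * c l +
      F * C₂ * δ ^ 2 * |cov[G k, G l; P]| + C₁ * (4 * (γ * |cov[G k, G l; P]|) +
        2 * (γ ^ (2 * p + 1) * (|cov[G k, u l; P]| + |cov[G k, v l; P]|)))) := by
          refine Finset.sum_le_sum fun k hk => ?_
          rw [integral_finsetSum _ fun l hl => iDD k hk l hl]
          exact Finset.sum_le_sum fun l hl => main k hk l hl
      _ = (∑ k ∈ I, c k) ^ 2 + F * C₂ * δ ^ 2 * R + C₁ * (4 * (γ * R) +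
          2 * (γ ^ (2 * p + 1) * T)) := by
          simp only [Finset.sum_add_distrib, ← Finset.mul_sum, pow_two (∑ k ∈ I, c k),
            Finset.sum_mul_sum, hR, hT]
      _ ≤ _ := by
          have a1 : R * (δ ^ 2 + γ) ≤ I.card * A * (δ ^ 2 + γ) := by gcongr
          have a2 : 0 ≤ γ ^ (2 * p + 1) * T := by positivity
          have a3 : 0 ≤ C₁ * (R * δ ^ 2) := by positivity
          have a4 : 0 ≤ F * C₂ * (R * γ) := by positivity
          have a5 : 0 ≤ F * C₂ := by positivity
          have a6 : (4 * C₁ + F * C₂) * (R * (δ ^ 2 + γ)) ≤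
            (4 * C₁ + F * C₂) * (I.card * A * (δ ^ 2 + γ)) := by gcongr
          nlinarith [mul_nonneg hC₁ a2, mul_nonneg a5 a2]
  have iDs : Integrable (fun ω => ∑ k ∈ I, D k ω) P := integrable_finsetSum _ fun k hk => iD k hk
  by_cases h : i = p + 1
  · have e1 : ∀ ω, ((∑ k ∈ I, D k ω) - if i = p + 1 then e else 0) ^ 2 =
        (∑ k ∈ I, D k ω) ^ 2 - 2 * e * (∑ k ∈ I, D k ω) + e ^ 2 := by
      intro ω; rw [if_pos h]; ring
    have e2 : ∑ k ∈ I, c k = F * ∑ k ∈ I,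
        (cov[G k, u k; P] ^ (p + 1) - cov[G k, v k; P] ^ (p + 1)) := by
      simp only [hc, if_pos h, Finset.mul_sum]
    change ∫ ω, ((∑ k ∈ I, D k ω) - if i = p + 1 then e else 0) ^ 2 ∂P ≤ _
    simp only [e1]
    have e3 : Integrable (fun ω => (∑ k ∈ I, D k ω) ^ 2 - 2 * e * (∑ k ∈ I, D k ω)) P :=
      isq.sub (iDs.const_mul _)
    rw [integral_add e3 (integrable_const _),
      integral_sub isq (iDs.const_mul _), integral_const_mul, mean,
      Finset.sum_congr rfl (mean' h)]
    simp only [integral_const, probReal_univ, smul_eq_mul, one_mul]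
    rw [← e2]
    nlinarith [sq_le]
  · have e2 : ∑ k ∈ I, c k = 0 := by simp [hc, h]
    change ∫ ω, ((∑ k ∈ I, D k ω) - if i = p + 1 then e else 0) ^ 2 ∂P ≤ _
    simp only [if_neg h, sub_zero]
    rw [e2] at sq_le
    have := sq_nonneg (F * ∑ k ∈ I,
        (cov[G k, u k; P] ^ (p + 1) - cov[G k, v k; P] ^ (p + 1)) - e)
    linarith

end

/-! ### Weighted Hermite sums of fractional Brownian motion at the critical index -/

section

variable {P : Measure Ω} {ν : ℝ} {x : ℝ → Ω → ℝ}

/-- The normalised Hermite increment `n^{-1/2} H_q(n^ν δx_{t_k t_{k+1}})`. -/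
def hz (x : ℝ → Ω → ℝ) (ν : ℝ) (n q k : ℕ) (ω : Ω) : ℝ :=
  (n : ℝ) ^ (-(1 : ℝ) / 2) * hermIncr x ν n q k ω

lemma hermIncr_eq (n q k : ℕ) (ω : Ω) : hermIncr x ν n q k ω = Hq q (Gi x ν n k ω) := rfl

lemma sq_half (n : ℕ) : ((n : ℝ) ^ (-(1 : ℝ) / 2)) ^ 2 = (n : ℝ)⁻¹ := by
  rw [← Real.rpow_natCast, ← Real.rpow_mul (by positivity), ← Real.rpow_neg_one]
  norm_num

/-- The critical relation `2 q ν = 1`, with `q = p + 1`. -/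
structure Crit (ν : ℝ) (p : ℕ) : Prop where
  eq : ν * ((2 * (p + 1) : ℕ) : ℝ) = 1
  one_le : 1 ≤ p

namespace Crit

variable {p : ℕ}

lemma pos (h : Crit ν p) : 0 < ν := by
  have := h.eq
  by_contra hn
  have : ν * ((2 * (p + 1) : ℕ) : ℝ) ≤ 0 := mul_nonpos_of_nonpos_of_nonneg (not_lt.1 hn) (by positivity)
  linarith [h.eq]

lemma le (h : Crit ν p) : 4 * ν ≤ 1 := by
  have h1 := h.eq
  have h2 : (1 : ℝ) ≤ p := by exact_mod_cast h.one_le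
  push_cast at h1
  nlinarith [h.pos]

lemma le_one (h : Crit ν p) : 2 * ν ≤ 1 := by linarith [h.le, h.pos]

lemma pow (h : Crit ν p) {r : ℝ} (hr : 0 ≤ r) : (r ^ ν) ^ (2 * (p + 1)) = r := by
  rw [← Real.rpow_natCast, ← Real.rpow_mul hr, h.eq, Real.rpow_one]

lemma half (h : Crit ν p) {n : ℕ} (hn : 0 < n) :
    (n : ℝ) ^ (-(1 : ℝ) / 2) = ((n : ℝ) ^ ν) ^ (p + 1) / n := by
  have hn' : (0 : ℝ) < n := by exact_mod_cast hn
  have h1 : ν * ((p + 1 : ℕ) : ℝ) = 1 / 2 := by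
    have := h.eq; push_cast at this ⊢; linarith
  rw [← Real.rpow_natCast, ← Real.rpow_mul hn'.le, h1]
  nth_rewrite 3 [← Real.rpow_one (n : ℝ)]
  rw [← Real.rpow_sub hn']
  norm_num

end Crit

lemma xlift_eq (i : ℕ) (s t : ℝ) (ω : Ω) :
    xlift x i s t ω = (x t ω - x s ω) ^ i / (Nat.factorial i : ℝ) := rfl

/-- Sums weighted by `x^i` over the interval `[a/n, b/n]` are of order
`((b - a) / n) ^ (1/2 + iν)` in `L²`, uniformly in `n`. -/
lemma secondX {p : ℕ} (hx : IsFBM P ν x) (h : Crit ν p) : ∃ C : ℝ, 0 ≤ C ∧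
    ∀ n a b : ℕ, a ≤ b → b ≤ n → ∀ i ≤ p + 1,
      ∫ ω, (∑ k ∈ Finset.Ico a b, xlift x i ((a : ℝ) / n) ((k : ℝ) / n) ω *
        hz x ν n (p + 1) k ω) ^ 2 ∂P ≤ C * (((b : ℝ) - a) / n) ^ (1 + 2 * (i * ν)) := by
  obtain ⟨C, hC, hs⟩ := secondA P (incr x) p
  set A := ∑' j : ℤ, |rho ν j| with hA
  have hA0 : 0 ≤ A := tsum_nonneg fun _ => abs_nonneg _
  refine ⟨C * (A + 1), by positivity, ?_⟩
  intro n a b hab hbn i hi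
  rcases hab.eq_or_lt with rfl | hab
  · simp only [Finset.Ico_self, Finset.sum_empty, sub_self, zero_div]
    rw [zero_pow two_ne_zero, integral_zero]
    have : (0 : ℝ) ≤ 0 ^ (1 + 2 * (i * ν)) := Real.rpow_nonneg le_rfl _
    positivity
  have hn : 0 < n := by omega
  have hn' : (0 : ℝ) < n := by exact_mod_cast hn
  have hL : (1 : ℝ) ≤ (b : ℝ) - a := by
    have : (a : ℝ) + 1 ≤ b := by exact_mod_cast hab
    linarith
  set L : ℝ := (b : ℝ) - a with hLdef
  have hν := h.pos
  have hν1 := h.le_one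
  set τ : ℝ := (L / n) ^ ν with hτ
  have hτ0 : 0 < τ := Real.rpow_pos_of_pos (by positivity) _
  have hγ1 : (L ^ ν)⁻¹ ≤ 1 := inv_le_one_of_one_le₀ (Real.one_le_rpow hL hν.le)
  have mem : ∀ k ∈ Finset.Ico a b, k < n := fun k hk => by
    have := (Finset.mem_Ico.1 hk).2; omega
  have ga := grid_mem (n := n) (k := a) (by omega)
  have key := hs (I := Finset.Ico a b)
    (u := fun k ω => τ⁻¹ * (x ((k : ℝ) / n) ω - x ((a : ℝ) / n) ω)) (G := Gi x ν n)
    (γ := (L ^ ν)⁻¹) (A := A) hx.cg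
    (fun k hk => incr_mem _ ga (grid_mem (mem k hk).le))
    (fun k hk => Gi_mem (mem k hk))
    (fun k hk => by
      rw [hx.var_incr hν ga (grid_mem (mem k hk).le), inv_pow, inv_mul_le_one₀ (by positivity), hτ,
        ← Real.rpow_natCast, ← Real.rpow_mul (by positivity), ← sub_div, mul_comm ν]
      have hk' := Finset.mem_Ico.1 hk
      have h1 : (a : ℝ) ≤ k := by exact_mod_cast hk'.1
      have h2 : (k : ℝ) ≤ b := by exact_mod_cast hk'.2.le
      push_cast
      refine Real.rpow_le_rpow (abs_nonneg _) ?_ (by linarith)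
      rw [abs_of_nonneg (div_nonneg (by linarith) hn'.le)]
      gcongr
      linarith)
    (fun k hk => hx.var_Gi hν (mem k hk)) hγ1
    (fun k hk l hl => by
      rw [covariance_const_mul_right, abs_mul, abs_of_pos (inv_pos.2 hτ0)]
      have := hx.abs_cov_Gi_incr_le hν hν1 (mem k hk) ga (grid_mem (mem l hl).le)
      calc _ ≤ τ⁻¹ * ((n : ℝ) ^ ν)⁻¹ := by gcongr
        _ = _ := by
          rw [hτ, Real.div_rpow (by linarith) hn'.le]
          have := (Real.rpow_pos_of_pos hn' ν).ne'
          field_simp)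
    (fun k hk => by
      refine le_trans (le_of_eq (Finset.sum_congr rfl fun l hl => ?_))
        (sum_rho_le hν hν1 (Finset.Ico a b) k)
      rw [hx.cov_Gi hν (mem k hk) (mem l hl)]) i hi
  have hcard : ((Finset.Ico a b).card : ℝ) = L := by
    rw [Nat.card_Ico, Nat.cast_sub hab.le]
  rw [hcard, inv_pow, h.pow (by linarith)] at key
  set c : ℝ := τ ^ i / i.factorial * (n : ℝ) ^ (-(1 : ℝ) / 2) with hc
  have e : ∀ ω, (∑ k ∈ Finset.Ico a b, xlift x i ((a : ℝ) / n) ((k : ℝ) / n) ω *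
        hz x ν n (p + 1) k ω) ^ 2 = c ^ 2 * (∑ k ∈ Finset.Ico a b,
        (τ⁻¹ * (x ((k : ℝ) / n) ω - x ((a : ℝ) / n) ω)) ^ i * Hq (p + 1) (Gi x ν n k ω)) ^ 2 := by
    intro ω
    rw [← mul_pow, Finset.mul_sum]
    congr 1
    refine Finset.sum_congr rfl fun k _ => ?_
    rw [hz, hermIncr_eq, xlift_eq, hc, mul_pow, inv_pow]
    field_simp
  simp only [e]
  rw [integral_const_mul]
  have hfac : (1 : ℝ) ≤ i.factorial := by exact_mod_cast Nat.one_le_iff_ne_zero.2 i.factorial_ne_zero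
  have hc2 : c ^ 2 ≤ (τ ^ i) ^ 2 * (n : ℝ)⁻¹ := by
    rw [hc, mul_pow, sq_half]
    gcongr
    exact div_le_self (by positivity) hfac
  have hrp : (L / n) ^ (1 + 2 * (i * ν)) = (τ ^ i) ^ 2 * (L / n) := by
    rw [Real.rpow_add (by positivity), Real.rpow_one, mul_comm]
    congr 1
    rw [hτ, ← pow_mul, ← Real.rpow_natCast, ← Real.rpow_mul (by positivity)]
    congr 1
    push_cast
    ring
  rw [hrp]
  calc _ ≤ ((τ ^ i) ^ 2 * (n : ℝ)⁻¹) * (C * (L * A + L ^ 2 * L⁻¹)) := by gcongr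
    _ = _ := by field_simp

end

/-! ### Coarse cells and the change of base point -/

section

variable {P : Measure Ω} {ν : ℝ} {x : ℝ → Ω → ℝ}

/-- The first index `k` with `j/m ≤ k/n`, that is `⌈j n / m⌉`. -/
def cellStart (n m j : ℕ) : ℕ := (j * n + (m - 1)) / m

section cells
variable {n m : ℕ}

lemma cellStart_le_iff (hm : 0 < m) {j k : ℕ} : cellStart n m j ≤ k ↔ j * n ≤ m * k := by
  rw [cellStart, ← Nat.lt_succ_iff, Nat.div_lt_iff_lt_mul hm, Nat.succ_mul, mul_comm k m]
  omega

lemma cellStart_zero (hm : 0 < m) : cellStart n m 0 = 0 :=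
  Nat.le_zero.1 ((cellStart_le_iff hm).2 (by simp))

lemma cellStart_mono (hm : 0 < m) : Monotone (cellStart n m) := fun _ _ hij =>
  (cellStart_le_iff hm).2 <| (Nat.mul_le_mul_right n hij).trans ((cellStart_le_iff hm).1 le_rfl)

lemma cellStart_self (hm : 0 < m) : cellStart n m m = n := by
  refine le_antisymm ((cellStart_le_iff hm).2 le_rfl) ?_
  have := (cellStart_le_iff (n := n) (j := m) hm).1 le_rfl
  exact Nat.le_of_mul_le_mul_left this hm

lemma cellStart_le (hm : 0 < m) {j : ℕ} (hj : j ≤ m) : cellStart n m j ≤ n :=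
  (cellStart_mono hm hj).trans (cellStart_self hm).le

lemma cellStart_real_le (hm : 0 < m) (j : ℕ) : (j : ℝ) * n / m ≤ cellStart n m j := by
  have := (cellStart_le_iff (n := n) (j := j) hm).1 le_rfl
  rw [div_le_iff₀ (by positivity), mul_comm (_ : ℝ) (m : ℝ)]
  exact_mod_cast this

lemma cellStart_real_lt (hm : 0 < m) (j : ℕ) : (cellStart n m j : ℝ) < (j : ℝ) * n / m + 1 := by
  have h : cellStart n m j * m ≤ j * n + (m - 1) := Nat.div_mul_le_self _ _
  have h2 : cellStart n m j * m + 1 ≤ j * n + m := by omega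
  have h3 : (cellStart n m j : ℝ) * m + 1 ≤ j * n + m := by exact_mod_cast h2
  have hm' : (0 : ℝ) < m := by exact_mod_cast hm
  rw [← sub_lt_iff_lt_add, lt_div_iff₀ hm']
  nlinarith

/-- The `j`-th coarse cell: the indices `k` with `j/m ≤ k/n < (j+1)/m`. -/
def cell (n m j : ℕ) : Finset ℕ := Finset.Ico (cellStart n m j) (cellStart n m (j + 1))

lemma mem_cell (hm : 0 < m) {j k : ℕ} : k ∈ cell n m j ↔ j * n ≤ m * k ∧ m * k < (j + 1) * n := by
  rw [cell, Finset.mem_Ico, cellStart_le_iff hm, ← not_le, cellStart_le_iff hm, not_le]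

lemma cell_div (hm : 0 < m) {j k : ℕ} (h : k ∈ cell n m j) : m * k / n = j := by
  rw [mem_cell hm] at h
  have hn : 0 < n := by
    rcases Nat.eq_zero_or_pos n with rfl | h'
    · simp at h
    · exact h'
  exact Nat.div_eq_of_lt_le h.1 h.2

lemma cell_subset (hm : 0 < m) {j : ℕ} (hj : j < m) : cell n m j ⊆ Finset.range n := fun k hk => by
  have h1 := (Finset.mem_Ico.1 hk).2
  have h2 := cellStart_le (n := n) hm (j := j + 1) hj
  exact Finset.mem_range.2 (by omega)

lemma abs_card_cell (hm : 0 < m) (j : ℕ) : |((cell n m j).card : ℝ) - n / m| ≤ 1 := by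
  rw [cell, Nat.card_Ico, Nat.cast_sub (cellStart_mono hm j.le_succ), abs_le]
  have h1 := cellStart_real_le (n := n) hm j
  have h2 := cellStart_real_lt (n := n) hm j
  have h3 := cellStart_real_le (n := n) hm (j + 1)
  have h4 := cellStart_real_lt (n := n) hm (j + 1)
  push_cast at h3 h4
  have : ((j : ℝ) + 1) * n / m = j * n / m + n / m := by ring
  rw [this] at h3 h4
  constructor <;> linarith

lemma sum_cells (hm : 0 < m) (f : ℕ → ℝ) :
    ∑ k ∈ Finset.range n, f k = ∑ j ∈ Finset.range m, ∑ k ∈ cell n m j, f k := by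
  have key : ∀ J, ∑ j ∈ Finset.range J, ∑ k ∈ cell n m j, f k =
      ∑ k ∈ Finset.range (cellStart n m J), f k := by
    intro J
    induction J with
    | zero => simp [cellStart_zero hm]
    | succ J ih =>
      rw [Finset.sum_range_succ, ih, cell, Finset.range_eq_Ico, Finset.range_eq_Ico]
      exact Finset.sum_Ico_consecutive f (Nat.zero_le _) (cellStart_mono hm J.le_succ)
  rw [key, cellStart_self hm]

lemma div_cell_le {M k : ℕ} (hM : 0 < M) (hn : 0 < n) :
    ((M * k / n : ℕ) : ℝ) / M ≤ (k : ℝ) / n := by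
  rw [div_le_div_iff₀ (by positivity) (by positivity)]
  have := Nat.div_mul_le_self (M * k) n
  rw [mul_comm (k : ℝ)]
  exact_mod_cast this

lemma lt_div_cell {M k : ℕ} (hM : 0 < M) (hn : 0 < n) :
    (k : ℝ) / n < ((M * k / n : ℕ) : ℝ) / M + 1 / M := by
  rw [← add_div, div_lt_div_iff₀ (by positivity) (by positivity)]
  have := Nat.lt_mul_div_succ (M * k) hn
  rw [mul_comm (k : ℝ), mul_comm _ (n : ℝ)]
  exact_mod_cast this

end cells

/-- The drift of the critical weighted sums: on a cell of length `1/m` the covariances of the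
increments with the base increments contribute `(-1/2)^q / m`, while those with the frozen
increments (taken from a fixed coarse grid) disappear in the limit. -/
lemma drift_bound {p : ℕ} (hx : IsFBM P ν x) (h : Crit ν p) {n m M j : ℕ} (hn : 0 < n) (hm : 0 < m)
    (hM : 0 < M) (hj : j < m) :
    |(n : ℝ) ^ (-(1 : ℝ) / 2) * ∑ k ∈ cell n m j,
      (cov[Gi x ν n k, fun ω => x ((k : ℝ) / n) ω - x ((j : ℝ) / m) ω; P] ^ (p + 1) -
        cov[Gi x ν n k, fun ω => x (((M * k / n : ℕ) : ℝ) / M) ω - x ((j : ℝ) / m) ω; P] ^ (p + 1))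
      - (-(1 : ℝ) / 2) ^ (p + 1) / m| ≤ (2 * (p + 1) + 1 + 2 * M) * ((n : ℝ) ^ (2 * ν) / n) := by
  have hn' : (0 : ℝ) < n := by exact_mod_cast hn
  have hm' : (0 : ℝ) < m := by exact_mod_cast hm
  have hν := h.pos
  have hν1 := h.le_one
  have gj : (j : ℝ) / m ∈ Set.Icc (0 : ℝ) 1 := grid_mem hj.le
  have hI := cell_subset (n := n) hm hj
  have mem : ∀ k ∈ cell n m j, k < n := fun k hk => Finset.mem_range.1 (hI hk)
  have hb : ∀ k ∈ cell n m j, M * k / n < M := fun k hk => by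
    rw [Nat.div_lt_iff_lt_mul hn]; exact Nat.mul_lt_mul_of_pos_left (mem k hk) hM
  set N := (n : ℝ) ^ ν with hN
  have hN0 : 0 < N := Real.rpow_pos_of_pos hn' _
  set α := fun k => cov[Gi x ν n k, fun ω => x ((k : ℝ) / n) ω - x ((j : ℝ) / m) ω; P] with hα
  set β := fun k => cov[Gi x ν n k,
    fun ω => x (((M * k / n : ℕ) : ℝ) / M) ω - x ((j : ℝ) / m) ω; P] with hβ
  set d : ℝ := (-(1 : ℝ) / 2) ^ (p + 1) with hd
  have hd1 : |d| ≤ 1 := by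
    rw [hd, abs_pow]
    exact pow_le_one₀ (abs_nonneg _) (by rw [abs_le]; norm_num)
  have le1 : ∀ c : ℝ, |c| ≤ N⁻¹ → |N * c| ≤ 1 := fun c hc => by
    rw [abs_mul, abs_of_pos hN0]
    calc _ ≤ N * N⁻¹ := by gcongr
      _ = 1 := mul_inv_cancel₀ hN0.ne'
  have hα1 : ∀ k ∈ cell n m j, |N * α k| ≤ 1 := fun k hk =>
    le1 _ (hx.abs_cov_Gi_incr_le hν hν1 (mem k hk) gj (grid_mem (mem k hk).le))
  have hβ1 : ∀ k ∈ cell n m j, |N * β k| ≤ 1 := fun k hk =>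
    le1 _ (hx.abs_cov_Gi_incr_le hν hν1 (mem k hk) gj (grid_mem (hb k hk).le))
  -- on average `N * α k` is close to `-1/2` and `N * β k` to `0`
  have sα : ∑ k ∈ cell n m j, |N * α k + 1 / 2| ≤ (n : ℝ) ^ (2 * ν) := hx.sum_base_le hν hI gj
  have sβ : ∑ k ∈ cell n m j, |N * β k| ≤ 2 * M * (n : ℝ) ^ (2 * ν) := by
    calc _ ≤ ∑ k ∈ cell n m j, ∑ b ∈ Finset.range M,
          N * |cov[Gi x ν n k, fun ω => x ((b : ℝ) / M) ω - x ((j : ℝ) / m) ω; P]| := by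
          refine Finset.sum_le_sum fun k hk => ?_
          rw [abs_mul, abs_of_pos hN0]
          exact Finset.single_le_sum (f := fun b : ℕ => N * |cov[Gi x ν n k,
            fun ω => x ((b : ℝ) / M) ω - x ((j : ℝ) / m) ω; P]|)
            (fun _ _ => by positivity) (Finset.mem_range.2 (hb k hk))
      _ ≤ ∑ b ∈ Finset.range M, N * (2 * N) := by
          rw [Finset.sum_comm]
          refine Finset.sum_le_sum fun b hb => ?_
          rw [← Finset.mul_sum]
          have := hx.sum_cov_Gi_incr_le hν hI gj (grid_mem (Finset.mem_range.1 hb).le)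
          gcongr
      _ = _ := by
          rw [Finset.sum_const, Finset.card_range, nsmul_eq_mul, rpow_two_mul' n hn]
          ring
  have e : (n : ℝ) ^ (-(1 : ℝ) / 2) * ∑ k ∈ cell n m j, (α k ^ (p + 1) - β k ^ (p + 1)) - d / m =
      (n : ℝ)⁻¹ * ∑ k ∈ cell n m j, ((N * α k) ^ (p + 1) - d) +
        d * ((n : ℝ)⁻¹ * ((cell n m j).card - n / m)) -
        (n : ℝ)⁻¹ * ∑ k ∈ cell n m j, (N * β k) ^ (p + 1) := by
    rw [h.half hn]
    simp only [Finset.sum_sub_distrib, mul_pow, ← Finset.mul_sum, Finset.sum_const, nsmul_eq_mul]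
    field_simp
    ring
  rw [e]
  have t1 : |(n : ℝ)⁻¹ * ∑ k ∈ cell n m j, ((N * α k) ^ (p + 1) - d)| ≤
      (n : ℝ)⁻¹ * ((2 * (p + 1)) * (n : ℝ) ^ (2 * ν)) := by
    rw [abs_mul, abs_of_pos (inv_pos.2 hn')]
    gcongr
    calc _ ≤ ∑ k ∈ cell n m j, 2 * (p + 1) * |N * α k + 1 / 2| := by
          refine (Finset.abs_sum_le_sum_abs _ _).trans (Finset.sum_le_sum fun k hk => ?_)
          refine (abs_pow_sub_pow_le' _ _ _).trans ?_
          have h1 : |N * α k| ^ p ≤ 1 := pow_le_one₀ (abs_nonneg _) (hα1 k hk)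
          have h2 : |-(1 : ℝ) / 2| ^ p ≤ 1 :=
            pow_le_one₀ (abs_nonneg _) (by rw [abs_le]; norm_num)
          have h3 : N * α k - -1 / 2 = N * α k + 1 / 2 := by ring
          rw [h3]
          calc _ ≤ ((p : ℝ) + 1) * |N * α k + 1 / 2| * (1 + 1) := by gcongr
            _ = _ := by ring
      _ ≤ _ := by rw [← Finset.mul_sum]; gcongr
  have t2 : |d * ((n : ℝ)⁻¹ * ((cell n m j).card - n / m))| ≤ (n : ℝ)⁻¹ * (n : ℝ) ^ (2 * ν) := by
    rw [abs_mul, abs_mul, abs_of_pos (inv_pos.2 hn')]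
    have h1 : (1 : ℝ) ≤ (n : ℝ) ^ (2 * ν) :=
      Real.one_le_rpow (by exact_mod_cast hn) (by linarith)
    calc _ ≤ 1 * ((n : ℝ)⁻¹ * 1) := by gcongr; exact abs_card_cell hm j
      _ ≤ _ := by rw [one_mul]; gcongr
  have t3 : |(n : ℝ)⁻¹ * ∑ k ∈ cell n m j, (N * β k) ^ (p + 1)| ≤
      (n : ℝ)⁻¹ * (2 * M * (n : ℝ) ^ (2 * ν)) := by
    rw [abs_mul, abs_of_pos (inv_pos.2 hn')]
    gcongr
    refine ((Finset.abs_sum_le_sum_abs _ _).trans (Finset.sum_le_sum fun k hk => ?_)).trans sβ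
    rw [abs_pow]
    exact pow_le_of_le_one (abs_nonneg _) (hβ1 k hk) p.succ_ne_zero
  calc _ ≤ _ := abs_sub _ _
    _ ≤ _ := add_le_add ((abs_add_le _ _).trans (add_le_add t1 t2)) t3
    _ = _ := by field_simp

lemma tendsto_two_mul_rpow_div (hν1 : 2 * ν < 1) :
    Tendsto (fun n : ℕ => (n : ℝ) ^ (2 * ν) / n) atTop (nhds 0) := by
  have h1 : Tendsto (fun n : ℕ => ((n : ℝ)) ^ (-(1 - 2 * ν))) atTop (nhds 0) :=
    (tendsto_rpow_neg_atTop (by linarith)).comp tendsto_natCast_atTop_atTop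
  refine h1.congr' ?_
  filter_upwards [eventually_gt_atTop 0] with n hn
  have hn' : (0 : ℝ) < n := by exact_mod_cast hn
  rw [show -(1 - 2 * ν) = 2 * ν - 1 by ring, Real.rpow_sub hn', Real.rpow_one]

lemma tendsto_inv_rpow (hν : 0 < ν) :
    Tendsto (fun n : ℕ => ((n : ℝ) ^ ν)⁻¹) atTop (nhds 0) := by
  have h1 : Tendsto (fun n : ℕ => ((n : ℝ)) ^ (-ν)) atTop (nhds 0) :=
    (tendsto_rpow_neg_atTop hν).comp tendsto_natCast_atTop_atTop
  refine h1.congr' ?_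
  filter_upwards with n
  rw [Real.rpow_neg (by positivity)]

/-- Freezing `x^i` on the grid of mesh `1/M` inside the sum over a cell of length `1/m` costs
`O(M ^ (-ν))` in `L²` as `n → ∞`, apart from the deterministic drift `(-1/2) ^ q / m` which
appears exactly when `i = q`. -/
lemma base_change {p : ℕ} (hx : IsFBM P ν x) (h : Crit ν p) : ∃ C : ℝ, 0 ≤ C ∧
    ∀ m M j : ℕ, 0 < m → 0 < M → j < m → ∀ i ≤ p + 1, ∀ᶠ n : ℕ in atTop,
      ∫ ω, ((∑ k ∈ cell n m j, (xlift x i ((j : ℝ) / m) ((k : ℝ) / n) ω -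
          xlift x i ((j : ℝ) / m) (((M * k / n : ℕ) : ℝ) / M) ω) * hz x ν n (p + 1) k ω) -
        if i = p + 1 then (-(1 : ℝ) / 2) ^ (p + 1) / m else 0) ^ 2 ∂P ≤
      C * (((1 : ℝ) / M) ^ ν) ^ 2 := by
  obtain ⟨C, hC, hs⟩ := secondE P (incr x) p
  set A := ∑' j : ℤ, |rho ν j| with hA
  have hA0 : 0 ≤ A := tsum_nonneg fun _ => abs_nonneg _
  refine ⟨C * A + 1, by positivity, ?_⟩
  intro m M j hm hM hj i hi
  have hν := h.pos
  have hν1 := h.le_one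
  set δ : ℝ := ((1 : ℝ) / M) ^ ν with hδ
  have hM' : (0 : ℝ) < M := by exact_mod_cast hM
  have hδ0 : 0 < δ := Real.rpow_pos_of_pos (by positivity) _
  set q1 : ℝ := ((p + 1).factorial : ℝ) with hq1
  set B : ℝ := 2 * (p + 1) + 1 + 2 * M with hB
  have lim : Tendsto (fun n : ℕ => (C * A + 4 * C) * ((n : ℝ) ^ ν)⁻¹ +
      (q1 * (B * ((n : ℝ) ^ (2 * ν) / n))) ^ 2) atTop (nhds 0) := by
    have h1 := ((tendsto_inv_rpow hν).const_mul (C * A + 4 * C)).add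
      ((((tendsto_two_mul_rpow_div (ν := ν) (by linarith [h.le, h.pos])).const_mul B).const_mul q1).pow 2)
    simpa using h1
  filter_upwards [lim.eventually_le_const (show 0 < δ ^ 2 by positivity), eventually_gt_atTop 0]
    with n hlim hn
  have hn' : (0 : ℝ) < n := by exact_mod_cast hn
  have gj : (j : ℝ) / m ∈ Set.Icc (0 : ℝ) 1 := grid_mem hj.le
  have hI := cell_subset (n := n) hm hj
  have mem : ∀ k ∈ cell n m j, k < n := fun k hk => Finset.mem_range.1 (hI hk)
  have hb : ∀ k ∈ cell n m j, ((M * k / n : ℕ) : ℝ) / M ∈ Set.Icc (0 : ℝ) 1 := fun k hk =>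
    grid_mem (le_of_lt (by
      rw [Nat.div_lt_iff_lt_mul hn]; exact Nat.mul_lt_mul_of_pos_left (mem k hk) hM))
  have hN1 : (1 : ℝ) ≤ (n : ℝ) ^ ν := Real.one_le_rpow (by exact_mod_cast hn) hν.le
  set γ : ℝ := ((n : ℝ) ^ ν)⁻¹ with hγ
  have hγ0 : 0 < γ := by positivity
  have hγ1 : γ ≤ 1 := inv_le_one_of_one_le₀ hN1
  set I := cell n m j with hIdef
  set d : ℝ := (-(1 : ℝ) / 2) ^ (p + 1) with hd
  have var1 : ∀ s t : ℝ, s ∈ Set.Icc (0 : ℝ) 1 → t ∈ Set.Icc (0 : ℝ) 1 →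
      cov[fun ω => x t ω - x s ω, fun ω => x t ω - x s ω; P] ≤ 1 := fun s t hs ht => by
    have := hx.var_incr hν hs ht 1
    simp only [one_mul, one_pow] at this
    rw [this]
    refine Real.rpow_le_one (abs_nonneg _) ?_ (by linarith)
    rw [abs_le]
    constructor <;> linarith [hs.1, hs.2, ht.1, ht.2]
  set h2 : ℝ := (n : ℝ) ^ (-(1 : ℝ) / 2) with hh2
  have hh0 : 0 < h2 := Real.rpow_pos_of_pos hn' _
  have key := hs (I := I)
    (u := fun k ω => x ((k : ℝ) / n) ω - x ((j : ℝ) / m) ω)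
    (v := fun k ω => x (((M * k / n : ℕ) : ℝ) / M) ω - x ((j : ℝ) / m) ω)
    (z := fun k ω => δ⁻¹ * (x ((k : ℝ) / n) ω - x (((M * k / n : ℕ) : ℝ) / M) ω)) (G := Gi x ν n)
    (γ := γ) (A := A) (δ := δ) hx.cg
    (fun k hk => incr_mem' gj (grid_mem (mem k hk).le))
    (fun k hk => incr_mem' gj (hb k hk))
    (fun k hk => incr_mem _ (hb k hk) (grid_mem (mem k hk).le))
    (fun k hk => Gi_mem (mem k hk))
    (fun k hk => var1 _ _ gj (grid_mem (mem k hk).le))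
    (fun k hk => var1 _ _ gj (hb k hk))
    (fun k hk => by
      rw [hx.var_incr hν (hb k hk) (grid_mem (mem k hk).le), inv_pow,
        inv_mul_le_one₀ (by positivity), hδ, ← Real.rpow_natCast, ← Real.rpow_mul (by positivity),
        mul_comm ν]
      have h1 := div_cell_le (k := k) hM hn
      have h2 := lt_div_cell (k := k) hM hn
      push_cast
      refine Real.rpow_le_rpow (abs_nonneg _) ?_ (by linarith)
      rw [abs_of_nonneg (by linarith)]
      linarith)
    (fun k hk => hx.var_Gi hν (mem k hk))
    (fun k hk ω => by
      rw [mul_inv_cancel_left₀ hδ0.ne']; ring)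
    hγ0.le hγ1
    (fun k hk l hl => hx.abs_cov_Gi_incr_le hν hν1 (mem k hk) gj (grid_mem (mem l hl).le))
    (fun k hk l hl => hx.abs_cov_Gi_incr_le hν hν1 (mem k hk) gj (hb l hl))
    (fun k hk => by
      refine le_trans (le_of_eq (Finset.sum_congr rfl fun l hl => ?_))
        (sum_rho_le hν hν1 I k)
      rw [hx.cov_Gi hν (mem k hk) (mem l hl)]) i hi (q1 * d * h2⁻¹ / m)
  have e : ∀ ω, ((∑ k ∈ I, (xlift x i ((j : ℝ) / m) ((k : ℝ) / n) ω -
        xlift x i ((j : ℝ) / m) (((M * k / n : ℕ) : ℝ) / M) ω) * hz x ν n (p + 1) k ω) -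
        if i = p + 1 then d / m else 0) ^ 2 = (h2 / i.factorial) ^ 2 * ((∑ k ∈ I,
        ((x ((k : ℝ) / n) ω - x ((j : ℝ) / m) ω) ^ i -
          (x (((M * k / n : ℕ) : ℝ) / M) ω - x ((j : ℝ) / m) ω) ^ i) * Hq (p + 1) (Gi x ν n k ω)) -
        if i = p + 1 then q1 * d * h2⁻¹ / m else 0) ^ 2 := by
    intro ω
    rw [← mul_pow, mul_sub, Finset.mul_sum]
    congr 2
    · refine Finset.sum_congr rfl fun k _ => ?_
      rw [hz, hermIncr_eq, xlift_eq, xlift_eq]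
      ring
    · split_ifs with hip
      · subst hip
        rw [hq1]
        field_simp
      · simp
  simp only [e]
  rw [integral_const_mul]
  have hcard : (I.card : ℝ) ≤ n := by
    have := Finset.card_le_card hI
    rw [Finset.card_range] at this
    exact_mod_cast this
  have hdouble : ∑ k ∈ I, ∑ l ∈ I,
      (|cov[Gi x ν n k, fun ω => x ((l : ℝ) / n) ω - x ((j : ℝ) / m) ω; P]| +
        |cov[Gi x ν n k, fun ω => x (((M * l / n : ℕ) : ℝ) / M) ω - x ((j : ℝ) / m) ω; P]|) ≤
      n * (4 * γ⁻¹) := by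
    rw [Finset.sum_comm]
    calc _ ≤ ∑ l ∈ I, (4 * γ⁻¹) := by
          refine Finset.sum_le_sum fun l hl => ?_
          rw [Finset.sum_add_distrib]
          have h1 := hx.sum_cov_Gi_incr_le hν hI gj (grid_mem (mem l hl).le)
          have h2 := hx.sum_cov_Gi_incr_le hν hI gj (hb l hl)
          rw [hγ, inv_inv]
          linarith
      _ ≤ _ := by rw [Finset.sum_const, nsmul_eq_mul]; gcongr
  have hfac : (1 : ℝ) ≤ i.factorial := by exact_mod_cast Nat.one_le_iff_ne_zero.2 i.factorial_ne_zero
  have hc2 : (h2 / i.factorial) ^ 2 ≤ (n : ℝ)⁻¹ := by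
    rw [← sq_half]
    gcongr
    exact div_le_self hh0.le hfac
  have hdr := drift_bound hx h hn hm hM hj
  set D := ∑ k ∈ I,
      (cov[Gi x ν n k, fun ω => x ((k : ℝ) / n) ω - x ((j : ℝ) / m) ω; P] ^ (p + 1) -
        cov[Gi x ν n k, fun ω => x (((M * k / n : ℕ) : ℝ) / M) ω - x ((j : ℝ) / m) ω; P] ^ (p + 1))
  have hlast : (n : ℝ)⁻¹ * (q1 * D - q1 * d * h2⁻¹ / m) ^ 2 ≤
      (q1 * (B * ((n : ℝ) ^ (2 * ν) / n))) ^ 2 := by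
    have e1 : (n : ℝ)⁻¹ * (q1 * D - q1 * d * h2⁻¹ / m) ^ 2 = (q1 * |h2 * D - d / m|) ^ 2 := by
      rw [mul_pow q1, sq_abs, ← sq_half, ← hh2, ← mul_pow, ← mul_pow]
      congr 1
      field_simp
    rw [e1]
    have := hdr
    gcongr
  have hg : γ ^ (2 * p + 1) * γ⁻¹ ≤ γ := by
    rw [pow_succ, mul_inv_cancel_right₀ hγ0.ne']
    exact pow_le_of_le_one hγ0.le hγ1 (by have := h.one_le; omega)
  calc _ ≤ (n : ℝ)⁻¹ * (C * (n * A * (δ ^ 2 + γ) + γ ^ (2 * p + 1) * (n * (4 * γ⁻¹))) +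
        (q1 * D - q1 * d * h2⁻¹ / m) ^ 2) := by
          refine mul_le_mul hc2 (key.trans ?_) (integral_nonneg fun _ => sq_nonneg _)
            (by positivity)
          gcongr
    _ = C * A * δ ^ 2 + (C * A * γ + 4 * C * (γ ^ (2 * p + 1) * γ⁻¹)) +
        (n : ℝ)⁻¹ * (q1 * D - q1 * d * h2⁻¹ / m) ^ 2 := by
          rw [mul_add (n : ℝ)⁻¹]
          congr 1
          generalize γ ^ (2 * p + 1) = g1
          generalize γ⁻¹ = g2
          field_simp
          ring
    _ ≤ C * A * δ ^ 2 + (C * A * γ + 4 * C * γ) + (q1 * (B * ((n : ℝ) ^ (2 * ν) / n))) ^ 2 := by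
          gcongr
    _ ≤ _ := by linarith

end

/-! ### Toeplitz quadratic forms with piecewise constant weights -/

section

variable {P : Measure Ω} {ν : ℝ} {x : ℝ → Ω → ℝ}

/-- The tail `∑_{|j| ≥ i} |r j|` of a two-sided series. -/
def tailSum (r : ℤ → ℝ) (i : ℕ) : ℝ := ∑' j : ℤ, if (i : ℤ) ≤ |j| then |r j| else 0

lemma tailSum_summable {r : ℤ → ℝ} (hr : Summable fun j => |r j|) (i : ℕ) :
    Summable fun j : ℤ => if (i : ℤ) ≤ |j| then |r j| else 0 :=
  Summable.of_nonneg_of_le (fun j => by split_ifs <;> simp)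
    (fun j => by split_ifs <;> simp) hr

lemma tailSum_nonneg (r : ℤ → ℝ) (i : ℕ) : 0 ≤ tailSum r i :=
  tsum_nonneg fun j => by split_ifs <;> simp

lemma tendsto_tailSum {r : ℤ → ℝ} (hr : Summable fun j => |r j|) :
    Tendsto (tailSum r) atTop (nhds 0) := by
  have := tendsto_tsum_of_dominated_convergence (𝓕 := atTop)
    (f := fun (i : ℕ) (j : ℤ) => if (i : ℤ) ≤ |j| then |r j| else 0) (g := fun _ => (0 : ℝ))
    hr (fun j => by
      refine tendsto_const_nhds.congr' ?_
      filter_upwards [eventually_gt_atTop j.natAbs] with i hi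
      rw [if_neg]
      rw [Int.abs_eq_natAbs]
      omega) (by
      filter_upwards with i j
      split_ifs <;> simp)
  rw [tsum_zero] at this
  exact this

/-- In a cell `[c, d)` the row sums of a Toeplitz matrix against a weight constant on the cell are
the full sum of the symbol, up to tails. -/
lemma toeplitz_row {r : ℤ → ℝ} (hr : Summable fun j => |r j|) {n c d k : ℕ} {A : ℕ → ℝ} {K : ℝ}
    (hA : ∀ l, |A l| ≤ K) (hd : d ≤ n) (hck : c ≤ k) (hkd : k < d)
    (hcst : ∀ l, c ≤ l → l < d → A l = A k) :
    |∑ l ∈ Finset.range n, A l * r ((k : ℤ) - l) - A k * ∑' j, r j| ≤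
      2 * K * (tailSum r (k - c + 1) + tailSum r (d - k)) := by
  have hr' : Summable r := hr.of_abs
  have hsub : Summable fun l : ℤ => |r (k - l)| := (Equiv.subLeft (k : ℤ)).summable_iff.2 hr
  have hK : 0 ≤ K := (abs_nonneg _).trans (hA 0)
  set B : ℤ → ℝ := fun l => if 0 ≤ l ∧ l < n then A l.toNat else 0 with hB
  have hBK : ∀ l, |B l| ≤ K := fun l => by
    rw [hB]; dsimp only; split_ifs
    · exact hA _
    · simpa using hK
  have e1 : ∑ l ∈ Finset.range n, A l * r ((k : ℤ) - l) = ∑' l : ℤ, B l * r (k - l) := by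
    rw [tsum_eq_sum (s := (Finset.range n).map Nat.castEmbedding)]
    · rw [Finset.sum_map]
      refine Finset.sum_congr rfl fun l hl => ?_
      have := Finset.mem_range.1 hl
      simp [hB, this]
    · intro l hl
      have : ¬ (0 ≤ l ∧ l < n) := by
        rintro ⟨h0, h1⟩
        apply hl
        simp only [Finset.mem_map, Finset.mem_range, Nat.castEmbedding_apply]
        exact ⟨l.toNat, by omega, by omega⟩
      simp [hB, this]
  have hs1 : Summable fun l : ℤ => B l * r (k - l) := by
    refine Summable.of_norm_bounded (hsub.mul_left K) fun l => ?_
    rw [Real.norm_eq_abs, abs_mul]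
    gcongr
    exact hBK l
  have e2 : A k * ∑' j, r j = ∑' l : ℤ, A k * r (k - l) := by
    rw [tsum_mul_left]
    congr 1
    exact ((Equiv.subLeft (k : ℤ)).tsum_eq r).symm
  have hs2 : Summable fun l : ℤ => A k * r (k - l) :=
    ((Equiv.subLeft (k : ℤ)).summable_iff.2 hr').mul_left _
  set g : ℤ → ℝ := fun j => 2 * K * ((if ((k - c + 1 : ℕ) : ℤ) ≤ |j| then |r j| else 0) +
    if ((d - k : ℕ) : ℤ) ≤ |j| then |r j| else 0) with hg
  have hgs : Summable g := ((tailSum_summable hr _).add (tailSum_summable hr _)).mul_left _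
  rw [e1, e2, ← hs1.tsum_sub hs2, ← Real.norm_eq_abs]
  have : 2 * K * (tailSum r (k - c + 1) + tailSum r (d - k)) = ∑' l : ℤ, g (k - l) := by
    rw [show ∑' l : ℤ, g (k - l) = ∑' l, g l from (Equiv.subLeft (k : ℤ)).tsum_eq g, hg, tsum_mul_left,
      (tailSum_summable hr _).tsum_add (tailSum_summable hr _)]
    rfl
  rw [this]
  refine tsum_of_norm_bounded ((Equiv.subLeft (k : ℤ)).summable_iff.2 hgs).hasSum fun l => ?_
  rw [Real.norm_eq_abs, ← sub_mul, abs_mul]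
  have h2K : |B l - A k| ≤ 2 * K := (abs_sub _ _).trans (by linarith [hBK l, hA k])
  have i1 : (0 : ℝ) ≤ if ((k - c + 1 : ℕ) : ℤ) ≤ |(k : ℤ) - l| then |r (k - l)| else 0 := by
    split_ifs <;> simp
  have i2 : (0 : ℝ) ≤ if ((d - k : ℕ) : ℤ) ≤ |(k : ℤ) - l| then |r (k - l)| else 0 := by
    split_ifs <;> simp
  by_cases hl : (c : ℤ) ≤ l ∧ l < d
  · have : B l = A k := by
      have h0 : 0 ≤ l ∧ l < n := by omega
      simp only [hB, h0, and_self, if_true]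
      exact hcst _ (by omega) (by omega)
    rw [this, sub_self, abs_zero, zero_mul]
    simp only [Function.comp, Equiv.subLeft_apply, hg]
    positivity
  · simp only [Function.comp, Equiv.subLeft_apply, hg]
    refine mul_le_mul h2K ?_ (abs_nonneg _) (by positivity)
    rcases lt_or_ge l (c : ℤ) with h1 | h1
    · rw [if_pos (by rw [le_abs]; left; omega)]
      linarith
    · rw [if_pos (c := ((d - k : ℕ) : ℤ) ≤ _) (by rw [le_abs]; right; omega)]
      linarith

/-- Toeplitz quadratic forms whose weights are constant on `M` coarse cells: interactions between
different cells disappear in the limit. This gives the limiting variance. -/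
lemma tendsto_toeplitz {r : ℤ → ℝ} (hr : Summable fun j => |r j|) {M : ℕ} (hM : 0 < M)
    {a : ℕ → ℝ} {K : ℝ} (ha : ∀ b, |a b| ≤ K) :
    Tendsto (fun n : ℕ => (n : ℝ)⁻¹ * ∑ k ∈ Finset.range n, ∑ l ∈ Finset.range n,
      a (M * k / n) * a (M * l / n) * r ((k : ℤ) - l)) atTop
      (nhds ((∑' j, r j) * ((∑ b ∈ Finset.range M, a b ^ 2) / M))) := by
  have hK : 0 ≤ K := (abs_nonneg _).trans (ha 0)
  have hM' : (0 : ℝ) < M := by exact_mod_cast hM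
  have hces : Tendsto (fun n : ℕ => (n : ℝ)⁻¹ * ∑ i ∈ Finset.range n, tailSum r (i + 1)) atTop
      (nhds 0) := ((tendsto_add_atTop_iff_nat 1).2 (tendsto_tailSum hr)).cesaro
  set R := ∑' j, r j with hR
  set E : ℕ → ℝ := fun n => K * (2 * K) * M * 2 *
    ((n : ℝ)⁻¹ * ∑ i ∈ Finset.range n, tailSum r (i + 1)) + |R| * K ^ 2 * M * (n : ℝ)⁻¹ with hE
  have hE0 : Tendsto E atTop (nhds 0) := by
    have := (hces.const_mul (K * (2 * K) * M * 2)).add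
      ((tendsto_inv_atTop_nhds_zero_nat (𝕜 := ℝ)).const_mul (|R| * K ^ 2 * M))
    simpa using this
  rw [tendsto_iff_norm_sub_tendsto_zero]
  refine squeeze_zero' (Eventually.of_forall fun _ => norm_nonneg _) ?_ hE0
  filter_upwards [eventually_gt_atTop 0] with n hn
  have hn' : (0 : ℝ) < n := by exact_mod_cast hn
  -- the quadratic form against the diagonal
  have h1 : |∑ k ∈ Finset.range n, ∑ l ∈ Finset.range n,
      a (M * k / n) * a (M * l / n) * r ((k : ℤ) - l) -
      R * ∑ k ∈ Finset.range n, a (M * k / n) ^ 2| ≤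
      K * (2 * K) * M * 2 * ∑ i ∈ Finset.range n, tailSum r (i + 1) := by
    rw [Finset.mul_sum, ← Finset.sum_sub_distrib]
    refine (Finset.abs_sum_le_sum_abs _ _).trans ?_
    rw [sum_cells hM]
    calc _ ≤ ∑ b ∈ Finset.range M, K * (2 * K) * 2 *
          ∑ i ∈ Finset.range n, tailSum r (i + 1) := by
          refine Finset.sum_le_sum fun b hb => ?_
          have hb' := Finset.mem_range.1 hb
          set c := cellStart n M b
          set d := cellStart n M (b + 1)
          have hdn : d ≤ n := cellStart_le hM hb'
          calc _ ≤ ∑ k ∈ cell n M b, K * (2 * K *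
                (tailSum r (k - c + 1) + tailSum r (d - k))) := by
                refine Finset.sum_le_sum fun k hk => ?_
                have hk' := Finset.mem_Ico.1 hk
                have := toeplitz_row hr (n := n) (c := c) (d := d) (k := k)
                  (A := fun l => a (M * l / n)) (K := K) (fun l => ha _) hdn hk'.1 hk'.2
                  (fun l h1 h2 => by
                    rw [cell_div hM (Finset.mem_Ico.2 ⟨h1, h2⟩), cell_div hM hk])
                have e : (∑ l ∈ Finset.range n, a (M * k / n) * a (M * l / n) * r ((k : ℤ) - l)) -
                    R * a (M * k / n) ^ 2 = a (M * k / n) *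
                    (∑ l ∈ Finset.range n, a (M * l / n) * r ((k : ℤ) - l) -
                      a (M * k / n) * R) := by
                  rw [mul_sub, Finset.mul_sum]
                  simp only [mul_assoc]
                  ring
                rw [e, abs_mul]
                exact mul_le_mul (ha _) this (abs_nonneg _) hK
            _ = K * (2 * K) * (∑ k ∈ Finset.Ico c d, tailSum r (k - c + 1) +
                ∑ k ∈ Finset.Ico c d, tailSum r (d - k)) := by
                rw [← Finset.sum_add_distrib, Finset.mul_sum]
                refine Finset.sum_congr rfl fun k _ => by ring
            _ ≤ K * (2 * K) * (∑ i ∈ Finset.range n, tailSum r (i + 1) +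
                ∑ i ∈ Finset.range n, tailSum r (i + 1)) := by
                have sub : Finset.range (d - c) ⊆ Finset.range n :=
                  Finset.range_subset_range.2 (by omega)
                have mono := Finset.sum_le_sum_of_subset_of_nonneg (f := fun i => tailSum r (i + 1))
                  sub (fun _ _ _ => tailSum_nonneg _ _)
                have f1 : ∑ k ∈ Finset.Ico c d, tailSum r (k - c + 1) =
                    ∑ i ∈ Finset.range (d - c), tailSum r (i + 1) := by
                  rw [Finset.sum_Ico_eq_sum_range]
                  refine Finset.sum_congr rfl fun i _ => by congr 1; omega
                have f2 : ∑ k ∈ Finset.Ico c d, tailSum r (d - k) =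
                    ∑ i ∈ Finset.range (d - c), tailSum r (i + 1) := by
                  rw [Finset.sum_Ico_eq_sum_range,
                    ← Finset.sum_range_reflect (fun i => tailSum r (i + 1))]
                  refine Finset.sum_congr rfl fun i hi => ?_
                  have := Finset.mem_range.1 hi
                  congr 1; omega
                rw [f1, f2]
                gcongr
            _ = _ := by ring
      _ = _ := by rw [Finset.sum_const, Finset.card_range, nsmul_eq_mul]; ring
  have h2 : |(n : ℝ)⁻¹ * ∑ k ∈ Finset.range n, a (M * k / n) ^ 2 -
      (∑ b ∈ Finset.range M, a b ^ 2) / M| ≤ K ^ 2 * M * (n : ℝ)⁻¹ := by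
    have e : (n : ℝ)⁻¹ * ∑ k ∈ Finset.range n, a (M * k / n) ^ 2 -
      (∑ b ∈ Finset.range M, a b ^ 2) / M = (n : ℝ)⁻¹ * ∑ b ∈ Finset.range M, a b ^ 2 *
        ((cell n M b).card - n / M) := by
      have : ∑ k ∈ Finset.range n, a (M * k / n) ^ 2 =
          ∑ b ∈ Finset.range M, a b ^ 2 * (cell n M b).card := by
        rw [sum_cells hM]
        refine Finset.sum_congr rfl fun b _ => ?_
        rw [Finset.sum_congr rfl fun k hk => by rw [cell_div hM hk], Finset.sum_const,
          nsmul_eq_mul, mul_comm]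
      rw [this]
      simp only [mul_sub, Finset.sum_sub_distrib, ← Finset.sum_mul]
      field_simp
    rw [e, abs_mul, abs_of_pos (inv_pos.2 hn'), mul_comm]
    gcongr
    refine (Finset.abs_sum_le_sum_abs _ _).trans ?_
    calc _ ≤ ∑ b ∈ Finset.range M, K ^ 2 * 1 := by
          refine Finset.sum_le_sum fun b _ => ?_
          rw [abs_mul, abs_pow]
          have := ha b
          have := abs_card_cell (n := n) hM b
          gcongr
      _ = _ := by rw [Finset.sum_const, Finset.card_range, nsmul_eq_mul]; ring
  rw [Real.norm_eq_abs]
  set Q := ∑ k ∈ Finset.range n, ∑ l ∈ Finset.range n,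
      a (M * k / n) * a (M * l / n) * r ((k : ℤ) - l)
  set D := ∑ k ∈ Finset.range n, a (M * k / n) ^ 2
  have e : (n : ℝ)⁻¹ * Q - R * ((∑ b ∈ Finset.range M, a b ^ 2) / M) =
      (n : ℝ)⁻¹ * (Q - R * D) + R * ((n : ℝ)⁻¹ * D - (∑ b ∈ Finset.range M, a b ^ 2) / M) := by
    ring
  rw [e]
  refine (abs_add_le _ _).trans ?_
  rw [abs_mul, abs_mul, abs_of_pos (inv_pos.2 hn'), hE]
  dsimp only
  have := mul_le_mul_of_nonneg_left h1 (inv_pos.2 hn').le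
  have := mul_le_mul_of_nonneg_left h2 (abs_nonneg R)
  linarith

end

/-! ### The mixing central limit theorem for step weights -/

section

variable {P : Measure Ω} {ν : ℝ} {x : ℝ → Ω → ℝ}

lemma integral_abs_le_sqrt [IsProbabilityMeasure P] {f : Ω → ℝ} (hf : Integrable f P)
    (hf2 : Integrable (fun ω => f ω ^ 2) P) : ∫ ω, |f ω| ∂P ≤ √(∫ ω, f ω ^ 2 ∂P) := by
  apply Real.le_sqrt_of_sq_le
  set m := ∫ ω, |f ω| ∂P
  have h0 : 0 ≤ ∫ ω, (|f ω| - m) ^ 2 ∂P := integral_nonneg fun _ => sq_nonneg _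
  have e : ∀ ω, (|f ω| - m) ^ 2 = f ω ^ 2 - 2 * m * |f ω| + m ^ 2 := fun ω => by
    rw [sub_sq, sq_abs]; ring
  simp only [e] at h0
  have i1 : Integrable (fun ω => f ω ^ 2 - 2 * m * |f ω|) P := hf2.sub (hf.abs.const_mul _)
  rw [integral_add i1 (integrable_const _),
    integral_sub hf2 (hf.abs.const_mul _), integral_const_mul, integral_const] at h0
  simp only [probReal_univ, smul_eq_mul, one_mul] at h0
  change 0 ≤ ∫ ω, f ω ^ 2 ∂P - 2 * m * m + m ^ 2 at h0
  linarith

/-- The contractions in the variance of the quadratic form are bounded by sums over chains of four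
indices, each step of which costs a row sum. -/
lemma sum4_le {I : Finset ℕ} {r : ℕ → ℕ → ℝ} {A : ℝ} (hr : ∀ k l, 0 ≤ r k l)
    (hsym : ∀ k l, r k l = r l k) (hA : ∀ k ∈ I, ∑ l ∈ I, r k l ≤ A) :
    ∑ k ∈ I, ∑ l ∈ I, ∑ k' ∈ I, ∑ l' ∈ I,
      r k l * r k' l' * (r k k' + r k l' + r l k' + r l l') ≤ 4 * (I.card * A ^ 3) := by
  rcases I.eq_empty_or_nonempty with rfl | ⟨k₀, hk₀⟩
  · simp
  have hA0 : 0 ≤ A := (Finset.sum_nonneg fun l _ => hr k₀ l).trans (hA k₀ hk₀)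
  have inner : ∀ j ∈ I, ∑ k' ∈ I, ∑ l' ∈ I, r k' l' * (r j k' + r j l') ≤ 2 * A ^ 2 := by
    intro j hj
    simp only [mul_add, Finset.sum_add_distrib]
    have h1 : ∑ k' ∈ I, ∑ l' ∈ I, r k' l' * r j k' ≤ A ^ 2 := by
      calc _ ≤ ∑ k' ∈ I, A * r j k' := Finset.sum_le_sum fun k' hk' => by
            rw [← Finset.sum_mul]
            exact mul_le_mul_of_nonneg_right (hA k' hk') (hr _ _)
        _ ≤ A * A := by rw [← Finset.mul_sum]; exact mul_le_mul_of_nonneg_left (hA j hj) hA0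
        _ = _ := by ring
    have h2 : ∑ k' ∈ I, ∑ l' ∈ I, r k' l' * r j l' ≤ A ^ 2 := by
      rw [Finset.sum_comm]
      refine le_trans (le_of_eq ?_) h1
      refine Finset.sum_congr rfl fun l' _ => Finset.sum_congr rfl fun k' _ => ?_
      rw [hsym]
    linarith
  calc _ ≤ ∑ k ∈ I, ∑ l ∈ I, r k l * (4 * A ^ 2) := by
        refine Finset.sum_le_sum fun k hk => Finset.sum_le_sum fun l hl => ?_
        have e : ∑ k' ∈ I, ∑ l' ∈ I, r k l * r k' l' * (r k k' + r k l' + r l k' + r l l') =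
            r k l * (∑ k' ∈ I, ∑ l' ∈ I, r k' l' * (r k k' + r k l') +
              ∑ k' ∈ I, ∑ l' ∈ I, r k' l' * (r l k' + r l l')) := by
          rw [← Finset.sum_add_distrib, Finset.mul_sum]
          refine Finset.sum_congr rfl fun k' _ => ?_
          rw [← Finset.sum_add_distrib, Finset.mul_sum]
          refine Finset.sum_congr rfl fun l' _ => by ring
        rw [e]
        have := inner k hk
        have := inner l hl
        exact mul_le_mul_of_nonneg_left (by linarith) (hr _ _)
    _ ≤ ∑ k ∈ I, A * (4 * A ^ 2) := by
        refine Finset.sum_le_sum fun k hk => ?_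
        rw [← Finset.sum_mul]
        exact mul_le_mul_of_nonneg_right (hA k hk) (by positivity)
    _ = _ := by rw [Finset.sum_const, nsmul_eq_mul]; ring

lemma CG.integrable_H2 {S : Set (Ω → ℝ)} (hS : CG P S) {G₁ G₂ : Ω → ℝ} (h₁ : G₁ ∈ S) (h₂ : G₂ ∈ S)
    (a b : ℕ) : Integrable (fun ω => Hq a (G₁ ω) * Hq b (G₂ ω)) P :=
  hS.integrable (V := ![G₁, G₂]) (fun i => by fin_cases i <;> simpa)
    (((PG_Hq a).comp (PG.eval 0)).mul ((PG_Hq b).comp (PG.eval 1)))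

lemma CG.integrable_H4 {S : Set (Ω → ℝ)} (hS : CG P S) {G₁ G₂ G₃ G₄ : Ω → ℝ} (h₁ : G₁ ∈ S)
    (h₂ : G₂ ∈ S) (h₃ : G₃ ∈ S) (h₄ : G₄ ∈ S) (a b c d : ℕ) :
    Integrable (fun ω => Hq a (G₁ ω) * (Hq b (G₂ ω) * Hq c (G₃ ω) * Hq d (G₄ ω))) P :=
  hS.integrable (V := ![G₁, G₂, G₃, G₄]) (fun i => by fin_cases i <;> simpa)
    (((PG_Hq a).comp (PG.eval 0)).mul ((((PG_Hq b).comp (PG.eval 1)).mul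
      ((PG_Hq c).comp (PG.eval 2))).mul ((PG_Hq d).comp (PG.eval 3))))

lemma CG.integral_H2 {S : Set (Ω → ℝ)} (hS : CG P S) {G G' : Ω → ℝ} (hG : G ∈ S) (hG' : G' ∈ S)
    (hv : cov[G, G; P] = 1) (hv' : cov[G', G'; P] = 1) (p : ℕ) :
    ∫ ω, Hq p (G ω) * Hq p (G' ω) ∂P = p.factorial * cov[G, G'; P] ^ p := by
  have := hS.mom2 hG hG' hv hv' p p
  simpa [mom4, Hq_zero] using this

/-- The quadratic form whose concentration drives the central limit theorem has variance of the
order of the number of terms. -/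
lemma CG.var_form {S : Set (Ω → ℝ)} (hS : CG P S) (p : ℕ) : ∃ C : ℝ, 0 ≤ C ∧
    ∀ {I : Finset ℕ} {G : ℕ → Ω → ℝ} {w : ℕ → ℝ} {A K : ℝ}, (∀ k ∈ I, G k ∈ S) →
      (∀ k ∈ I, cov[G k, G k; P] = 1) → (∀ k ∈ I, ∑ l ∈ I, |cov[G k, G l; P]| ≤ A) →
      (∀ k, |w k| ≤ K) →
      Integrable (fun ω => ∑ k ∈ I, ∑ l ∈ I, w k * w l * cov[G k, G l; P] *
        (Hq p (G k ω) * Hq p (G l ω) - p.factorial * cov[G k, G l; P] ^ p)) P ∧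
      Integrable (fun ω => (∑ k ∈ I, ∑ l ∈ I, w k * w l * cov[G k, G l; P] *
        (Hq p (G k ω) * Hq p (G l ω) - p.factorial * cov[G k, G l; P] ^ p)) ^ 2) P ∧
      ∫ ω, (∑ k ∈ I, ∑ l ∈ I, w k * w l * cov[G k, G l; P] *
        (Hq p (G k ω) * Hq p (G l ω) - p.factorial * cov[G k, G l; P] ^ p)) ^ 2 ∂P ≤
        C * K ^ 4 * (I.card * A ^ 3) := by
  obtain ⟨C, hC, hs⟩ := hS.mom4_sub (4 * p) p
  refine ⟨4 * C, by positivity, ?_⟩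
  intro I G w A K hG hv hA hw
  rcases I.eq_empty_or_nonempty with rfl | ⟨k₀, hk₀⟩
  · simp
  have hpr := (hS.gauss (hG k₀ hk₀)).isProbabilityMeasure
  have hK : 0 ≤ K := (abs_nonneg _).trans (hw 0)
  set c : ℕ → ℕ → ℝ := fun k l => w k * w l * cov[G k, G l; P] with hc
  set D : ℕ → ℕ → Ω → ℝ := fun k l ω =>
    Hq p (G k ω) * Hq p (G l ω) - p.factorial * cov[G k, G l; P] ^ p with hD
  have iD : ∀ k ∈ I, ∀ l ∈ I, Integrable (D k l) P := fun k hk l hl =>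
    (hS.integrable_H2 (hG k hk) (hG l hl) p p).sub (integrable_const _)
  have eDD : ∀ k l k' l' ω, D k l ω * D k' l' ω =
      Hq p (G k ω) * (Hq p (G l ω) * Hq p (G k' ω) * Hq p (G l' ω)) -
      (p.factorial * cov[G k', G l'; P] ^ p) * (Hq p (G k ω) * Hq p (G l ω)) -
      (p.factorial * cov[G k, G l; P] ^ p) * (Hq p (G k' ω) * Hq p (G l' ω)) +
      (p.factorial * cov[G k, G l; P] ^ p) * (p.factorial * cov[G k', G l'; P] ^ p) := by
    intro k l k' l' ω
    rw [hD]; ring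
  have iDD : ∀ k ∈ I, ∀ l ∈ I, ∀ k' ∈ I, ∀ l' ∈ I,
      Integrable (fun ω => D k l ω * D k' l' ω) P := fun k hk l hl k' hk' l' hl' => by
    simp only [eDD]
    exact (((hS.integrable_H4 (hG k hk) (hG l hl) (hG k' hk') (hG l' hl') p p p p).sub
      ((hS.integrable_H2 (hG k hk) (hG l hl) p p).const_mul _)).sub
      ((hS.integrable_H2 (hG k' hk') (hG l' hl') p p).const_mul _)).add (integrable_const _)
  have bDD : ∀ k ∈ I, ∀ l ∈ I, ∀ k' ∈ I, ∀ l' ∈ I, |∫ ω, D k l ω * D k' l' ω ∂P| ≤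
      C * (|cov[G k, G k'; P]| + |cov[G k, G l'; P]| + |cov[G l, G k'; P]| +
        |cov[G l, G l'; P]|) := fun k hk l hl k' hk' l' hl' => by
    refine le_trans (le_of_eq ?_) (hs (hG k hk) (hG l hl) (hG k' hk') (hG l' hl') (hv k hk)
      (hv l hl) (hv k' hk') (hv l' hl') p p p (by omega))
    congr 1
    simp only [eDD]
    rw [hS.mom2 (hG k hk) (hG l hl) (hv k hk) (hv l hl),
      hS.mom2 (hG k' hk') (hG l' hl') (hv k' hk') (hv l' hl'), if_pos rfl, if_pos rfl]
    have j4 := hS.integrable_H4 (hG k hk) (hG l hl) (hG k' hk') (hG l' hl') p p p p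
    have j2 := (hS.integrable_H2 (hG k hk) (hG l hl) p p).const_mul
      (p.factorial * cov[G k', G l'; P] ^ p)
    have j2' := (hS.integrable_H2 (hG k' hk') (hG l' hl') p p).const_mul
      (p.factorial * cov[G k, G l; P] ^ p)
    rw [integral_add (show Integrable (fun ω =>
        Hq p (G k ω) * (Hq p (G l ω) * Hq p (G k' ω) * Hq p (G l' ω)) -
        p.factorial * cov[G k', G l'; P] ^ p * (Hq p (G k ω) * Hq p (G l ω)) -
        p.factorial * cov[G k, G l; P] ^ p * (Hq p (G k' ω) * Hq p (G l' ω))) P from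
          (j4.sub j2).sub j2') (integrable_const _),
      integral_sub (show Integrable (fun ω =>
        Hq p (G k ω) * (Hq p (G l ω) * Hq p (G k' ω) * Hq p (G l' ω)) -
        p.factorial * cov[G k', G l'; P] ^ p * (Hq p (G k ω) * Hq p (G l ω))) P from
          j4.sub j2) j2',
      integral_sub j4 j2, integral_const_mul, integral_const_mul, integral_const,
      hS.integral_H2 (hG k hk) (hG l hl) (hv k hk) (hv l hl),
      hS.integral_H2 (hG k' hk') (hG l' hl') (hv k' hk') (hv l' hl')]
    simp only [probReal_univ, smul_eq_mul, one_mul, mom4]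
    ring
  have esq : ∀ ω, (∑ k ∈ I, ∑ l ∈ I, c k l * D k l ω) ^ 2 =
      ∑ k ∈ I, ∑ l ∈ I, ∑ k' ∈ I, ∑ l' ∈ I, c k l * c k' l' * (D k l ω * D k' l' ω) := by
    intro ω
    rw [sq, Finset.sum_mul]
    refine Finset.sum_congr rfl fun k _ => ?_
    rw [Finset.sum_mul]
    refine Finset.sum_congr rfl fun l _ => ?_
    rw [Finset.mul_sum]
    refine Finset.sum_congr rfl fun k' _ => ?_
    rw [Finset.mul_sum]
    refine Finset.sum_congr rfl fun l' _ => by ring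
  have i4 : ∀ k ∈ I, ∀ l ∈ I, ∀ k' ∈ I, ∀ l' ∈ I,
      Integrable (fun ω => c k l * c k' l' * (D k l ω * D k' l' ω)) P :=
    fun k hk l hl k' hk' l' hl' => (iDD k hk l hl k' hk' l' hl').const_mul _
  have i3 : ∀ k ∈ I, ∀ l ∈ I, ∀ k' ∈ I,
      Integrable (fun ω => ∑ l' ∈ I, c k l * c k' l' * (D k l ω * D k' l' ω)) P :=
    fun k hk l hl k' hk' => integrable_finsetSum _ fun l' hl' => i4 k hk l hl k' hk' l' hl'
  have i2 : ∀ k ∈ I, ∀ l ∈ I,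
      Integrable (fun ω => ∑ k' ∈ I, ∑ l' ∈ I, c k l * c k' l' * (D k l ω * D k' l' ω)) P :=
    fun k hk l hl => integrable_finsetSum _ fun k' hk' => i3 k hk l hl k' hk'
  have i1 : ∀ k ∈ I, Integrable
      (fun ω => ∑ l ∈ I, ∑ k' ∈ I, ∑ l' ∈ I, c k l * c k' l' * (D k l ω * D k' l' ω)) P :=
    fun k hk => integrable_finsetSum _ fun l hl => i2 k hk l hl
  refine ⟨integrable_finsetSum _ fun k hk => integrable_finsetSum _ fun l hl =>
    (iD k hk l hl).const_mul _, ?_, ?_⟩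
  · change Integrable (fun ω => (∑ k ∈ I, ∑ l ∈ I, c k l * D k l ω) ^ 2) P
    simp only [esq]
    exact integrable_finsetSum _ i1
  · change ∫ ω, (∑ k ∈ I, ∑ l ∈ I, c k l * D k l ω) ^ 2 ∂P ≤ _
    simp only [esq]
    rw [integral_finsetSum _ i1]
    have s4 := sum4_le (I := I) (r := fun k l => |cov[G k, G l; P]|) (A := A)
      (fun _ _ => abs_nonneg _) (fun k l => by rw [covariance_comm]) hA
    calc _ ≤ ∑ k ∈ I, ∑ l ∈ I, ∑ k' ∈ I, ∑ l' ∈ I, (C * K ^ 4) *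
          (|cov[G k, G l; P]| * |cov[G k', G l'; P]| * (|cov[G k, G k'; P]| +
            |cov[G k, G l'; P]| + |cov[G l, G k'; P]| + |cov[G l, G l'; P]|)) := by
          refine Finset.sum_le_sum fun k hk => ?_
          rw [integral_finsetSum _ (i2 k hk)]
          refine Finset.sum_le_sum fun l hl => ?_
          rw [integral_finsetSum _ (i3 k hk l hl)]
          refine Finset.sum_le_sum fun k' hk' => ?_
          rw [integral_finsetSum _ (i4 k hk l hl k' hk')]
          refine Finset.sum_le_sum fun l' hl' => ?_
          rw [integral_const_mul]
          refine (le_abs_self _).trans ?_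
          rw [abs_mul]
          have hcc : |c k l * c k' l'| ≤ K ^ 4 * (|cov[G k, G l; P]| * |cov[G k', G l'; P]|) := by
            simp only [hc, abs_mul]
            have := hw k
            have := hw l
            have := hw k'
            have := hw l'
            calc _ ≤ K * K * |cov[G k, G l; P]| * (K * K * |cov[G k', G l'; P]|) := by gcongr
              _ = _ := by ring
          calc _ ≤ _ := mul_le_mul hcc (bDD k hk l hl k' hk' l' hl') (abs_nonneg _) (by positivity)
            _ = _ := by ring
      _ = (C * K ^ 4) * ∑ k ∈ I, ∑ l ∈ I, ∑ k' ∈ I, ∑ l' ∈ I,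
          (|cov[G k, G l; P]| * |cov[G k', G l'; P]| * (|cov[G k, G k'; P]| +
            |cov[G k, G l'; P]| + |cov[G l, G k'; P]| + |cov[G l, G l'; P]|)) := by
          simp only [Finset.mul_sum]
      _ ≤ (C * K ^ 4) * (4 * (I.card * A ^ 3)) := by gcongr
      _ = _ := by ring

end

section

variable {P : Measure Ω} {ν : ℝ} {x : ℝ → Ω → ℝ}

/-- The weighted normalised sum with deterministic weights, constant on the `M` coarse cells. -/
def stepSum (x : ℝ → Ω → ℝ) (ν : ℝ) (q M : ℕ) (a : ℕ → ℝ) (n : ℕ) (ω : Ω) : ℝ :=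
  ∑ k ∈ Finset.range n, a (M * k / n) * hz x ν n q k ω

/-- The limiting variance `σ² = q! ∑ ρ(k)^q`. -/
def sigma2 (ν : ℝ) (q : ℕ) : ℝ := (q.factorial : ℝ) * ∑' k : ℤ, rho ν k ^ q

lemma abs_rho_le_one (hν : 0 < ν) (hx : IsFBM P ν x) (k : ℤ) :
    |rho ν k| ≤ 1 := by
  have key : ∀ k : ℕ, |rho ν k| ≤ 1 := fun k => by
    have h0 : 0 < k + 1 := k.succ_pos
    have hk : k < k + 1 := k.lt_succ_self
    have h := hx.cov_Gi hν hk h0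
    simp only [Nat.cast_zero, sub_zero] at h
    rw [← h]
    exact hx.cg.abs_cov_le_one (Gi_mem hk) (Gi_mem h0) (hx.var_Gi hν hk) (hx.var_Gi hν h0)
  rcases Int.natAbs_eq k with hk | hk
  · rw [hk]; exact key _
  · rw [hk, rho_neg]; exact key _

lemma summable_rho_pow (hν : 0 < ν) (hν1 : 2 * ν ≤ 1) (hx : IsFBM P ν x) (p : ℕ) :
    Summable fun k : ℤ => |rho ν k ^ (p + 1)| :=
  Summable.of_nonneg_of_le (fun _ => abs_nonneg _) (fun k => by
    rw [abs_pow]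
    exact pow_le_of_le_one (abs_nonneg _) (abs_rho_le_one hν hx k) p.succ_ne_zero)
    (summable_rho hν hν1)

lemma sigma2_nonneg [IsProbabilityMeasure P] (hν : 0 < ν) (hν1 : 2 * ν ≤ 1) (hx : IsFBM P ν x)
    (p : ℕ) : 0 ≤ sigma2 ν (p + 1) := by
  have lim := (tendsto_toeplitz (summable_rho_pow hν hν1 hx p) one_pos (a := fun _ => 1) (K := 1)
    (by simp)).const_mul ((p + 1).factorial : ℝ)
  simp only [one_mul, Finset.range_one, Finset.sum_singleton, one_pow, Nat.cast_one, div_one,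
    mul_one] at lim
  refine ge_of_tendsto' lim fun n => ?_
  have e : ∫ ω, (∑ k ∈ Finset.range n, Hq (p + 1) (Gi x ν n k ω)) ^ 2 ∂P =
      (p + 1).factorial * ∑ k ∈ Finset.range n, ∑ l ∈ Finset.range n,
        rho ν ((k : ℤ) - l) ^ (p + 1) := by
    have i2 : ∀ k ∈ Finset.range n, ∀ l ∈ Finset.range n, Integrable
        (fun ω => Hq (p + 1) (Gi x ν n k ω) * Hq (p + 1) (Gi x ν n l ω)) P := fun k hk l hl =>
      hx.cg.integrable_H2 (Gi_mem (Finset.mem_range.1 hk)) (Gi_mem (Finset.mem_range.1 hl)) _ _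
    simp only [sq, Finset.sum_mul_sum]
    rw [integral_finsetSum _ fun k hk => integrable_finsetSum _ fun l hl => i2 k hk l hl,
      Finset.mul_sum]
    refine Finset.sum_congr rfl fun k hk => ?_
    rw [integral_finsetSum _ fun l hl => i2 k hk l hl, Finset.mul_sum]
    refine Finset.sum_congr rfl fun l hl => ?_
    have hk := Finset.mem_range.1 hk
    have hl := Finset.mem_range.1 hl
    rw [hx.cg.integral_H2 (Gi_mem hk) (Gi_mem hl) (hx.var_Gi hν hk) (hx.var_Gi hν hl),
      hx.cov_Gi hν hk hl]
  have h0 : 0 ≤ ∫ ω, (∑ k ∈ Finset.range n, Hq (p + 1) (Gi x ν n k ω)) ^ 2 ∂P :=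
    integral_nonneg fun _ => sq_nonneg _
  rw [e] at h0
  have : (0 : ℝ) ≤ (n : ℝ)⁻¹ := by positivity
  have := mul_nonneg this h0
  linarith

/-- The comparison `CG.clt_ineq` for two sums over grids of different sizes: the first is close to
a Gaussian variable of variance `s` independent of the second. -/
lemma IsFBM.clt_step_ineq [IsProbabilityMeasure P] (hx : IsFBM P ν x) (hν : 0 < ν) (p : ℕ)
    {n n' : ℕ} (w w' : ℕ → ℝ) {s : ℝ} (hs : 0 ≤ s) :
    ‖∫ ω, Complex.exp (((∑ k ∈ Finset.range n, w k * Hq (p + 1) (Gi x ν n k ω)) +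
        (∑ l ∈ Finset.range n', w' l * Hq (p + 1) (Gi x ν n' l ω)) : ℝ) * Complex.I) ∂P -
      Real.exp (-s / 2) * ∫ ω, Complex.exp
        ((∑ l ∈ Finset.range n', w' l * Hq (p + 1) (Gi x ν n' l ω) : ℝ) * Complex.I) ∂P‖ ≤
    ∫ ω, |((p + 1 : ℕ) * ∑ k ∈ Finset.range n, ∑ l ∈ Finset.range n, w k * w l *
        cov[Gi x ν n k, Gi x ν n l; P] * (Hq p (Gi x ν n k ω) * Hq p (Gi x ν n l ω))) - s| ∂P +
    ∫ ω, |(p + 1 : ℕ) * ∑ k ∈ Finset.range n, ∑ l ∈ Finset.range n', w k * w' l *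
        cov[Gi x ν n k, Gi x ν n' l; P] * (Hq p (Gi x ν n k ω) * Hq p (Gi x ν n' l ω))| ∂P := by
  have key := hx.cg.clt_ineq (ι := Fin n ⊕ Fin n')
    (G := Sum.elim (fun k => Gi x ν n k) (fun l => Gi x ν n' l))
    (fun k => by rcases k with k | k <;> exact Gi_mem k.2)
    (fun k => by rcases k with k | k <;> exact hx.var_Gi hν k.2) p
    (Sum.elim (fun k => w k) (fun _ => 0)) (Sum.elim (fun _ => 0) (fun l => w' l)) s hs
  simpa only [Fintype.sum_sum_type, Sum.elim_inl, Sum.elim_inr, zero_mul, mul_zero,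
    Finset.sum_const_zero, add_zero, zero_add, Finset.sum_range] using key

lemma tendsto_half_mul_rpow (h : 4 * ν ≤ 1) :
    Tendsto (fun n : ℕ => (n : ℝ) ^ (-(1 : ℝ) / 2) * (n : ℝ) ^ ν) atTop (nhds 0) := by
  have h1 : Tendsto (fun n : ℕ => ((n : ℝ)) ^ (-(1 / 2 - ν))) atTop (nhds 0) :=
    (tendsto_rpow_neg_atTop (by linarith)).comp tendsto_natCast_atTop_atTop
  refine h1.congr' ?_
  filter_upwards [eventually_gt_atTop 0] with n hn
  have hn' : (0 : ℝ) < n := by exact_mod_cast hn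
  rw [← Real.rpow_add hn']
  congr 1
  ring

/-- Mixing central limit theorem: the characteristic function of a step-weighted sum on a fine grid
factorises asymptotically from that of a step-weighted sum on any fixed grid. -/
lemma clt_step [IsProbabilityMeasure P] {p : ℕ} (hx : IsFBM P ν x) (h : Crit ν p) {M : ℕ}
    (hM : 0 < M) {a : ℕ → ℝ} {K : ℝ} (ha : ∀ b, |a b| ≤ K) (M' n' : ℕ) (a' : ℕ → ℝ) :
    Tendsto (fun n => ∫ ω, Complex.exp ((stepSum x ν (p + 1) M a n ω +
        stepSum x ν (p + 1) M' a' n' ω : ℝ) * Complex.I) ∂P) atTop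
      (nhds (Real.exp (-(sigma2 ν (p + 1) * ((∑ b ∈ Finset.range M, a b ^ 2) / M)) / 2) *
        ∫ ω, Complex.exp ((stepSum x ν (p + 1) M' a' n' ω : ℝ) * Complex.I) ∂P)) := by
  have hν := h.pos
  have hν1 := h.le_one
  set A := ∑' j : ℤ, |rho ν j| with hA
  have hA0 : 0 ≤ A := tsum_nonneg fun _ => abs_nonneg _
  have hK : 0 ≤ K := (abs_nonneg _).trans (ha 0)
  set s := sigma2 ν (p + 1) * ((∑ b ∈ Finset.range M, a b ^ 2) / M) with hs
  have hs0 : 0 ≤ s := mul_nonneg (sigma2_nonneg hν hν1 hx p) (by positivity)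
  obtain ⟨C, hC, hvar⟩ := hx.cg.var_form p
  set τ : ℕ → ℝ := fun n => (p + 1).factorial * ((n : ℝ)⁻¹ * ∑ k ∈ Finset.range n,
    ∑ l ∈ Finset.range n, a (M * k / n) * a (M * l / n) * rho ν ((k : ℤ) - l) ^ (p + 1)) with hτ
  have hτs : Tendsto τ atTop (nhds s) := by
    have := (tendsto_toeplitz (summable_rho_pow hν hν1 hx p) hM ha).const_mul
      ((p + 1).factorial : ℝ)
    rwa [← mul_assoc] at this
  set w' : ℕ → ℝ := fun l => (n' : ℝ) ^ (-(1 : ℝ) / 2) * a' (M' * l / n') with hw'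
  set D : ℝ := ∑ l ∈ Finset.range n', |w' l| * (n' : ℝ) ^ ν * 2 with hD
  -- three errors: the fluctuation of the quadratic form, the convergence of its mean, and the
  -- correlation with the fixed sum
  set E : ℕ → ℝ := fun n => ((p + 1 : ℕ) * √(C * K ^ 4 * A ^ 3 * (n : ℝ)⁻¹) + |τ n - s|) +
    (p + 1 : ℕ) * (K * p.factorial * D * ((n : ℝ) ^ (-(1 : ℝ) / 2) * (n : ℝ) ^ ν)) with hE
  have hE0 : Tendsto E atTop (nhds 0) := by
    have h1 : Tendsto (fun n : ℕ => √(C * K ^ 4 * A ^ 3 * (n : ℝ)⁻¹)) atTop (nhds 0) := by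
      have := ((tendsto_inv_atTop_nhds_zero_nat (𝕜 := ℝ)).const_mul (C * K ^ 4 * A ^ 3)).sqrt
      simpa using this
    have h2 : Tendsto (fun n => |τ n - s|) atTop (nhds 0) := by
      have := (hτs.sub_const s).abs
      simpa using this
    have := ((h1.const_mul ((p + 1 : ℕ) : ℝ)).add h2).add
      (((tendsto_half_mul_rpow h.le).const_mul (K * p.factorial * D)).const_mul ((p + 1 : ℕ) : ℝ))
    simp only [mul_zero, add_zero] at this
    exact this
  rw [tendsto_iff_norm_sub_tendsto_zero]
  refine squeeze_zero' (Eventually.of_forall fun _ => norm_nonneg _) ?_ hE0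
  filter_upwards [eventually_gt_atTop 0] with n hn
  have hn' : (0 : ℝ) < n := by exact_mod_cast hn
  set h2 : ℝ := (n : ℝ) ^ (-(1 : ℝ) / 2) with hh2
  have hh0 : 0 < h2 := Real.rpow_pos_of_pos hn' _
  have hsq : h2 ^ 2 = (n : ℝ)⁻¹ := sq_half n
  set w : ℕ → ℝ := fun k => h2 * a (M * k / n) with hw
  have hwK : ∀ k, |w k| ≤ h2 * K := fun k => by
    rw [hw]; dsimp only
    rw [abs_mul, abs_of_pos hh0]
    exact mul_le_mul_of_nonneg_left (ha _) hh0.le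
  have e1 : ∀ ω, stepSum x ν (p + 1) M a n ω =
      ∑ k ∈ Finset.range n, w k * Hq (p + 1) (Gi x ν n k ω) := fun ω =>
    Finset.sum_congr rfl fun k _ => by rw [hz, hermIncr_eq, hw]; ring
  have e2 : ∀ ω, stepSum x ν (p + 1) M' a' n' ω =
      ∑ k ∈ Finset.range n', w' k * Hq (p + 1) (Gi x ν n' k ω) := fun ω =>
    Finset.sum_congr rfl fun k _ => by rw [hz, hermIncr_eq, hw']; ring
  simp only [e1, e2]
  refine (hx.clt_step_ineq hν p w w' hs0).trans ?_
  have gm : ∀ k ∈ Finset.range n, Gi x ν n k ∈ incr x := fun k hk => Gi_mem (Finset.mem_range.1 hk)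
  have gv : ∀ k ∈ Finset.range n, cov[Gi x ν n k, Gi x ν n k; P] = 1 := fun k hk =>
    hx.var_Gi hν (Finset.mem_range.1 hk)
  refine add_le_add ?_ ?_
  · obtain ⟨i1, i2, i3⟩ := hvar (I := Finset.range n) (G := Gi x ν n) (w := w) (A := A)
      (K := h2 * K) gm gv (fun k hk => by
        refine le_trans (le_of_eq (Finset.sum_congr rfl fun l hl => ?_))
          (sum_rho_le hν hν1 (Finset.range n) k)
        rw [hx.cov_Gi hν (Finset.mem_range.1 hk) (Finset.mem_range.1 hl)]) hwK
    set V : Ω → ℝ := fun ω => ∑ k ∈ Finset.range n, ∑ l ∈ Finset.range n, w k * w l *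
      cov[Gi x ν n k, Gi x ν n l; P] * (Hq p (Gi x ν n k ω) * Hq p (Gi x ν n l ω) -
        p.factorial * cov[Gi x ν n k, Gi x ν n l; P] ^ p) with hV
    have eT : ∀ ω, ((p + 1 : ℕ) : ℝ) * ∑ k ∈ Finset.range n, ∑ l ∈ Finset.range n, w k * w l *
        cov[Gi x ν n k, Gi x ν n l; P] * (Hq p (Gi x ν n k ω) * Hq p (Gi x ν n l ω)) - s =
        (p + 1 : ℕ) * V ω + (τ n - s) := by
      intro ω
      have : τ n = (p + 1 : ℕ) * ∑ k ∈ Finset.range n, ∑ l ∈ Finset.range n, w k * w l *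
          cov[Gi x ν n k, Gi x ν n l; P] *
            (p.factorial * cov[Gi x ν n k, Gi x ν n l; P] ^ p) := by
        rw [hτ]
        dsimp only
        rw [Nat.factorial_succ, ← hsq]
        simp only [Finset.mul_sum]
        refine Finset.sum_congr rfl fun k hk => Finset.sum_congr rfl fun l hl => ?_
        rw [hx.cov_Gi hν (Finset.mem_range.1 hk) (Finset.mem_range.1 hl), hw]
        push_cast
        ring
      rw [this, hV]
      dsimp only
      simp only [mul_sub, Finset.sum_sub_distrib]
      ring
    simp only [eT]
    have b1 := integral_abs_le_sqrt i1 i2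
    have b2 : √(∫ ω, V ω ^ 2 ∂P) ≤ √(C * K ^ 4 * A ^ 3 * (n : ℝ)⁻¹) := by
      refine Real.sqrt_le_sqrt (i3.trans (le_of_eq ?_))
      rw [Finset.card_range, mul_pow, show h2 ^ 4 = (h2 ^ 2) ^ 2 by ring, hsq]
      field_simp
    calc _ ≤ ∫ ω, ((p + 1 : ℕ) * |V ω| + |τ n - s|) ∂P := by
          refine integral_mono ((i1.const_mul _).add (integrable_const _)).abs
            ((i1.abs.const_mul _).add (integrable_const _)) fun ω => ?_
          refine (abs_add_le _ _).trans ?_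
          rw [abs_mul, Nat.abs_cast]
      _ = (p + 1 : ℕ) * ∫ ω, |V ω| ∂P + |τ n - s| := by
          rw [integral_add (i1.abs.const_mul _) (integrable_const _), integral_const_mul,
            integral_const]
          simp
      _ ≤ _ := by
          have := b1.trans b2
          gcongr
  · have iH : ∀ k ∈ Finset.range n, ∀ l ∈ Finset.range n',
        Integrable (fun ω => Hq p (Gi x ν n k ω) * Hq p (Gi x ν n' l ω)) P := fun k hk l hl =>
      hx.cg.integrable_H2 (gm k hk) (Gi_mem (Finset.mem_range.1 hl)) _ _
    have bH : ∀ k ∈ Finset.range n, ∀ l ∈ Finset.range n',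
        ∫ ω, |Hq p (Gi x ν n k ω) * Hq p (Gi x ν n' l ω)| ∂P ≤ p.factorial := fun k hk l hl => by
      have ml := Gi_mem (x := x) (ν := ν) (Finset.mem_range.1 hl)
      have j1 := hx.cg.integrable_H2 (gm k hk) (gm k hk) p p
      have j2 := hx.cg.integrable_H2 ml ml p p
      have k1 := hx.cg.integral_H2 (gm k hk) (gm k hk) (gv k hk) (gv k hk) p
      have k2 := hx.cg.integral_H2 ml ml (hx.var_Gi hν (Finset.mem_range.1 hl))
        (hx.var_Gi hν (Finset.mem_range.1 hl)) p
      rw [gv k hk, one_pow, mul_one] at k1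
      rw [hx.var_Gi hν (Finset.mem_range.1 hl), one_pow, mul_one] at k2
      calc _ ≤ ∫ ω, ((1 / 2) * (Hq p (Gi x ν n k ω) * Hq p (Gi x ν n k ω)) +
            (1 / 2) * (Hq p (Gi x ν n' l ω) * Hq p (Gi x ν n' l ω))) ∂P := by
            refine integral_mono (iH k hk l hl).abs ((j1.const_mul _).add (j2.const_mul _))
              fun ω => ?_
            dsimp only
            rw [abs_mul]
            have := two_mul_le_add_sq |Hq p (Gi x ν n k ω)| |Hq p (Gi x ν n' l ω)|
            rw [sq_abs, sq_abs] at this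
            nlinarith
        _ = _ := by
            rw [integral_add (j1.const_mul _) (j2.const_mul _), integral_const_mul,
              integral_const_mul, k1, k2]
            ring
    have ib : Integrable (fun ω => ∑ k ∈ Finset.range n, ∑ l ∈ Finset.range n',
        h2 * K * |w' l| * |cov[Gi x ν n k, Gi x ν n' l; P]| *
          |Hq p (Gi x ν n k ω) * Hq p (Gi x ν n' l ω)|) P :=
      integrable_finsetSum _ fun k hk => integrable_finsetSum _ fun l hl =>
        (iH k hk l hl).abs.const_mul _
    have ia : Integrable (fun ω => ∑ k ∈ Finset.range n, ∑ l ∈ Finset.range n',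
        w k * w' l * cov[Gi x ν n k, Gi x ν n' l; P] *
          (Hq p (Gi x ν n k ω) * Hq p (Gi x ν n' l ω))) P :=
      integrable_finsetSum _ fun k hk => integrable_finsetSum _ fun l hl =>
        (iH k hk l hl).const_mul _
    simp only [abs_mul ((p + 1 : ℕ) : ℝ), Nat.abs_cast]
    rw [integral_const_mul]
    refine mul_le_mul_of_nonneg_left ?_ (by positivity)
    calc _ ≤ ∫ ω, ∑ k ∈ Finset.range n, ∑ l ∈ Finset.range n',
        h2 * K * |w' l| * |cov[Gi x ν n k, Gi x ν n' l; P]| *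
          |Hq p (Gi x ν n k ω) * Hq p (Gi x ν n' l ω)| ∂P := by
          refine integral_mono ia.abs ib fun ω => ?_
          refine (Finset.abs_sum_le_sum_abs _ _).trans (Finset.sum_le_sum fun k _ => ?_)
          refine (Finset.abs_sum_le_sum_abs _ _).trans (Finset.sum_le_sum fun l _ => ?_)
          rw [abs_mul, abs_mul, abs_mul (w k)]
          have := hwK k
          gcongr
      _ ≤ ∑ k ∈ Finset.range n, ∑ l ∈ Finset.range n',
          h2 * K * |w' l| * |cov[Gi x ν n k, Gi x ν n' l; P]| * p.factorial := by
          rw [integral_finsetSum _ fun k hk => integrable_finsetSum _ fun l hl =>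
            (iH k hk l hl).abs.const_mul _]
          refine Finset.sum_le_sum fun k hk => ?_
          rw [integral_finsetSum _ fun l hl => (iH k hk l hl).abs.const_mul _]
          refine Finset.sum_le_sum fun l hl => ?_
          rw [integral_const_mul]
          exact mul_le_mul_of_nonneg_left (bH k hk l hl) (by positivity)
      _ = ∑ l ∈ Finset.range n', h2 * K * |w' l| * p.factorial *
          ∑ k ∈ Finset.range n, |cov[Gi x ν n k, Gi x ν n' l; P]| := by
          rw [Finset.sum_comm]
          refine Finset.sum_congr rfl fun l _ => ?_
          rw [Finset.mul_sum]
          refine Finset.sum_congr rfl fun k _ => by ring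
      _ ≤ ∑ l ∈ Finset.range n', h2 * K * |w' l| * p.factorial *
          ((n' : ℝ) ^ ν * (2 * (n : ℝ) ^ ν)) := by
          refine Finset.sum_le_sum fun l hl => ?_
          have hl := Finset.mem_range.1 hl
          have := hx.sum_cov_Gi_incr_le hν (n := n) (subset_refl _) (grid_mem hl.le)
            (grid_mem' hl)
          have e : ∑ k ∈ Finset.range n, |cov[Gi x ν n k, Gi x ν n' l; P]| = (n' : ℝ) ^ ν *
              ∑ k ∈ Finset.range n, |cov[Gi x ν n k, fun ω => x (((l : ℝ) + 1) / n') ω -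
                x ((l : ℝ) / n') ω; P]| := by
            rw [Finset.mul_sum]
            refine Finset.sum_congr rfl fun k _ => ?_
            rw [show Gi x ν n' l = fun ω => (n' : ℝ) ^ ν * (x (((l : ℝ) + 1) / n') ω -
                x ((l : ℝ) / n') ω) from rfl, covariance_const_mul_right, abs_mul,
              abs_of_nonneg (Real.rpow_nonneg (by positivity) _)]
          rw [e]
          gcongr
      _ = _ := by
          rw [hD]
          simp only [Finset.mul_sum, Finset.sum_mul]
          refine Finset.sum_congr rfl fun l _ => by ring

end

/-! ### Stable convergence -/

section

variable {P : Measure Ω} {ν : ℝ} {x : ℝ → Ω → ℝ}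

/-- Convergence of a sequence approximated, eventually and with vanishing error, by convergent
sequences. -/
lemma tendsto_approx {u : ℕ → ℂ} {l : ℂ} (u' : ℕ → ℕ → ℂ) (l' : ℕ → ℂ) (e : ℕ → ℝ)
    (h1 : ∀ j, Tendsto (u' j) atTop (nhds (l' j))) (h2 : Tendsto l' atTop (nhds l))
    (h3 : ∀ j, ∀ᶠ n in atTop, ‖u n - u' j n‖ ≤ e j) (h4 : Tendsto e atTop (nhds 0)) :
    Tendsto u atTop (nhds l) := by
  rw [Metric.tendsto_nhds]
  intro ε hε
  obtain ⟨j, a, b⟩ := ((Metric.tendsto_nhds.1 h2 (ε / 3) (by positivity)).and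
    (Metric.tendsto_nhds.1 h4 (ε / 3) (by positivity))).exists
  filter_upwards [h3 j, Metric.tendsto_nhds.1 (h1 j) (ε / 3) (by positivity)] with n c d
  rw [Real.dist_eq, sub_zero] at b
  have b := (abs_lt.1 b).2
  rw [← dist_eq_norm] at c
  have t1 := dist_triangle (u n) (u' j n) l
  have t2 := dist_triangle (u' j n) (l' j) l
  linarith

/-- A bounded sequence in a Hilbert space that is asymptotically orthogonal to each of its own terms
converges weakly to `0`. -/
lemma weak_of_self {E : Type*} [NormedAddCommGroup E] [InnerProductSpace ℂ E] [CompleteSpace E]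
    {f : ℕ → E} {B : ℝ} (hB : ∀ n, ‖f n‖ ≤ B)
    (hf : ∀ m, Tendsto (fun n => inner ℂ (f m) (f n)) atTop (nhds 0)) (z : E) :
    Tendsto (fun n => inner ℂ z (f n)) atTop (nhds 0) := by
  set K := (Submodule.span ℂ (Set.range f)).topologicalClosure with hK
  have hB0 : 0 ≤ B := (norm_nonneg _).trans (hB 0)
  have hspan : ∀ v ∈ Submodule.span ℂ (Set.range f),
      Tendsto (fun n => inner ℂ v (f n)) atTop (nhds 0) := by
    intro v hv
    induction hv using Submodule.span_induction with
    | mem v hv => obtain ⟨m, rfl⟩ := hv; exact hf m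
    | zero => simp
    | add a b _ _ ha hb => simpa [inner_add_left] using ha.add hb
    | smul c a _ ha => simpa [inner_smul_left, mul_comm] using ha.const_mul (starRingEnd ℂ c)
  have hcl : ∀ v ∈ K, Tendsto (fun n => inner ℂ v (f n)) atTop (nhds 0) := by
    intro v hv
    rw [hK, ← SetLike.mem_coe, Submodule.topologicalClosure_coe] at hv
    have : ∀ j : ℕ, ∃ w ∈ Submodule.span ℂ (Set.range f), ‖v - w‖ ≤ 1 / ((j : ℝ) + 1) := fun j => by
      obtain ⟨w, hw, hd⟩ := Metric.mem_closure_iff.1 hv (1 / ((j : ℝ) + 1)) (by positivity)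
      exact ⟨w, hw, by rw [← dist_eq_norm]; exact hd.le⟩
    choose w hw hd using this
    refine tendsto_approx (fun j n => inner ℂ (w j) (f n)) (fun _ => 0)
      (fun j => 1 / ((j : ℝ) + 1) * B) (fun j => hspan _ (hw j)) tendsto_const_nhds
      (fun j => Eventually.of_forall fun n => ?_) ?_
    · rw [← inner_sub_left]
      exact (norm_inner_le_norm _ _).trans (mul_le_mul (hd j) (hB n) (norm_nonneg _) (by positivity))
    · simpa using tendsto_one_div_add_atTop_nhds_zero_nat.mul_const B
  -- every `f n` lies in the closed span `K`, so only the projection of `z` on `K` matters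
  have hz : z - K.starProjection z ∈ Kᗮ := Submodule.sub_starProjection_mem_orthogonal z
  refine (hcl _ (K.starProjection_apply_mem z)).congr fun n => ?_
  have hfn : f n ∈ K := Submodule.le_topologicalClosure _ (Submodule.subset_span ⟨n, rfl⟩)
  have := (Submodule.mem_orthogonal' _ _).1 hz (f n) hfn
  rw [inner_sub_left, sub_eq_zero] at this
  exact this.symm

/-- A bounded sequence that is asymptotically orthogonal to each of its own terms converges weakly
to zero, tested against bounded `Z`. -/
lemma weak_of_self_integral [IsProbabilityMeasure P] {f : ℕ → Ω → ℂ} {B : ℝ}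
    (hm : ∀ n, AEStronglyMeasurable (f n) P) (hB : ∀ n ω, ‖f n ω‖ ≤ B)
    (hf : ∀ m, Tendsto (fun n => ∫ ω, (starRingEnd ℂ) (f m ω) * f n ω ∂P) atTop (nhds 0))
    {Z : Ω → ℂ} (hZ : AEStronglyMeasurable Z P) {R : ℝ} (hR : ∀ ω, ‖Z ω‖ ≤ R) :
    Tendsto (fun n => ∫ ω, Z ω * f n ω ∂P) atTop (nhds 0) := by
  have L : ∀ n, MemLp (f n) 2 P := fun n => MemLp.of_bound (hm n) B (ae_of_all _ (hB n))
  have LZ : MemLp (fun ω => (starRingEnd ℂ) (Z ω)) 2 P :=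
    MemLp.of_bound (Complex.continuous_conj.comp_aestronglyMeasurable hZ) R
      (ae_of_all _ fun ω => by simpa using hR ω)
  have key : ∀ (g h : Ω → ℂ) (hg : MemLp g 2 P) (hh : MemLp h 2 P),
      inner ℂ (hg.toLp g) (hh.toLp h) = ∫ ω, (starRingEnd ℂ) (g ω) * h ω ∂P := fun g h hg hh => by
    rw [L2.inner_def]
    refine integral_congr_ae ?_
    filter_upwards [hg.coeFn_toLp, hh.coeFn_toLp] with ω a b
    rw [a, b, RCLike.inner_apply, mul_comm]
  have hB0 : 0 ≤ B := by
    obtain ⟨ω⟩ := nonempty_of_isProbabilityMeasure P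
    exact (norm_nonneg _).trans (hB 0 ω)
  have := weak_of_self (f := fun n => (L n).toLp (f n)) (B := B) (fun n => by
    rw [Lp.norm_toLp]
    refine ENNReal.toReal_le_of_le_ofReal hB0 ?_
    refine (eLpNorm_le_of_ae_bound (ae_of_all _ (hB n))).trans ?_
    simp) (fun m => by simpa only [key] using hf m) (LZ.toLp _)
  simpa only [key, Complex.conj_conj] using this

lemma measurable_Gi (hx : IsFBM P ν x) (n k : ℕ) : Measurable (Gi x ν n k) :=
  ((hx.1 _).sub (hx.1 _)).const_mul _

lemma measurable_hz (hx : IsFBM P ν x) (q n k : ℕ) : Measurable (hz x ν n q k) := by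
  have : Continuous (Hq q) := (PG_Hq q).1
  exact (this.measurable.comp (measurable_Gi hx n k)).const_mul _

lemma measurable_stepSum (hx : IsFBM P ν x) (q M : ℕ) (a : ℕ → ℝ) (n : ℕ) :
    Measurable (stepSum x ν q M a n) := by
  unfold stepSum
  exact Finset.measurable_sum _ fun k _ => (measurable_hz hx q n k).const_mul _

lemma integrable_cexp [IsProbabilityMeasure P] {f : Ω → ℝ} (hf : Measurable f) :
    Integrable (fun ω => Complex.exp ((f ω : ℝ) * Complex.I)) P :=
  Integrable.of_bound (by fun_prop) 1 (ae_of_all _ fun ω => by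
    rw [Complex.norm_exp_ofReal_mul_I])

/-- Stable central limit theorem for deterministic step weights: the limit is independent of any
bounded random variable. -/
lemma clt_step_stable [IsProbabilityMeasure P] {p : ℕ} (hx : IsFBM P ν x) (h : Crit ν p) {M : ℕ}
    (hM : 0 < M) {a : ℕ → ℝ} {K : ℝ} (ha : ∀ b, |a b| ≤ K)
    {Z : Ω → ℂ} (hZ : AEStronglyMeasurable Z P) {R : ℝ} (hR : ∀ ω, ‖Z ω‖ ≤ R) :
    Tendsto (fun n => ∫ ω, Z ω * Complex.exp ((stepSum x ν (p + 1) M a n ω : ℝ) * Complex.I) ∂P)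
      atTop (nhds (∫ ω, Z ω *
        (Real.exp (-(sigma2 ν (p + 1) * ((∑ b ∈ Finset.range M, a b ^ 2) / M)) / 2) : ℝ) ∂P)) := by
  set c : ℝ := Real.exp (-(sigma2 ν (p + 1) * ((∑ b ∈ Finset.range M, a b ^ 2) / M)) / 2) with hc
  set S := fun n => stepSum x ν (p + 1) M a n with hS
  have mS : ∀ n, Measurable (S n) := fun n => measurable_stepSum hx _ _ _ _
  have iS : ∀ n, Integrable (fun ω => Complex.exp ((S n ω : ℝ) * Complex.I)) P := fun n =>
    integrable_cexp (mS n)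
  have iN : ∀ n, Integrable (fun ω => Complex.exp ((-S n ω : ℝ) * Complex.I)) P := fun n =>
    integrable_cexp (mS n).neg
  have lim0 : Tendsto (fun n => ∫ ω, Complex.exp ((S n ω : ℝ) * Complex.I) ∂P) atTop
      (nhds (c : ℂ)) := by
    have := clt_step hx h hM ha 1 0 (fun _ => 0)
    have e : ∀ ω, stepSum x ν (p + 1) 1 (fun _ => 0) 0 ω = 0 := fun ω => by simp [stepSum]
    simp only [e, add_zero, ← hc, Complex.ofReal_zero, zero_mul, Complex.exp_zero] at this
    simpa only [integral_const, probReal_univ, one_smul, mul_one] using this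
  have limm : ∀ m, Tendsto (fun n => ∫ ω, Complex.exp ((S n ω + -S m ω : ℝ) * Complex.I) ∂P) atTop
      (nhds (c * ∫ ω, Complex.exp ((-S m ω : ℝ) * Complex.I) ∂P)) := fun m => by
    have := clt_step hx h hM ha M m (fun b => -a b)
    have e : ∀ ω, stepSum x ν (p + 1) M (fun b => -a b) m ω = -S m ω := fun ω => by
      simp [stepSum, hS]
    simpa only [e, ← hc] using this
  have main : Tendsto (fun n => ∫ ω, Z ω * (Complex.exp ((S n ω : ℝ) * Complex.I) - c) ∂P)
      atTop (nhds 0) := by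
    refine weak_of_self_integral (B := 1 + |c|) (fun n => by
      have := mS n; fun_prop) (fun n ω => ?_) (fun m => ?_) hZ hR
    · refine (norm_sub_le _ _).trans ?_
      rw [Complex.norm_exp_ofReal_mul_I, Complex.norm_real, Real.norm_eq_abs]
    · have e : ∀ n, ∫ ω, (starRingEnd ℂ) (Complex.exp ((S m ω : ℝ) * Complex.I) - c) *
          (Complex.exp ((S n ω : ℝ) * Complex.I) - c) ∂P =
          ∫ ω, Complex.exp ((S n ω + -S m ω : ℝ) * Complex.I) ∂P -
          c * (∫ ω, Complex.exp ((S n ω : ℝ) * Complex.I) ∂P) -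
          c * (∫ ω, Complex.exp ((-S m ω : ℝ) * Complex.I) ∂P) + c * c := by
        intro n
        have e1 : ∀ ω, (starRingEnd ℂ) (Complex.exp ((S m ω : ℝ) * Complex.I) - c) *
          (Complex.exp ((S n ω : ℝ) * Complex.I) - c) =
          Complex.exp ((S n ω + -S m ω : ℝ) * Complex.I) -
          c * Complex.exp ((S n ω : ℝ) * Complex.I) -
          c * Complex.exp ((-S m ω : ℝ) * Complex.I) + c * c := fun ω => by
          rw [map_sub, Complex.conj_ofReal, ← Complex.exp_conj, map_mul, Complex.conj_ofReal,
            Complex.conj_I, Complex.ofReal_add, add_mul, Complex.exp_add, Complex.ofReal_neg,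
            neg_mul, mul_neg]
          ring
        have i0 : Integrable (fun ω => Complex.exp ((S n ω + -S m ω : ℝ) * Complex.I)) P :=
          integrable_cexp ((mS n).add (mS m).neg)
        have i1 : Integrable (fun ω => Complex.exp ((S n ω + -S m ω : ℝ) * Complex.I) -
          c * Complex.exp ((S n ω : ℝ) * Complex.I)) P := i0.sub ((iS n).const_mul _)
        have i2 : Integrable (fun ω => Complex.exp ((S n ω + -S m ω : ℝ) * Complex.I) -
          c * Complex.exp ((S n ω : ℝ) * Complex.I) -
          c * Complex.exp ((-S m ω : ℝ) * Complex.I)) P := i1.sub ((iN m).const_mul _)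
        simp only [e1]
        rw [integral_add i2 (integrable_const _), integral_sub i1 ((iN m).const_mul _),
          integral_sub i0 ((iS n).const_mul _), integral_const_mul, integral_const_mul]
        simp
      simp only [e]
      have := (((limm m).sub (lim0.const_mul (c : ℂ))).sub_const
        ((c : ℂ) * (∫ ω, Complex.exp ((-S m ω : ℝ) * Complex.I) ∂P))).add_const ((c : ℂ) * c)
      convert this using 2
      ring
  have iZ : Integrable Z P := Integrable.of_bound hZ R (ae_of_all _ hR)
  have iZS : ∀ n, Integrable (fun ω => Z ω * Complex.exp ((S n ω : ℝ) * Complex.I)) P := fun n =>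
    (iS n).bdd_mul hZ (ae_of_all _ hR)
  have := main.add_const (∫ ω, Z ω * c ∂P)
  rw [zero_add] at this
  refine this.congr fun n => ?_
  simp only [mul_sub]
  rw [integral_sub (iZS n) (iZ.mul_const _), sub_add_cancel]

end

/-! ### Random step weights -/

section

variable {P : Measure Ω} {ν : ℝ} {x : ℝ → Ω → ℝ}

lemma measurable_xlift (hx : IsFBM P ν x) (i : ℕ) (s t : ℝ) : Measurable (xlift x i s t) :=
  (((hx.1 t).sub (hx.1 s)).pow_const i).div_const _

lemma memLp_xlift_hz (hx : IsFBM P ν x) {i q n k : ℕ} {s t : ℝ} (hs : s ∈ Set.Icc (0 : ℝ) 1)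
    (ht : t ∈ Set.Icc (0 : ℝ) 1) (hk : k < n) :
    MemLp (fun ω => xlift x i s t ω * hz x ν n q k ω) 2 P := by
  have hm : Measurable fun ω => xlift x i s t ω * hz x ν n q k ω :=
    (measurable_xlift hx i s t).mul (measurable_hz hx q n k)
  rw [memLp_two_iff_integrable_sq hm.aestronglyMeasurable]
  have hV : ∀ j, (![fun ω => x t ω - x s ω, Gi x ν n k] : Fin 2 → Ω → ℝ) j ∈ incr x := by
    intro j
    fin_cases j
    · exact incr_mem' hs ht
    · exact Gi_mem hk
  have := (hx.cg.integrable hV (((PG.eval 0).pow (2 * i)).mul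
    (((PG_Hq q).comp (PG.eval 1)).pow 2))).const_mul
      (((n : ℝ) ^ (-(1 : ℝ) / 2) / i.factorial) ^ 2)
  refine this.congr (ae_of_all _ fun ω => ?_)
  simp only [Matrix.cons_val_zero, Matrix.cons_val_one]
  rw [hz, hermIncr_eq, xlift]
  ring

lemma integral_abs_mul_le {f g : Ω → ℝ} (hf : MemLp f 2 P) (hg : MemLp g 2 P) {α β : ℝ}
    (hα : 0 ≤ α) (hβ : 0 ≤ β) (h1 : ∫ ω, f ω ^ 2 ∂P ≤ α ^ 2) (h2 : ∫ ω, g ω ^ 2 ∂P ≤ β ^ 2) :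
    ∫ ω, |f ω * g ω| ∂P ≤ α * β := by
  have := integral_mul_norm_le_Lp_mul_Lq (μ := P) (f := f) (g := g) Real.HolderConjugate.two_two
    (by simpa using hf) (by simpa using hg)
  simp only [Real.norm_eq_abs, Real.rpow_two, sq_abs] at this
  simp only [abs_mul]
  refine this.trans ?_
  rw [← Real.sqrt_eq_rpow, ← Real.sqrt_eq_rpow]
  exact mul_le_mul (Real.sqrt_le_iff.2 ⟨hα, h1⟩) (Real.sqrt_le_iff.2 ⟨hβ, h2⟩) (Real.sqrt_nonneg _) hα

lemma memLp_cellSum (hx : IsFBM P ν x) {q n : ℕ} {I : Finset ℕ} (hI : I ⊆ Finset.range n) :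
    MemLp (fun ω => ∑ k ∈ I, hz x ν n q k ω) 2 P := by
  refine memLp_finsetSum _ fun k hk => ?_
  have := memLp_xlift_hz hx (i := 0) (q := q) (s := 0) (t := 0) (by simp) (by simp)
    (Finset.mem_range.1 (hI hk))
  simpa [xlift] using this

/-- The normalised sums over cells are bounded in `L¹`, uniformly in the partition and the cell.
-/
lemma integral_abs_cellSum_le {p : ℕ} [IsProbabilityMeasure P] (hx : IsFBM P ν x) (h : Crit ν p) :
    ∃ D : ℝ, 0 ≤ D ∧ ∀ n M b : ℕ, 0 < M → b < M →
      ∫ ω, |∑ k ∈ cell n M b, hz x ν n (p + 1) k ω| ∂P ≤ D := by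
  obtain ⟨C, hC, hs⟩ := secondX hx h
  refine ⟨√C, Real.sqrt_nonneg _, fun n M b hM hb => ?_⟩
  have L := memLp_cellSum hx (q := p + 1) (cell_subset (n := n) hM hb)
  refine (integral_abs_le_sqrt (L.integrable one_le_two) L.integrable_sq).trans
    (Real.sqrt_le_sqrt ?_)
  have h1 := cellStart_mono (n := n) hM (Nat.le_succ b)
  have h2 := cellStart_le (n := n) hM (j := b + 1) hb
  have := hs n _ _ h1 h2 0 (by omega)
  simp only [xlift, pow_zero, Nat.factorial_zero, Nat.cast_one, div_one, one_mul, Nat.cast_zero,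
    zero_mul, mul_zero, add_zero, Real.rpow_one] at this
  refine this.trans (mul_le_of_le_one_right hC (div_le_one_of_le₀ ?_ (by positivity)))
  have : (cellStart n M (b + 1) : ℝ) ≤ n := by exact_mod_cast h2
  have : (0 : ℝ) ≤ cellStart n M b := by positivity
  linarith

/-- Sum weighted by random variables that are constant on the `M` coarse cells. -/
def ranSum (x : ℝ → Ω → ℝ) (ν : ℝ) (q M : ℕ) (w : ℕ → Ω → ℝ) (n : ℕ) (ω : Ω) : ℝ :=
  ∑ k ∈ Finset.range n, w (M * k / n) ω * hz x ν n q k ω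

lemma norm_cexp_sub_le (a b : ℝ) :
    ‖Complex.exp ((a : ℝ) * Complex.I) - Complex.exp ((b : ℝ) * Complex.I)‖ ≤ |a - b| := by
  have : Complex.exp ((a : ℝ) * Complex.I) - Complex.exp ((b : ℝ) * Complex.I) =
      Complex.exp ((b : ℝ) * Complex.I) * (Complex.exp (Complex.I * (a - b : ℝ)) - 1) := by
    rw [mul_sub, ← Complex.exp_add, mul_one]
    congr 2
    push_cast
    ring
  rw [this, norm_mul, Complex.norm_exp_ofReal_mul_I, one_mul]
  exact Real.norm_exp_I_mul_ofReal_sub_one_le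

lemma ranSum_eq {q M n : ℕ} (hM : 0 < M) (w : ℕ → Ω → ℝ) (ω : Ω) : ranSum x ν q M w n ω =
    ∑ b ∈ Finset.range M, w b ω * ∑ k ∈ cell n M b, hz x ν n q k ω := by
  rw [ranSum, sum_cells hM]
  refine Finset.sum_congr rfl fun b _ => ?_
  rw [Finset.mul_sum]
  exact Finset.sum_congr rfl fun k hk => by rw [cell_div hM hk]

lemma measurable_ranSum (hx : IsFBM P ν x) (q M : ℕ) {w : ℕ → Ω → ℝ} (hw : ∀ b, Measurable (w b))
    (n : ℕ) : Measurable (ranSum x ν q M w n) := by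
  unfold ranSum
  exact Finset.measurable_sum _ fun k _ => (hw _).mul (measurable_hz hx q n k)

/-- The stable central limit theorem for weights taking integer multiples of `ε` as values. -/
lemma clt_lattice [IsProbabilityMeasure P] {p : ℕ} (hx : IsFBM P ν x) (h : Crit ν p) {M : ℕ}
    (hM : 0 < M) (ε : ℝ) {κ : ℕ → Ω → ℤ} (hκ : ∀ b, Measurable (κ b)) {L : ℕ}
    (hL : ∀ b ω, |κ b ω| ≤ L)
    {Z : Ω → ℂ} (hZ : AEStronglyMeasurable Z P) {R : ℝ} (hR : ∀ ω, ‖Z ω‖ ≤ R) :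
    Tendsto (fun n => ∫ ω, Z ω * Complex.exp
        ((ranSum x ν (p + 1) M (fun b ω => ε * κ b ω) n ω : ℝ) * Complex.I) ∂P)
      atTop (nhds (∫ ω, Z ω * (Real.exp (-(sigma2 ν (p + 1) *
        ((∑ b ∈ Finset.range M, (ε * κ b ω) ^ 2) / M)) / 2) : ℝ) ∂P)) := by
  classical
  set T : Finset (Fin M → ℤ) := Fintype.piFinset fun _ => Finset.Icc (-(L : ℤ)) L with hT
  have hmem : ∀ ω, (fun b : Fin M => κ b ω) ∈ T := fun ω => by
    rw [hT, Fintype.mem_piFinset]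
    intro b
    rw [Finset.mem_Icc]
    exact abs_le.1 (hL b ω)
  -- extension of a finite vector by zero
  set ext : (Fin M → ℤ) → ℕ → ℝ := fun c b => if hb : b < M then ε * c ⟨b, hb⟩ else 0 with hext
  set Zc : (Fin M → ℤ) → Ω → ℂ := fun c ω => if (fun b : Fin M => κ b ω) = c then Z ω else 0 with hZc
  have mset : ∀ c : Fin M → ℤ, MeasurableSet {ω | (fun b : Fin M => κ b ω) = c} := fun c =>
    (measurable_pi_lambda (fun ω (b : Fin M) => κ b ω) fun b => hκ b) (measurableSet_singleton c)
  have mZ : ∀ c, AEStronglyMeasurable (Zc c) P := fun c => by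
    have : Zc c = Set.indicator {ω | (fun b : Fin M => κ b ω) = c} Z := by
      ext ω; simp [hZc, Set.indicator_apply]
    rw [this]
    exact hZ.indicator (mset c)
  have bZ : ∀ c ω, ‖Zc c ω‖ ≤ R := fun c ω => by
    simp only [hZc]
    split_ifs
    · exact hR ω
    · simpa using (norm_nonneg _).trans (hR ω)
  have bext : ∀ c b, |ext c b| ≤ |ε| * ∑ j, |(c j : ℝ)| := fun c b => by
    simp only [hext]
    split_ifs with hb
    · rw [abs_mul]
      exact mul_le_mul_of_nonneg_left (Finset.single_le_sum (f := fun j => |(c j : ℝ)|)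
        (fun j _ => abs_nonneg _) (Finset.mem_univ _)) (abs_nonneg _)
    · rw [abs_zero]; positivity
  have lim := fun c => clt_step_stable hx h hM (bext c) (mZ c) (bZ c)
  have lim' := tendsto_finsetSum T fun c _ => lim c
  -- splitting an integral according to the value of the weights
  have split : ∀ (F : (ℕ → ℝ) → Ω → ℂ), (∀ a, AEStronglyMeasurable (F a) P) →
      (∀ a ω, ‖F a ω‖ ≤ 1) → (∀ a a' ω, (∀ b < M, a b = a' b) → F a ω = F a' ω) →
      ∑ c ∈ T, ∫ ω, Zc c ω * F (ext c) ω ∂P = ∫ ω, Z ω * F (fun b => ε * κ b ω) ω ∂P := by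
    intro F mF bF cF
    rw [← integral_finsetSum]
    · refine integral_congr_ae (ae_of_all _ fun ω => ?_)
      simp only [hZc, ite_mul, zero_mul]
      rw [Finset.sum_ite_eq, if_pos (hmem ω)]
      congr 1
      refine cF _ _ ω fun b hb => ?_
      simp [hext, hb]
    · intro c _
      exact Integrable.of_bound ((mZ c).mul (mF _)) (R * 1) (ae_of_all _ fun ω => by
        rw [norm_mul]
        exact mul_le_mul (bZ c ω) (bF _ _) (norm_nonneg _) ((norm_nonneg _).trans (bZ c ω)))
  have e2 := split (fun a _ => (Real.exp (-(sigma2 ν (p + 1) *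
      ((∑ b ∈ Finset.range M, a b ^ 2) / M)) / 2) : ℝ)) (fun _ => aestronglyMeasurable_const)
    (fun a ω => by
      rw [Complex.norm_real, Real.norm_of_nonneg (Real.exp_pos _).le, Real.exp_le_one_iff]
      have := sigma2_nonneg h.pos h.le_one hx p
      have : 0 ≤ sigma2 ν (p + 1) * ((∑ b ∈ Finset.range M, a b ^ 2) / M) := by positivity
      linarith) (fun a a' ω haa => by
        rw [Finset.sum_congr rfl fun b hb => by rw [haa b (Finset.mem_range.1 hb)]])
  rw [e2] at lim'
  refine lim'.congr fun n => ?_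
  refine (split (fun a ω => Complex.exp ((stepSum x ν (p + 1) M a n ω : ℝ) * Complex.I))
    (fun a => (integrable_cexp (measurable_stepSum hx _ _ _ _)).1)
    (fun a ω => by rw [Complex.norm_exp_ofReal_mul_I]) (fun a a' ω haa => ?_)).trans rfl
  have : stepSum x ν (p + 1) M a n ω = stepSum x ν (p + 1) M a' n ω := by
    refine Finset.sum_congr rfl fun k hk => ?_
    have hk := Finset.mem_range.1 hk
    rw [haa]
    rw [Nat.div_lt_iff_lt_mul (by omega)]
    exact Nat.mul_lt_mul_of_pos_left hk hM
  rw [this]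

lemma abs_exp_neg_sub_le {a b : ℝ} (ha : 0 ≤ a) (hb : 0 ≤ b) :
    |Real.exp (-a) - Real.exp (-b)| ≤ |a - b| := by
  wlog hab : a ≤ b generalizing a b
  · rw [abs_sub_comm, abs_sub_comm a]; exact this hb ha (by linarith)
  have h1 : Real.exp (-b) ≤ Real.exp (-a) := Real.exp_le_exp.2 (by linarith)
  rw [abs_of_nonneg (by linarith), abs_sub_comm, abs_of_nonneg (by linarith)]
  have h2 : Real.exp (-b) = Real.exp (-a) * Real.exp (-(b - a)) := by rw [← Real.exp_add]; congr 1; ring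
  have h3 := Real.add_one_le_exp (-(b - a))
  have h4 : Real.exp (-a) ≤ 1 := Real.exp_le_one_iff.2 (by linarith)
  have h5 := Real.exp_pos (-a)
  rw [h2]
  nlinarith

/-- Stable central limit theorem for bounded random step weights; the limit is a mixture of
Gaussians with conditional variance `σ² M⁻¹ ∑ w_b²`. -/
lemma clt_random [IsProbabilityMeasure P] {p : ℕ} (hx : IsFBM P ν x) (h : Crit ν p) {M : ℕ}
    (hM : 0 < M) {w : ℕ → Ω → ℝ} (hw : ∀ b, Measurable (w b)) {K : ℝ} (hK : ∀ b ω, |w b ω| ≤ K)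
    {Z : Ω → ℂ} (hZ : AEStronglyMeasurable Z P) {R : ℝ} (hR : ∀ ω, ‖Z ω‖ ≤ R) :
    Tendsto (fun n => ∫ ω, Z ω * Complex.exp
        ((ranSum x ν (p + 1) M w n ω : ℝ) * Complex.I) ∂P)
      atTop (nhds (∫ ω, Z ω * (Real.exp (-(sigma2 ν (p + 1) *
        ((∑ b ∈ Finset.range M, w b ω ^ 2) / M)) / 2) : ℝ) ∂P)) := by
  have hσ := sigma2_nonneg h.pos h.le_one hx p
  obtain ⟨ω₀⟩ := nonempty_of_isProbabilityMeasure P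
  have hK0 : 0 ≤ K := (abs_nonneg _).trans (hK 0 ω₀)
  have hR0 : 0 ≤ R := (norm_nonneg _).trans (hR ω₀)
  obtain ⟨D, hD, hcs⟩ := integral_abs_cellSum_le hx h
  set ε : ℕ → ℝ := fun j => 1 / ((j : ℝ) + 1) with hε
  have hε0 : ∀ j, 0 < ε j := fun j => by simp only [hε]; positivity
  have hεlim : Tendsto ε atTop (nhds 0) := tendsto_one_div_add_atTop_nhds_zero_nat
  -- rounding the weights to multiples of `ε j`
  set κ : ℕ → ℕ → Ω → ℤ := fun j b ω => ⌊w b ω / ε j⌋ with hκ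
  have mκ : ∀ j b, Measurable (κ j b) := fun j b => ((hw b).div_const _).floor
  have hd : ∀ j b ω, |w b ω - ε j * κ j b ω| ≤ ε j := fun j b ω => by
    have h1 := Int.floor_le (w b ω / ε j)
    have h2 := Int.lt_floor_add_one (w b ω / ε j)
    have e : w b ω = ε j * (w b ω / ε j) := by
      rw [mul_div_cancel₀ _ (hε0 j).ne']
    have : w b ω - ε j * κ j b ω = ε j * (w b ω / ε j - κ j b ω) := by
      rw [mul_sub, ← e]
    rw [this, abs_mul, abs_of_pos (hε0 j)]
    refine mul_le_of_le_one_right (hε0 j).le ?_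
    rw [abs_le]
    constructor <;> simp only [hκ] <;> linarith
  have hb : ∀ j, ∃ L : ℕ, ∀ b ω, |κ j b ω| ≤ L := fun j => by
    obtain ⟨L, hL⟩ := exists_nat_ge ((K + ε j) / ε j)
    refine ⟨L, fun b ω => ?_⟩
    have h1 : |ε j * κ j b ω| ≤ K + ε j := by
      have h1 := hd j b ω
      have h2 := hK b ω
      rw [abs_le] at *
      constructor <;> linarith [h1.1, h1.2, h2.1, h2.2]
    rw [abs_mul, abs_of_pos (hε0 j), mul_comm, ← le_div_iff₀ (hε0 j)] at h1
    have := h1.trans hL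
    exact_mod_cast this
  choose L hL using hb
  have wlim : ∀ b ω, Tendsto (fun j => ε j * κ j b ω) atTop (nhds (w b ω)) := fun b ω => by
    rw [tendsto_iff_dist_tendsto_zero]
    refine squeeze_zero (fun _ => dist_nonneg) (fun j => ?_) hεlim
    rw [dist_comm, Real.dist_eq]
    exact hd j b ω
  refine tendsto_approx _ _ (fun j => R * (M * D) * ε j)
    (fun j => clt_lattice hx h hM (ε j) (mκ j) (hL j) hZ hR) ?_
    (fun j => Eventually.of_forall fun n => ?_) (by simpa using hεlim.const_mul (R * (M * D)))
  · refine tendsto_integral_of_dominated_convergence (fun _ => R) (fun j => ?_)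
      (integrable_const _) (fun j => ae_of_all _ fun ω => ?_) (ae_of_all _ fun ω => ?_)
    · refine hZ.mul (Measurable.aestronglyMeasurable ?_)
      have : ∀ b, Measurable fun ω => (κ j b ω : ℝ) := fun b =>
        (measurable_of_countable _).comp (mκ j b)
      fun_prop
    · rw [norm_mul, Complex.norm_real, Real.norm_of_nonneg (Real.exp_pos _).le]
      refine (mul_le_mul (hR ω) (Real.exp_le_one_iff.2 ?_) (Real.exp_pos _).le hR0).trans
        (by rw [mul_one])
      have : 0 ≤ sigma2 ν (p + 1) * ((∑ b ∈ Finset.range M, (ε j * κ j b ω) ^ 2) / M) := by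
        positivity
      linarith
    · refine Tendsto.const_mul _ ((Complex.continuous_ofReal.tendsto _).comp
        ((Real.continuous_exp.tendsto _).comp ?_))
      refine Tendsto.div_const (Tendsto.neg (Tendsto.const_mul _ (Tendsto.div_const ?_ _))) _
      exact tendsto_finsetSum _ fun b _ => (wlim b ω).pow 2
  · have mκ' : ∀ b, Measurable (fun ω => ε j * (κ j b ω : ℝ)) := fun b =>
      ((measurable_of_countable (fun z : ℤ => (z : ℝ))).comp (mκ j b)).const_mul _
    have i1 := (integrable_cexp (P := P) (measurable_ranSum hx (p + 1) M hw n)).bdd_mul hZ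
      (ae_of_all _ hR)
    have i2 := (integrable_cexp (P := P) (measurable_ranSum hx (p + 1) M mκ' n)).bdd_mul hZ
      (ae_of_all _ hR)
    have iV : ∀ b ∈ Finset.range M, Integrable (fun ω => |∑ k ∈ cell n M b, hz x ν n (p + 1) k ω|) P :=
      fun b hb => ((memLp_cellSum hx (cell_subset hM (Finset.mem_range.1 hb))).integrable
        one_le_two).abs
    rw [← integral_sub i1 i2]
    calc _ ≤ ∫ ω, R * ∑ b ∈ Finset.range M, ε j * |∑ k ∈ cell n M b, hz x ν n (p + 1) k ω| ∂P := by
          refine norm_integral_le_of_norm_le ((integrable_finsetSum _ fun b hb =>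
            (iV b hb).const_mul _).const_mul _) (ae_of_all _ fun ω => ?_)
          rw [← mul_sub, norm_mul]
          refine mul_le_mul (hR ω) ((norm_cexp_sub_le _ _).trans ?_) (norm_nonneg _) hR0
          rw [ranSum_eq hM, ranSum_eq hM, ← Finset.sum_sub_distrib]
          refine (Finset.abs_sum_le_sum_abs _ _).trans (Finset.sum_le_sum fun b _ => ?_)
          rw [← sub_mul, abs_mul]
          exact mul_le_mul_of_nonneg_right (hd j b ω) (abs_nonneg _)
      _ = R * ∑ b ∈ Finset.range M, ε j * ∫ ω, |∑ k ∈ cell n M b, hz x ν n (p + 1) k ω| ∂P := by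
          rw [integral_const_mul, integral_finsetSum _ fun b hb => (iV b hb).const_mul _]
          simp only [integral_const_mul]
      _ ≤ R * ∑ b ∈ Finset.range M, ε j * D := by
          refine mul_le_mul_of_nonneg_left (Finset.sum_le_sum fun b hb =>
            mul_le_mul_of_nonneg_left (hcs n M b hM (Finset.mem_range.1 hb)) (hε0 j).le) hR0
      _ = _ := by rw [Finset.sum_const, Finset.card_range, nsmul_eq_mul]; ring

end

/-! ### Remainders of controlled paths -/

section

variable {P : Measure Ω} {ν : ℝ} {x : ℝ → Ω → ℝ}

/-- The remainder `r^{(i)}_{st}` of a controlled family `(y^{(0)}, …, y^{(N-1)})`. -/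
def remd (x : ℝ → Ω → ℝ) (y : ℕ → ℝ → Ω → ℝ) (N i : ℕ) (s t : ℝ) (ω : Ω) : ℝ :=
  y i t ω - ∑ j ∈ Finset.range (N - i), y (i + j) s ω * xlift x j s t ω

lemma xlift_zero (s t : ℝ) (ω : Ω) : xlift x 0 s t ω = 1 := by simp [xlift]

/-- Chen's relation for the powers of the increments. -/
lemma xlift_chen (l : ℕ) (s u t : ℝ) (ω : Ω) : xlift x l s t ω =
    ∑ i ∈ Finset.range (l + 1), xlift x (l - i) s u ω * xlift x i u t ω := by
  simp only [xlift]
  rw [show x t ω - x s ω = (x t ω - x u ω) + (x u ω - x s ω) by ring, add_pow, Finset.sum_div]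
  refine Finset.sum_congr rfl fun i hi => ?_
  have hi := Nat.lt_succ_iff.1 (Finset.mem_range.1 hi)
  rw [Nat.cast_choose ℝ hi]
  have h1 : (l.factorial : ℝ) ≠ 0 := by exact_mod_cast l.factorial_ne_zero
  field_simp

/-- Change of base point for the leading remainder. -/
lemma remd_chen (y : ℕ → ℝ → Ω → ℝ) (N : ℕ) (s u t : ℝ) (ω : Ω) : remd x y N 0 s t ω =
    remd x y N 0 u t ω + ∑ i ∈ Finset.range N, remd x y N i s u ω * xlift x i u t ω := by
  have key : ∑ l ∈ Finset.range N, y l s ω * xlift x l s t ω = ∑ i ∈ Finset.range N,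
      (∑ j ∈ Finset.range (N - i), y (i + j) s ω * xlift x j s u ω) * xlift x i u t ω := by
    simp only [xlift_chen _ s u t, Finset.mul_sum, Finset.sum_mul]
    rw [Finset.sum_comm' (t' := Finset.range N) (s' := fun i => Finset.Ico i N)]
    · refine Finset.sum_congr rfl fun i _ => ?_
      rw [Finset.sum_Ico_eq_sum_range]
      refine Finset.sum_congr rfl fun j _ => ?_
      rw [Nat.add_sub_cancel_left, mul_assoc]
    · intro a b
      simp only [Finset.mem_range, Finset.mem_Ico]
      omega
  simp only [remd, Nat.sub_zero, zero_add, sub_mul, Finset.sum_sub_distrib]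
  rw [key]
  ring

lemma remd_self (y : ℕ → ℝ → Ω → ℝ) {N : ℕ} (hN : 0 < N) (s : ℝ) (ω : Ω) :
    remd x y N 0 s s ω = 0 := by
  obtain ⟨N, rfl⟩ := Nat.exists_eq_succ_of_ne_zero hN.ne'
  simp [remd, Finset.sum_range_succ', xlift]

/-- The remainder estimates in `Controlled`, for remainders that carry `y^{(i)}_s` as the `j = 0`
term of the expansion. -/
lemma Controlled.remd {p : ℕ} {K₀ : ℝ} {y : ℕ → ℝ → Ω → ℝ} (hx : IsFBM P ν x)
    (hy : Controlled P ν (p + 2) K₀ (xlift x) y) {i : ℕ} (hi : i ≤ p + 1) {s t : ℝ} (hs : 0 ≤ s)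
    (hst : s ≤ t) (ht : t ≤ 1) : MemLp (remd x y (p + 2) i s t) 2 P ∧
      ∫ ω, remd x y (p + 2) i s t ω ^ 2 ∂P ≤ (|K₀| * (t - s) ^ (((p + 2 - i : ℕ) : ℝ) * ν)) ^ 2 := by
  obtain ⟨h1, -, -, h4⟩ := hy
  have h4 := h4 i hi s t hs hst ht
  have e : (fun ω => y i t ω - y i s ω -
      ∑ j ∈ Finset.Icc 1 (p + 2 - 1 - i), y (i + j) s ω * xlift x j s t ω) =
      _root_.remd x y (p + 2) i s t := by
    ext ω
    rw [_root_.remd, show p + 2 - i = (p + 2 - 1 - i) + 1 by omega, Finset.sum_range_succ',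
      xlift_zero, add_zero, mul_one, Finset.range_eq_Ico,
      Finset.sum_Ico_add' (fun j => y (i + j) s ω * xlift x j s t ω) 0 _ 1]
    rw [show Finset.Icc 1 (p + 2 - 1 - i) = Finset.Ico (0 + 1) (p + 2 - 1 - i + 1) from rfl]
    ring
  rw [e] at h4
  have mr : Measurable (_root_.remd x y (p + 2) i s t) := by
    unfold _root_.remd
    refine (h1 i hi t).sub (Finset.measurable_sum _ fun j hj => ?_)
    have hj := Finset.mem_range.1 hj
    exact (h1 (i + j) (by omega) s).mul (measurable_xlift hx j s t)
  have hm : MemLp (_root_.remd x y (p + 2) i s t) 2 P :=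
    ⟨mr.aestronglyMeasurable, h4.trans_lt ENNReal.ofReal_lt_top⟩
  refine ⟨hm, ?_⟩
  have h5 := h4.trans (ENNReal.ofReal_le_ofReal (mul_le_mul_of_nonneg_right (le_abs_self K₀)
    (Real.rpow_nonneg (by linarith : 0 ≤ t - s) _)))
  rw [hm.eLpNorm_eq_integral_rpow_norm two_ne_zero ENNReal.ofNat_ne_top] at h5
  have h6 := (ENNReal.ofReal_le_ofReal_iff (mul_nonneg (abs_nonneg _)
    (Real.rpow_nonneg (by linarith) _))).1 h5
  simp only [ENNReal.toReal_ofNat, Real.rpow_two, Real.norm_eq_abs, sq_abs] at h6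
  rw [← one_div, ← Real.sqrt_eq_rpow] at h6
  exact (Real.sqrt_le_iff.1 h6).2

/-- A discrete sewing estimate: an almost subadditive array, nonpositive on unit intervals, is
bounded by a power larger than one of the length. -/
lemma discrete_sewing {e : ℕ → ℕ → ℝ} {n : ℕ} {C μ : ℝ} (hC : 0 ≤ C) (hμ : 1 < μ)
    (h0 : ∀ a, e a (a + 1) ≤ 0)
    (h1 : ∀ a u b, a ≤ u → u ≤ b → b ≤ n → e a b ≤ e a u + e u b + C * (((b : ℝ) - a) / n) ^ μ) :
    ∀ L a : ℕ, 0 < L → a + L ≤ n →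
      e a (a + L) ≤ 2 ^ μ * C / (1 - 2 ^ (1 - μ)) * (((L : ℝ) - 1) / n) ^ μ := by
  have h2 : (2 : ℝ) ^ (1 - μ) < 1 := Real.rpow_lt_one_of_one_lt_of_neg (by norm_num) (by linarith)
  set K := 2 ^ μ * C / (1 - 2 ^ (1 - μ)) with hK
  have hK0 : 0 ≤ K := div_nonneg (by positivity) (by linarith)
  intro L
  induction L using Nat.strong_induction_on with
  | _ L ih =>
    intro a hL hn
    rcases Nat.lt_or_ge 1 L with h | h
    · have hn0 : (0 : ℝ) < n := by exact_mod_cast (by omega : 0 < n)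
      -- split in the middle: with `L - 1` in place of `L`, both halves are at most half as long
      have i1 := ih (L / 2) (by omega) a (by omega) (by omega)
      have i2 := ih (L - L / 2) (by omega) (a + L / 2) (by omega) (by omega)
      have e1 : a + L / 2 + (L - L / 2) = a + L := by omega
      rw [e1] at i2
      have i3 := h1 a (a + L / 2) (a + L) (by omega) (by omega) hn
      have e2 : (((a + L : ℕ) : ℝ) - a) = L := by push_cast; ring
      rw [e2] at i3
      have hL1 : (2 : ℝ) ≤ L := by exact_mod_cast h
      have c1 : ((L / 2 : ℕ) : ℝ) - 1 ≤ (L - 1) / 2 := by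
        have : ((L / 2 : ℕ) : ℝ) ≤ L / 2 := Nat.cast_div_le
        linarith
      have c2 : ((L - L / 2 : ℕ) : ℝ) - 1 ≤ (L - 1) / 2 := by
        have : ((L - L / 2 : ℕ) : ℝ) * 2 ≤ L + 1 := by exact_mod_cast (by omega : (L - L / 2) * 2 ≤ L + 1)
        linarith
      have c3 : (0 : ℝ) ≤ ((L / 2 : ℕ) : ℝ) - 1 := by
        have : (1 : ℝ) ≤ ((L / 2 : ℕ) : ℝ) := by exact_mod_cast (by omega : 1 ≤ L / 2)
        linarith
      have c4 : (0 : ℝ) ≤ ((L - L / 2 : ℕ) : ℝ) - 1 := by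
        have : (1 : ℝ) ≤ ((L - L / 2 : ℕ) : ℝ) := by exact_mod_cast (by omega : 1 ≤ L - L / 2)
        linarith
      set v : ℝ := ((L : ℝ) - 1) / n with hv
      have hv0 : 0 ≤ v := by apply div_nonneg <;> linarith
      have half : ∀ r : ℝ, 0 ≤ r → r ≤ (L - 1) / 2 → K * (r / n) ^ μ ≤ K * ((2 ^ μ)⁻¹ * v ^ μ) := by
        intro r hr0 hr
        refine mul_le_mul_of_nonneg_left ?_ hK0
        rw [← Real.inv_rpow (by norm_num), ← Real.mul_rpow (by norm_num) hv0]
        refine Real.rpow_le_rpow (by positivity) ?_ (by linarith)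
        rw [hv, ← mul_div_assoc]
        gcongr
        linarith
      have f1 := half _ c3 c1
      have f2 := half _ c4 c2
      have f3 : C * ((L : ℝ) / n) ^ μ ≤ C * (2 ^ μ * v ^ μ) := by
        refine mul_le_mul_of_nonneg_left ?_ hC
        rw [← Real.mul_rpow (by norm_num) hv0]
        refine Real.rpow_le_rpow (by positivity) ?_ (by linarith)
        rw [hv, ← mul_div_assoc]
        gcongr
        linarith
      have g : 2 ^ (1 - μ) = 2 * ((2 : ℝ) ^ μ)⁻¹ := by
        rw [Real.rpow_sub (by norm_num), Real.rpow_one, div_eq_mul_inv]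
      have hKe : K * (1 - 2 ^ (1 - μ)) = 2 ^ μ * C := div_mul_cancel₀ _ (by linarith)
      have : K * ((2 ^ μ)⁻¹ * v ^ μ) + K * ((2 ^ μ)⁻¹ * v ^ μ) + C * (2 ^ μ * v ^ μ) = K * v ^ μ := by
        rw [g] at hKe
        linear_combination (-(v ^ μ)) * hKe
      linarith
    · have : L = 1 := by omega
      subst this
      refine (h0 a).trans ?_
      simp [Real.zero_rpow (by linarith : μ ≠ 0)]

/-- One term of the change-of-base-point error. -/
lemma remd_mul_le {p : ℕ} {K₀ : ℝ} {y : ℕ → ℝ → Ω → ℝ} (hx : IsFBM P ν x) (h : Crit ν p)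
    (hy : Controlled P ν (p + 2) K₀ (xlift x) y) : ∃ C : ℝ, 0 ≤ C ∧
    ∀ n a b : ℕ, ∀ s v : ℝ, 0 < n → a ≤ b → b ≤ n → 0 ≤ s → s ≤ (a : ℝ) / n →
      (a : ℝ) / n - s ≤ v → ((b : ℝ) - a) / n ≤ v →
      Integrable (fun ω => ∑ i ∈ Finset.range (p + 2), remd x y (p + 2) i s ((a : ℝ) / n) ω *
        ∑ k ∈ Finset.Ico a b, xlift x i ((a : ℝ) / n) ((k : ℝ) / n) ω * hz x ν n (p + 1) k ω) P ∧
      ∫ ω, |∑ i ∈ Finset.range (p + 2), remd x y (p + 2) i s ((a : ℝ) / n) ω *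
        ∑ k ∈ Finset.Ico a b, xlift x i ((a : ℝ) / n) ((k : ℝ) / n) ω * hz x ν n (p + 1) k ω| ∂P ≤
      C * v ^ (1 + ν) := by
  obtain ⟨C, hC, hs⟩ := secondX hx h
  refine ⟨(p + 2 : ℕ) * (|K₀| * √C), by positivity, ?_⟩
  intro n a b s v hn hab hbn hs0 hsa hv1 hv2
  have hn' : (0 : ℝ) < n := by exact_mod_cast hn
  have ha1 : (a : ℝ) / n ≤ 1 := (grid_mem (hab.trans hbn)).2
  have hv0 : 0 ≤ v := by linarith
  have hab' : (0 : ℝ) ≤ ((b : ℝ) - a) / n := div_nonneg (sub_nonneg.2 (by exact_mod_cast hab)) hn'.le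
  have mX : ∀ i, MemLp (fun ω => ∑ k ∈ Finset.Ico a b,
      xlift x i ((a : ℝ) / n) ((k : ℝ) / n) ω * hz x ν n (p + 1) k ω) 2 P := fun i =>
    memLp_finsetSum _ fun k hk => by
      have hk := (Finset.mem_Ico.1 hk).2
      exact memLp_xlift_hz hx (grid_mem (hab.trans hbn)) (grid_mem (by omega)) (by omega)
  have mR : ∀ i ∈ Finset.range (p + 2), _ := fun i hi =>
    Controlled.remd hx hy (Nat.lt_succ_iff.1 (Finset.mem_range.1 hi)) hs0 hsa ha1
  have iI : ∀ i ∈ Finset.range (p + 2), Integrable (fun ω => remd x y (p + 2) i s ((a : ℝ) / n) ω *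
        ∑ k ∈ Finset.Ico a b, xlift x i ((a : ℝ) / n) ((k : ℝ) / n) ω * hz x ν n (p + 1) k ω) P :=
    fun i hi => (mR i hi).1.integrable_mul (mX i)
  refine ⟨integrable_finsetSum _ iI, ?_⟩
  calc _ ≤ ∫ ω, ∑ i ∈ Finset.range (p + 2), |remd x y (p + 2) i s ((a : ℝ) / n) ω *
        ∑ k ∈ Finset.Ico a b, xlift x i ((a : ℝ) / n) ((k : ℝ) / n) ω * hz x ν n (p + 1) k ω| ∂P :=
        integral_mono (integrable_finsetSum _ iI).abs (integrable_finsetSum _ fun i hi =>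
          (iI i hi).abs) fun ω => Finset.abs_sum_le_sum_abs _ _
    _ = ∑ i ∈ Finset.range (p + 2), ∫ ω, |remd x y (p + 2) i s ((a : ℝ) / n) ω *
        ∑ k ∈ Finset.Ico a b, xlift x i ((a : ℝ) / n) ((k : ℝ) / n) ω * hz x ν n (p + 1) k ω| ∂P :=
        integral_finsetSum _ fun i hi => (iI i hi).abs
    _ ≤ ∑ i ∈ Finset.range (p + 2), |K₀| * √C * v ^ (1 + ν) := by
        refine Finset.sum_le_sum fun i hi => ?_
        have hi' := Nat.lt_succ_iff.1 (Finset.mem_range.1 hi)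
        have b2 : ∫ ω, (∑ k ∈ Finset.Ico a b, xlift x i ((a : ℝ) / n) ((k : ℝ) / n) ω *
            hz x ν n (p + 1) k ω) ^ 2 ∂P ≤ (√C * v ^ (1 / 2 + i * ν)) ^ 2 := by
          refine (hs n a b hab hbn i hi').trans ?_
          rw [mul_pow, Real.sq_sqrt hC, ← Real.rpow_natCast, ← Real.rpow_mul hv0]
          refine mul_le_mul_of_nonneg_left ?_ hC
          have hν := h.pos
          refine (Real.rpow_le_rpow hab' hv2 (by positivity)).trans (le_of_eq ?_)
          congr 1
          push_cast
          ring
        refine (integral_abs_mul_le (mR i hi).1 (mX i)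
          (mul_nonneg (abs_nonneg _) (Real.rpow_nonneg (by linarith) _)) (by positivity)
          (mR i hi).2 b2).trans ?_
        have hν := h.pos
        have e : (((p + 2 - i : ℕ) : ℝ) * ν) + (1 / 2 + i * ν) = 1 + ν := by
          rw [Nat.cast_sub (by omega)]
          have := h.eq
          push_cast at *
          linarith
        calc _ ≤ |K₀| * v ^ (((p + 2 - i : ℕ) : ℝ) * ν) * (√C * v ^ (1 / 2 + i * ν)) := by
              gcongr
          _ = |K₀| * √C * (v ^ (((p + 2 - i : ℕ) : ℝ) * ν) * v ^ (1 / 2 + i * ν)) := by ring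
          _ = _ := by rw [← Real.rpow_add_of_nonneg hv0 (by positivity) (by positivity), e]
    _ = _ := by rw [Finset.sum_const, Finset.card_range, nsmul_eq_mul]; ring

/-- Change of the base point of the expansion inside a weighted sum, from `s` to `u`. -/
lemma sum_remd_split {y : ℕ → ℝ → Ω → ℝ} (N n q : ℕ) (s u : ℝ) (I : Finset ℕ) (ω : Ω) :
    ∑ k ∈ I, remd x y N 0 s ((k : ℝ) / n) ω * hz x ν n q k ω =
    ∑ k ∈ I, remd x y N 0 u ((k : ℝ) / n) ω * hz x ν n q k ω +
    ∑ i ∈ Finset.range N, remd x y N i s u ω *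
      ∑ k ∈ I, xlift x i u ((k : ℝ) / n) ω * hz x ν n q k ω := by
  simp only [remd_chen y N s u, add_mul, Finset.sum_add_distrib, Finset.sum_mul, Finset.mul_sum]
  congr 1
  rw [Finset.sum_comm]
  exact Finset.sum_congr rfl fun i _ => Finset.sum_congr rfl fun k _ => by ring

/-- The remainder of the weight, summed over a coarse cell, is of order `m^{-(1+ν)}` in `L¹`. -/
lemma sum_remd_cell_le [IsProbabilityMeasure P] {p : ℕ} {K₀ : ℝ} {y : ℕ → ℝ → Ω → ℝ}
    (hx : IsFBM P ν x) (h : Crit ν p)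
    (hy : Controlled P ν (p + 2) K₀ (xlift x) y) : ∃ C : ℝ, 0 ≤ C ∧
    ∀ n m j : ℕ, 0 < m → m ≤ n → j < m →
      Integrable (fun ω => ∑ k ∈ cell n m j, remd x y (p + 2) 0 ((j : ℝ) / m) ((k : ℝ) / n) ω *
        hz x ν n (p + 1) k ω) P ∧
      ∫ ω, |∑ k ∈ cell n m j, remd x y (p + 2) 0 ((j : ℝ) / m) ((k : ℝ) / n) ω *
        hz x ν n (p + 1) k ω| ∂P ≤ C * (2 / m) ^ (1 + ν) := by
  obtain ⟨C, hC, hr⟩ := remd_mul_le hx h hy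
  have hν := h.pos
  have h2 : (2 : ℝ) ^ (1 - (1 + ν)) < 1 :=
    Real.rpow_lt_one_of_one_lt_of_neg (by norm_num) (by linarith)
  set K := 2 ^ (1 + ν) * C / (1 - 2 ^ (1 - (1 + ν))) with hK
  have hK0 : 0 ≤ K := div_nonneg (by positivity) (by linarith)
  refine ⟨K + C, by positivity, fun n m j hm hmn hj => ?_⟩
  have hn : 0 < n := by omega
  have hn' : (0 : ℝ) < n := by exact_mod_cast hn
  have hm' : (0 : ℝ) < m := by exact_mod_cast hm
  set T : ℕ → ℕ → Ω → ℝ := fun a b ω => ∑ k ∈ Finset.Ico a b,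
    remd x y (p + 2) 0 ((a : ℝ) / n) ((k : ℝ) / n) ω * hz x ν n (p + 1) k ω with hT
  have iT : ∀ a b, b ≤ n → Integrable (T a b) P := fun a b hb =>
    integrable_finsetSum _ fun k hk => by
      obtain ⟨hk1, hk2⟩ := Finset.mem_Ico.1 hk
      have hz2 : MemLp (hz x ν n (p + 1) k) 2 P := by
        have := memLp_cellSum hx (ν := ν) (q := p + 1) (n := n) (I := {k}) (by
          intro l hl; rw [Finset.mem_singleton] at hl; rw [Finset.mem_range]; omega)
        simpa using this
      refine MemLp.integrable_mul (Controlled.remd hx hy (Nat.zero_le _) (by positivity)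
        (by gcongr) (grid_mem (by omega)).2).1 hz2
  -- sums started at a grid point are almost additive, with an error of order `1 + ν > 1`
  have bT := discrete_sewing (e := fun a b => ∫ ω, |T a b ω| ∂P) (n := n) hC
    (by linarith : 1 < 1 + ν) (fun a => by simp [hT, remd_self]) (fun a u b hau hub hbn => by
      have e : ∀ ω, T a b ω = T a u ω + T u b ω + ∑ i ∈ Finset.range (p + 2),
          remd x y (p + 2) i ((a : ℝ) / n) ((u : ℝ) / n) ω * ∑ k ∈ Finset.Ico u b,
            xlift x i ((u : ℝ) / n) ((k : ℝ) / n) ω * hz x ν n (p + 1) k ω := fun ω => by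
        simp only [hT]
        rw [← Finset.sum_Ico_consecutive _ hau hub,
          sum_remd_split (p + 2) n (p + 1) ((a : ℝ) / n) ((u : ℝ) / n) (Finset.Ico u b),
          add_assoc]
      obtain ⟨i3, b3⟩ := hr n u b ((a : ℝ) / n) (((b : ℝ) - a) / n) hn hub hbn (by positivity)
        (by gcongr) (by
          rw [← sub_div]
          have : (u : ℝ) ≤ b := by exact_mod_cast hub
          gcongr) (by
          have : (a : ℝ) ≤ u := by exact_mod_cast hau
          gcongr)
      have i1 := iT a u (hub.trans hbn)
      have i2 := iT u b hbn
      refine le_trans ?_ (add_le_add (le_refl _) b3)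
      rw [← integral_add i1.abs i2.abs]
      rw [← integral_add (show Integrable (fun ω => |T a u ω| + |T u b ω|) P from
        i1.abs.add i2.abs) i3.abs]
      refine integral_mono (iT a b hbn).abs ((i1.abs.add i2.abs).add i3.abs) fun ω => ?_
      dsimp only
      rw [e]
      exact (abs_add_le _ _).trans (add_le_add (abs_add_le _ _) (le_refl _)))
  set a := cellStart n m j with ha
  set b := cellStart n m (j + 1) with hb
  have hab : a ≤ b := cellStart_mono hm (Nat.le_succ j)
  have hbn : b ≤ n := cellStart_le hm hj
  have a1 := cellStart_real_le (n := n) hm j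
  have a2 := cellStart_real_lt (n := n) hm j
  have b2 := cellStart_real_lt (n := n) hm (j + 1)
  rw [← ha] at a1 a2
  rw [← hb] at b2
  have hmn' : (1 : ℝ) / n ≤ 1 / m := by
    have : (m : ℝ) ≤ n := by exact_mod_cast hmn
    gcongr
  have s1 : (j : ℝ) / m ≤ (a : ℝ) / n := by
    rw [div_le_div_iff₀ hm' hn']
    rwa [div_le_iff₀ hm'] at a1
  have s2 : (a : ℝ) / n - (j : ℝ) / m ≤ 2 / m := by
    have : (a : ℝ) / n ≤ (j : ℝ) / m + 1 / n := by
      rw [div_le_iff₀ hn']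
      have : ((j : ℝ) / m + 1 / n) * n = j * n / m + 1 := by field_simp
      linarith
    have : (0 : ℝ) ≤ 1 / m := by positivity
    have e : (2 : ℝ) / m = 1 / m + 1 / m := by ring
    linarith
  have s3 : ((b : ℝ) - a) / n ≤ 2 / m := by
    have : ((b : ℝ) - a) / n ≤ 1 / m + 1 / n := by
      rw [div_le_iff₀ hn']
      have e : ((1 : ℝ) / m + 1 / n) * n = n / m + 1 := by field_simp
      have e2 : ((j + 1 : ℕ) : ℝ) * n / m = j * n / m + n / m := by push_cast; ring
      rw [e2] at b2
      linarith
    have e : (2 : ℝ) / m = 1 / m + 1 / m := by ring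
    linarith
  -- the base point `j / m` need not be a point of the `n`-partition
  obtain ⟨i3, b3⟩ := hr n a b ((j : ℝ) / m) (2 / m) hn hab hbn (by positivity) s1 s2 s3
  have e : ∀ ω, ∑ k ∈ cell n m j, remd x y (p + 2) 0 ((j : ℝ) / m) ((k : ℝ) / n) ω *
        hz x ν n (p + 1) k ω = T a b ω + ∑ i ∈ Finset.range (p + 2),
          remd x y (p + 2) i ((j : ℝ) / m) ((a : ℝ) / n) ω * ∑ k ∈ Finset.Ico a b,
            xlift x i ((a : ℝ) / n) ((k : ℝ) / n) ω * hz x ν n (p + 1) k ω := fun ω =>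
    sum_remd_split (p + 2) n (p + 1) ((j : ℝ) / m) ((a : ℝ) / n) _ ω
  have bab : ∫ ω, |T a b ω| ∂P ≤ K * (2 / m) ^ (1 + ν) := by
    rcases Nat.eq_or_lt_of_le hab with h' | h'
    · have : ∀ ω, T a b ω = 0 := fun ω => by simp [hT, h']
      simp only [this, abs_zero, integral_zero]
      positivity
    · have := bT (b - a) a (by omega) (by omega)
      rw [Nat.add_sub_cancel' hab] at this
      refine this.trans (mul_le_mul_of_nonneg_left ?_ hK0)
      have c1 : (1 : ℝ) ≤ ((b - a : ℕ) : ℝ) := by exact_mod_cast (by omega : 1 ≤ b - a)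
      refine Real.rpow_le_rpow (div_nonneg (by linarith) hn'.le) (le_trans ?_ s3) (by linarith)
      rw [Nat.cast_sub hab]
      exact div_le_div_of_nonneg_right (by linarith) hn'.le
  simp only [e]
  refine ⟨(iT a b hbn).add i3, ?_⟩
  calc _ ≤ ∫ ω, (|T a b ω| + |∑ i ∈ Finset.range (p + 2),
          remd x y (p + 2) i ((j : ℝ) / m) ((a : ℝ) / n) ω * ∑ k ∈ Finset.Ico a b,
            xlift x i ((a : ℝ) / n) ((k : ℝ) / n) ω * hz x ν n (p + 1) k ω|) ∂P :=
        integral_mono ((iT a b hbn).add i3).abs ((iT a b hbn).abs.add i3.abs)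
          fun ω => abs_add_le _ _
    _ ≤ _ := by
        rw [integral_add (iT a b hbn).abs i3.abs, add_mul]
        exact add_le_add bab b3

end

/-! ### Two-scale approximation of the weighted sum -/

section

variable {P : Measure Ω} {ν : ℝ} {x : ℝ → Ω → ℝ}

/-- The step weight on the grid of mesh `1/(mN)`: the expansion of `y^{(0)}` at the point
`b/(mN)` around the largest point of the grid of mesh `1/m` before it. -/
def coarseW (x : ℝ → Ω → ℝ) (y : ℕ → ℝ → Ω → ℝ) (p m N b : ℕ) (ω : Ω) : ℝ :=
  ∑ i ∈ Finset.range (p + 2), y i (((b / N : ℕ) : ℝ) / m) ω *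
    xlift x i (((b / N : ℕ) : ℝ) / m) ((b : ℝ) / (m * N : ℕ)) ω

/-- Second-level error on a coarse cell: freezing `x^i` on the finer grid and removing the drift. -/
def cellErr (x : ℝ → Ω → ℝ) (ν : ℝ) (p m N n i j : ℕ) (ω : Ω) : ℝ :=
  (∑ k ∈ cell n m j, (xlift x i ((j : ℝ) / m) ((k : ℝ) / n) ω -
    xlift x i ((j : ℝ) / m) (((m * N * k / n : ℕ) : ℝ) / (m * N : ℕ)) ω) * hz x ν n (p + 1) k ω) -
  if i = p + 1 then (-(1 : ℝ) / 2) ^ (p + 1) / m else 0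

/-- The exact error of the two-scale approximation: in each cell of length `1/m`, the expansion
remainder and the errors of freezing the monomials `x^i`. -/
lemma sum_sub_coarse_eq {p m N n : ℕ} (hm : 0 < m) (hN : 0 < N) (y : ℕ → ℝ → Ω → ℝ) (ω : Ω) :
    (∑ k ∈ Finset.range n, y 0 ((k : ℝ) / n) ω * hz x ν n (p + 1) k ω) -
      (ranSum x ν (p + 1) (m * N) (coarseW x y p m N) n ω +
        (-(1 : ℝ) / 2) ^ (p + 1) / m * ∑ j ∈ Finset.range m, y (p + 1) ((j : ℝ) / m) ω) =
    ∑ j ∈ Finset.range m, (∑ k ∈ cell n m j, remd x y (p + 2) 0 ((j : ℝ) / m) ((k : ℝ) / n) ω *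
        hz x ν n (p + 1) k ω +
      ∑ i ∈ Finset.range (p + 2), y i ((j : ℝ) / m) ω * cellErr x ν p m N n i j ω) := by
  rw [ranSum, sum_cells hm (n := n) (fun k => y 0 ((k : ℝ) / n) ω * hz x ν n (p + 1) k ω),
    sum_cells hm (n := n) (fun k => coarseW x y p m N (m * N * k / n) ω * hz x ν n (p + 1) k ω),
    Finset.mul_sum, ← Finset.sum_add_distrib,
    ← Finset.sum_sub_distrib]
  refine Finset.sum_congr rfl fun j _ => ?_
  have e1 : ∑ k ∈ cell n m j, coarseW x y p m N (m * N * k / n) ω * hz x ν n (p + 1) k ω =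
      ∑ i ∈ Finset.range (p + 2), y i ((j : ℝ) / m) ω * ∑ k ∈ cell n m j,
        xlift x i ((j : ℝ) / m) (((m * N * k / n : ℕ) : ℝ) / (m * N : ℕ)) ω *
          hz x ν n (p + 1) k ω := by
    simp only [Finset.mul_sum]
    rw [Finset.sum_comm]
    refine Finset.sum_congr rfl fun k hk => ?_
    have : m * N * k / n / N = j := by
      rw [Nat.div_div_eq_div_mul, show m * N * k = (m * k) * N by ring,
        Nat.mul_div_mul_right _ _ hN, cell_div hm hk]
    rw [coarseW, this, Finset.sum_mul]
    exact Finset.sum_congr rfl fun i _ => by ring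
  have e2 : ∑ k ∈ cell n m j, y 0 ((k : ℝ) / n) ω * hz x ν n (p + 1) k ω =
      ∑ k ∈ cell n m j, remd x y (p + 2) 0 ((j : ℝ) / m) ((k : ℝ) / n) ω * hz x ν n (p + 1) k ω +
      ∑ i ∈ Finset.range (p + 2), y i ((j : ℝ) / m) ω * ∑ k ∈ cell n m j,
        xlift x i ((j : ℝ) / m) ((k : ℝ) / n) ω * hz x ν n (p + 1) k ω := by
    simp only [Finset.mul_sum]
    rw [Finset.sum_comm, ← Finset.sum_add_distrib]
    refine Finset.sum_congr rfl fun k _ => ?_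
    rw [remd]
    simp only [Nat.sub_zero, zero_add]
    rw [sub_mul, Finset.sum_mul]
    simp only [mul_assoc]
    ring
  have e3 : ∑ i ∈ Finset.range (p + 2), y i ((j : ℝ) / m) ω * cellErr x ν p m N n i j ω =
      ∑ i ∈ Finset.range (p + 2), y i ((j : ℝ) / m) ω * ∑ k ∈ cell n m j,
        xlift x i ((j : ℝ) / m) ((k : ℝ) / n) ω * hz x ν n (p + 1) k ω -
      ∑ i ∈ Finset.range (p + 2), y i ((j : ℝ) / m) ω * ∑ k ∈ cell n m j,
        xlift x i ((j : ℝ) / m) (((m * N * k / n : ℕ) : ℝ) / (m * N : ℕ)) ω *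
          hz x ν n (p + 1) k ω - (-(1 : ℝ) / 2) ^ (p + 1) / m * y (p + 1) ((j : ℝ) / m) ω := by
    simp only [cellErr, mul_sub, sub_mul, Finset.sum_sub_distrib]
    congr 1
    simp only [mul_ite, mul_zero]
    rw [Finset.sum_ite_eq', if_pos (Finset.mem_range.2 (by omega)), mul_comm]
  rw [e1, e2, e3]
  ring

lemma memLp_cellErr [IsProbabilityMeasure P] (hx : IsFBM P ν x) {p m N n i j : ℕ} (hm : 0 < m)
    (hN : 0 < N) (hj : j < m) : MemLp (cellErr x ν p m N n i j) 2 P := by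
  unfold cellErr
  refine MemLp.sub (memLp_finsetSum _ fun k hk => ?_) (memLp_const _)
  have hk := Finset.mem_range.1 (cell_subset hm hj hk)
  have hn : 0 < n := by omega
  have h1 := memLp_xlift_hz hx (i := i) (q := p + 1) (s := (j : ℝ) / m) (t := (k : ℝ) / n)
    (grid_mem hj.le) (grid_mem hk.le) hk
  have h2 := memLp_xlift_hz hx (i := i) (q := p + 1) (s := (j : ℝ) / m)
    (t := ((m * N * k / n : ℕ) : ℝ) / (m * N : ℕ)) (grid_mem hj.le) (grid_mem (le_of_lt (by
      rw [Nat.div_lt_iff_lt_mul hn]; exact Nat.mul_lt_mul_of_pos_left hk (by positivity)))) hk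
  simp only [sub_mul]
  exact h1.sub h2

/-- `L¹` distance between the weighted sum and its two-scale approximation, on an event where the
controlled family is bounded at the coarse grid points. -/
lemma coarse_bound [IsProbabilityMeasure P] {p : ℕ} {K₀ : ℝ} {y : ℕ → ℝ → Ω → ℝ}
    (hx : IsFBM P ν x) (h : Crit ν p)
    (hy : Controlled P ν (p + 2) K₀ (xlift x) y) : ∃ C : ℝ, 0 ≤ C ∧
    ∀ m N : ℕ, 0 < m → 0 < N → ∀ (A : Set Ω) (R : ℝ), MeasurableSet A → 0 ≤ R →
      (∀ ω ∈ A, ∀ i ≤ p + 1, ∀ j < m, |y i ((j : ℝ) / m) ω| ≤ R) → ∀ᶠ n : ℕ in atTop,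
      ∃ B : Ω → ℝ, Integrable B P ∧ (∀ ω, 0 ≤ B ω) ∧
        (∀ ω ∈ A, |(∑ k ∈ Finset.range n, y 0 ((k : ℝ) / n) ω * hz x ν n (p + 1) k ω) -
          (ranSum x ν (p + 1) (m * N) (coarseW x y p m N) n ω +
          (-(1 : ℝ) / 2) ^ (p + 1) / m * ∑ j ∈ Finset.range m, y (p + 1) ((j : ℝ) / m) ω)| ≤ B ω) ∧
        ∫ ω, B ω ∂P ≤ m * (C * (2 / m) ^ (1 + ν) + R * C * (1 / ((m * N : ℕ) : ℝ)) ^ ν) := by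
  obtain ⟨C1, hC1, h1⟩ := sum_remd_cell_le hx h hy
  obtain ⟨C2, hC2, h2⟩ := base_change hx h
  refine ⟨C1 + (p + 2 : ℕ) * √C2, by positivity, ?_⟩
  intro m N hm hN A R hA hR hAR
  have hM : 0 < m * N := by positivity
  have ev : ∀ᶠ n : ℕ in atTop, ∀ i ∈ Finset.range (p + 2), ∀ j ∈ Finset.range m,
      ∫ ω, cellErr x ν p m N n i j ω ^ 2 ∂P ≤ C2 * (((1 : ℝ) / (m * N : ℕ)) ^ ν) ^ 2 := by
    rw [Finset.eventually_all]
    intro i hi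
    rw [Finset.eventually_all]
    intro j hj
    exact h2 m (m * N) j hm hM (Finset.mem_range.1 hj) i (Nat.lt_succ_iff.1 (Finset.mem_range.1 hi))
  filter_upwards [ev, eventually_ge_atTop m] with n hn hmn
  have iE : ∀ i, ∀ j ∈ Finset.range m, Integrable (cellErr x ν p m N n i j) P := fun i j hj =>
    (memLp_cellErr hx hm hN (Finset.mem_range.1 hj)).integrable one_le_two
  have iS := fun j (hj : j ∈ Finset.range m) => h1 n m j hm hmn (Finset.mem_range.1 hj)
  have iRE : ∀ j ∈ Finset.range m, Integrable (fun ω => ∑ i ∈ Finset.range (p + 2),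
      R * |cellErr x ν p m N n i j ω|) P := fun j hj =>
    integrable_finsetSum _ fun i _ => (iE i j hj).abs.const_mul R
  have iT : ∀ j ∈ Finset.range m, Integrable (fun ω =>
      |∑ k ∈ cell n m j, remd x y (p + 2) 0 ((j : ℝ) / m) ((k : ℝ) / n) ω *
        hz x ν n (p + 1) k ω| + ∑ i ∈ Finset.range (p + 2), R * |cellErr x ν p m N n i j ω|) P :=
    fun j hj => (iS j hj).1.abs.add (iRE j hj)
  refine ⟨fun ω => ∑ j ∈ Finset.range m, (|∑ k ∈ cell n m j,
    remd x y (p + 2) 0 ((j : ℝ) / m) ((k : ℝ) / n) ω * hz x ν n (p + 1) k ω| +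
      ∑ i ∈ Finset.range (p + 2), R * |cellErr x ν p m N n i j ω|),
    integrable_finsetSum _ iT, fun ω => by positivity, fun ω hω => ?_, ?_⟩
  · rw [sum_sub_coarse_eq hm hN]
    refine (Finset.abs_sum_le_sum_abs _ _).trans (Finset.sum_le_sum fun j hj => ?_)
    refine (abs_add_le _ _).trans (add_le_add le_rfl ?_)
    refine (Finset.abs_sum_le_sum_abs _ _).trans (Finset.sum_le_sum fun i hi => ?_)
    rw [abs_mul]
    exact mul_le_mul_of_nonneg_right (hAR ω hω i (Nat.lt_succ_iff.1 (Finset.mem_range.1 hi)) j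
      (Finset.mem_range.1 hj)) (abs_nonneg _)
  · rw [integral_finsetSum _ iT]
    have key : ∀ j ∈ Finset.range m, ∫ ω, (|∑ k ∈ cell n m j,
        remd x y (p + 2) 0 ((j : ℝ) / m) ((k : ℝ) / n) ω * hz x ν n (p + 1) k ω| +
        ∑ i ∈ Finset.range (p + 2), R * |cellErr x ν p m N n i j ω|) ∂P ≤
        C1 * (2 / m) ^ (1 + ν) + (p + 2 : ℕ) * (R * (√C2 * (1 / ((m * N : ℕ) : ℝ)) ^ ν)) := by
      intro j hj
      rw [integral_add (iS j hj).1.abs (iRE j hj)]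
      refine add_le_add (iS j hj).2 ?_
      rw [integral_finsetSum _ fun i _ => (iE i j hj).abs.const_mul R]
      refine (Finset.sum_le_sum (g := fun _ => R * (√C2 * (1 / ((m * N : ℕ) : ℝ)) ^ ν))
        fun i hi => ?_).trans (by rw [Finset.sum_const, Finset.card_range, nsmul_eq_mul])
      rw [integral_const_mul]
      refine mul_le_mul_of_nonneg_left ?_ hR
      refine (integral_abs_le_sqrt (iE i j hj)
        (memLp_cellErr hx hm hN (Finset.mem_range.1 hj)).integrable_sq).trans ?_
      refine (Real.sqrt_le_sqrt (hn i hi j hj)).trans ?_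
      rw [Real.sqrt_mul hC2, Real.sqrt_sq (by positivity)]
    refine (Finset.sum_le_sum key).trans ?_
    rw [Finset.sum_const, Finset.card_range, nsmul_eq_mul]
    have g1 : (0 : ℝ) ≤ (2 / m) ^ (1 + ν) := by positivity
    have g2 : (0 : ℝ) ≤ (1 / ((m * N : ℕ) : ℝ)) ^ ν := by positivity
    refine mul_le_mul_of_nonneg_left ?_ (by positivity)
    have k1 : 0 ≤ (p + 2 : ℕ) * √C2 * (2 / m : ℝ) ^ (1 + ν) := by positivity
    have k2 : 0 ≤ R * C1 * (1 / ((m * N : ℕ) : ℝ)) ^ ν := by positivity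
    nlinarith

/-- Riemann sums of step functions converging pointwise. -/
lemma tendsto_riemann {g : ℕ → ℕ → ℝ} {M : ℕ → ℕ} (hM : ∀ m, 0 < M m) {B : ℝ}
    (hB : ∀ m, ∀ b < M m, |g m b| ≤ B) {f : ℝ → ℝ}
    (hf : ∀ t : ℝ, 0 ≤ t → t < 1 → Tendsto (fun m => g m ⌊(M m : ℝ) * t⌋₊) atTop (nhds (f t))) :
    Tendsto (fun m => (∑ b ∈ Finset.range (M m), g m b) / M m) atTop
      (nhds (∫ t in (0 : ℝ)..1, f t)) := by
  have hstep : ∀ m, ∫ t in (0 : ℝ)..1, g m ⌊(M m : ℝ) * t⌋₊ =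
      (∑ b ∈ Finset.range (M m), g m b) / M m := by
    intro m
    have hm : (0 : ℝ) < M m := by exact_mod_cast hM m
    have cell : ∀ b : ℕ, Set.EqOn (fun t => g m ⌊(M m : ℝ) * t⌋₊) (fun _ => g m b)
        (Set.Ico ((b : ℝ) / M m) (((b + 1 : ℕ) : ℝ) / M m)) := fun b t ht => by
      have : ⌊(M m : ℝ) * t⌋₊ = b := by
        rw [Nat.floor_eq_iff (mul_nonneg hm.le (le_trans (by positivity) ht.1))]
        obtain ⟨h1, h2⟩ := ht
        rw [div_le_iff₀ hm] at h1
        rw [lt_div_iff₀ hm] at h2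
        push_cast at h2
        constructor <;> linarith
      simp only [this]
    have le : ∀ b : ℕ, (b : ℝ) / M m ≤ ((b + 1 : ℕ) : ℝ) / M m := fun b => by
      push_cast; gcongr; linarith
    have int : ∀ b : ℕ, ∫ t in ((b : ℝ) / M m)..(((b + 1 : ℕ) : ℝ) / M m),
        g m ⌊(M m : ℝ) * t⌋₊ = g m b / M m := fun b => by
      rw [intervalIntegral.integral_of_le (le b), ← integral_Ico_eq_integral_Ioc,
        setIntegral_congr_fun measurableSet_Ico (cell b), integral_Ico_eq_integral_Ioc,
        ← intervalIntegral.integral_of_le (le b), intervalIntegral.integral_const, smul_eq_mul]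
      push_cast
      ring
    have := intervalIntegral.sum_integral_adjacent_intervals (μ := volume)
      (f := fun t => g m ⌊(M m : ℝ) * t⌋₊)
      (a := fun b : ℕ => (b : ℝ) / M m) (n := M m) (fun b _ => by
        rw [intervalIntegrable_iff_integrableOn_Ico_of_le (le b)]
        exact (integrableOn_const (by simp)).congr_fun (cell b).symm measurableSet_Ico)
    simp only [int, Nat.cast_zero, zero_div, div_self hm.ne'] at this
    rw [← this, Finset.sum_div]
  simp only [← hstep]
  refine intervalIntegral.tendsto_integral_filter_of_dominated_convergence (fun _ => B)
    (Eventually.of_forall fun m => ?_) (Eventually.of_forall fun m => ?_) (by simp) ?_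
  · refine Measurable.aestronglyMeasurable ?_
    exact (measurable_from_nat (f := g m)).comp (Nat.measurable_floor.comp (measurable_const_mul _))
  · have : ∀ᵐ t : ℝ, t ≠ 1 := by simp [ae_iff]
    filter_upwards [this] with t ht1 ht
    rw [Set.uIoc_of_le zero_le_one] at ht
    have hm : (0 : ℝ) < M m := by exact_mod_cast hM m
    refine hB m _ ?_
    rw [Nat.floor_lt (mul_nonneg hm.le ht.1.le)]
    exact mul_lt_of_lt_one_right hm (lt_of_le_of_ne ht.2 ht1)
  · have : ∀ᵐ t : ℝ, t ≠ 1 := by simp [ae_iff]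
    filter_upwards [this] with t ht1 ht
    rw [Set.uIoc_of_le zero_le_one] at ht
    exact hf t ht.1.le (lt_of_le_of_ne ht.2 ht1)

end

/-! ### Localization and Riemann sums -/

section

variable {P : Measure Ω} {ν : ℝ} {x : ℝ → Ω → ℝ}

/-- The localizing event: the controlled family and the driving path are bounded by `R` at all
rational times of `[0,1]`. -/
def locSet (x : ℝ → Ω → ℝ) (y : ℕ → ℝ → Ω → ℝ) (p : ℕ) (R : ℝ) : Set Ω :=
  {ω | ∀ r : ℚ, (r : ℝ) ∈ Set.Icc (0 : ℝ) 1 →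
    (∀ i ∈ Finset.range (p + 2), |y i r ω| ≤ R) ∧ |x r ω| ≤ R}

lemma measurableSet_locSet {y : ℕ → ℝ → Ω → ℝ} {p : ℕ} (hx : ∀ t, Measurable (x t))
    (hy : ∀ i ≤ p + 1, ∀ t, Measurable (y i t)) (R : ℝ) : MeasurableSet (locSet x y p R) := by
  have : locSet x y p R = ⋂ r : ℚ, ⋂ _ : (r : ℝ) ∈ Set.Icc (0 : ℝ) 1,
      ((⋂ i ∈ Finset.range (p + 2), {ω | |y i r ω| ≤ R}) ∩ {ω | |x r ω| ≤ R}) := by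
    ext ω
    simp only [locSet, Set.mem_ofPred_eq, Set.mem_iInter, Set.mem_inter_iff]
  rw [this]
  refine MeasurableSet.iInter fun r => MeasurableSet.iInter fun _ => MeasurableSet.inter ?_ ?_
  · exact Finset.measurableSet_biInter _ fun i hi => measurableSet_le
      (hy i (Nat.lt_succ_iff.1 (Finset.mem_range.1 hi)) _).abs measurable_const
  · exact measurableSet_le (hx _).abs measurable_const

lemma eventually_mem_locSet {y : ℕ → ℝ → Ω → ℝ} {p : ℕ} {ω : Ω}
    (hx : ContinuousOn (fun t => x t ω) (Set.Icc 0 1))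
    (hy : ∀ i ≤ p + 1, ContinuousOn (fun t => y i t ω) (Set.Icc 0 1)) :
    ∀ᶠ R : ℕ in atTop, ω ∈ locSet x y p R := by
  have bd : ∀ f : ℝ → ℝ, ContinuousOn f (Set.Icc 0 1) →
      ∀ᶠ R : ℕ in atTop, ∀ t ∈ Set.Icc (0 : ℝ) 1, |f t| ≤ R := fun f hf => by
    obtain ⟨C, hC⟩ := isCompact_Icc.exists_bound_of_continuousOn hf
    filter_upwards [eventually_ge_atTop ⌈C⌉₊] with R hR t ht
    exact (hC t ht).trans (Nat.ceil_le.1 hR)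
  have e2 : ∀ᶠ R : ℕ in atTop, ∀ i ∈ Finset.range (p + 2), ∀ t ∈ Set.Icc (0 : ℝ) 1,
      |y i t ω| ≤ R := by
    rw [Finset.eventually_all]
    exact fun i hi => bd _ (hy i (Nat.lt_succ_iff.1 (Finset.mem_range.1 hi)))
  filter_upwards [bd _ hx, e2] with R h1 h2 r hr
  exact ⟨fun i hi => h2 i hi r hr, h1 r hr⟩

lemma locSet_bound {y : ℕ → ℝ → Ω → ℝ} {p : ℕ} {R : ℝ} {ω : Ω} (hω : ω ∈ locSet x y p R)
    {b M : ℕ} (hb : b ≤ M) :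
    (∀ i ∈ Finset.range (p + 2), |y i ((b : ℝ) / M) ω| ≤ R) ∧ |x ((b : ℝ) / M) ω| ≤ R := by
  have := hω ((b : ℚ) / M) (by push_cast; exact grid_mem hb)
  push_cast at this
  exact this

lemma abs_coarseW_le {y : ℕ → ℝ → Ω → ℝ} {p : ℕ} {R : ℝ} (hR : 0 ≤ R) {ω : Ω}
    (hω : ω ∈ locSet x y p R) {m N b : ℕ} (hb : b < m * N) :
    |coarseW x y p m N b ω| ≤ ∑ i ∈ Finset.range (p + 2), R * (2 * R) ^ i := by
  have hbN : b / N < m := Nat.div_lt_of_lt_mul (by rwa [mul_comm])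
  have h1 := locSet_bound hω hbN.le
  have h2 := locSet_bound hω hb.le
  refine (Finset.abs_sum_le_sum_abs _ _).trans (Finset.sum_le_sum fun i hi => ?_)
  rw [abs_mul]
  refine mul_le_mul (h1.1 i hi) ?_ (abs_nonneg _) hR
  rw [xlift, abs_div, abs_pow, Nat.abs_cast]
  refine (div_le_self (by positivity) (by exact_mod_cast Nat.factorial_pos i)).trans ?_
  refine pow_le_pow_left₀ (abs_nonneg _) ?_ _
  refine (abs_sub _ _).trans ?_
  linarith [h1.2, h2.2]

lemma measurable_coarseW {y : ℕ → ℝ → Ω → ℝ} {p : ℕ} (hx : IsFBM P ν x)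
    (hy : ∀ i ≤ p + 1, ∀ t, Measurable (y i t)) (m N b : ℕ) :
    Measurable (coarseW x y p m N b) := by
  unfold coarseW
  exact Finset.measurable_sum _ fun i hi =>
    (hy i (Nat.lt_succ_iff.1 (Finset.mem_range.1 hi)) _).mul (measurable_xlift hx i _ _)

lemma tendsto_grid {M : ℕ → ℕ} (hM : Tendsto M atTop atTop) {t : ℝ} (h0 : 0 ≤ t) (h1 : t < 1) :
    Tendsto (fun k => (⌊(M k : ℝ) * t⌋₊ : ℝ) / M k) atTop (nhdsWithin t (Set.Icc 0 1)) := by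
  refine tendsto_nhdsWithin_iff.2 ⟨?_, Eventually.of_forall fun k => grid_mem ?_⟩
  · have := (tendsto_nat_floor_mul_div_atTop (R := ℝ) h0).comp
      (tendsto_natCast_atTop_atTop.comp hM)
    simpa [Function.comp_def, mul_comm] using this
  · rw [← Nat.cast_le (α := ℝ)]
    exact (Nat.floor_le (by positivity)).trans (mul_le_of_le_one_right (by positivity) h1.le)

lemma tendsto_coarseW {y : ℕ → ℝ → Ω → ℝ} {p : ℕ} {ω : Ω}
    (hx : ContinuousOn (fun t => x t ω) (Set.Icc 0 1))
    (hy : ∀ i ≤ p + 1, ContinuousOn (fun t => y i t ω) (Set.Icc 0 1))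
    {m N : ℕ → ℕ} (hm : Tendsto m atTop atTop) (hN : ∀ k, 0 < N k) {t : ℝ} (h0 : 0 ≤ t)
    (h1 : t < 1) :
    Tendsto (fun k => coarseW x y p (m k) (N k) ⌊((m k * N k : ℕ) : ℝ) * t⌋₊ ω) atTop
      (nhds (y 0 t ω)) := by
  have ht : t ∈ Set.Icc (0 : ℝ) 1 := ⟨h0, h1.le⟩
  have hfl : ∀ k, ⌊((m k * N k : ℕ) : ℝ) * t⌋₊ / N k = ⌊(m k : ℝ) * t⌋₊ := fun k => by
    have : (0 : ℝ) < N k := by exact_mod_cast hN k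
    rw [← Nat.floor_div_natCast]
    congr 1
    push_cast
    field_simp
  have hs := tendsto_grid hm h0 h1
  have hM : Tendsto (fun k => m k * N k) atTop atTop :=
    tendsto_atTop_mono (fun k => Nat.le_mul_of_pos_right _ (hN k)) hm
  have hu := tendsto_grid hM h0 h1
  have hlim : y 0 t ω = ∑ i ∈ Finset.range (p + 2),
      y i t ω * ((x t ω - x t ω) ^ i / (Nat.factorial i : ℝ)) := by
    rw [Finset.sum_range_succ']
    simp
  rw [hlim]
  simp only [coarseW, hfl, xlift]
  refine tendsto_finsetSum _ fun i hi => ?_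
  refine (((hy i (Nat.lt_succ_iff.1 (Finset.mem_range.1 hi))).continuousWithinAt ht).tendsto.comp
    hs).mul (Tendsto.div_const (Tendsto.pow ?_ i) _)
  exact ((hx.continuousWithinAt ht).tendsto.comp hu).sub ((hx.continuousWithinAt ht).tendsto.comp hs)

lemma tendsto_riemann_cont {f : ℝ → ℝ} (hf : ContinuousOn f (Set.Icc 0 1)) :
    Tendsto (fun j : ℕ => (∑ b ∈ Finset.range (j + 1), f ((b : ℝ) / (j + 1 : ℕ))) / (j + 1 : ℕ))
      atTop (nhds (∫ t in (0 : ℝ)..1, f t)) := by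
  obtain ⟨C, hC⟩ := isCompact_Icc.exists_bound_of_continuousOn hf
  refine tendsto_riemann (M := fun j => j + 1) (g := fun j b => f ((b : ℝ) / (j + 1 : ℕ)))
    (fun m => Nat.succ_pos _) (B := C) (fun m b hb => hC _ (grid_mem hb.le)) fun t h0 h1 => ?_
  exact (hf.continuousWithinAt ⟨h0, h1.le⟩).tendsto.comp (tendsto_grid (tendsto_add_atTop_nat 1) h0 h1)

lemma measurable_integral_cont {f : ℝ → Ω → ℝ} (hm : ∀ t, Measurable (f t))
    (hf : ∀ ω, ContinuousOn (fun t => f t ω) (Set.Icc 0 1)) :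
    Measurable fun ω => ∫ t in (0 : ℝ)..1, f t ω :=
  measurable_of_tendsto_metrizable (f := fun (j : ℕ) ω =>
      (∑ b ∈ Finset.range (j + 1), f ((b : ℝ) / (j + 1 : ℕ)) ω) / (j + 1 : ℕ))
    (fun _ => (Finset.measurable_sum _ fun _ _ => hm _).div_const _)
    (tendsto_pi_nhds.2 fun ω => tendsto_riemann_cont (hf ω))

/-- With `j + 1` coarse cells, each subdivided into `(j + 1) ^ (4 * (p + 1))` cells, both the
remainders and the freezing errors vanish in total. -/
lemma tendsto_mesh_bound {p : ℕ} (h : Crit ν p) (C D : ℝ) :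
    Tendsto (fun j : ℕ => ((j + 1 : ℕ) : ℝ) * (C * (2 / (j + 1 : ℕ)) ^ (1 + ν) +
      D * (1 / (((j + 1) * (j + 1) ^ (4 * (p + 1)) : ℕ) : ℝ)) ^ ν)) atTop (nhds 0) := by
  have hν := h.pos
  have h1 : Tendsto (fun j : ℕ => (1 : ℝ) / (j + 1 : ℕ)) atTop (nhds 0) := by
    simpa using tendsto_one_div_add_atTop_nhds_zero_nat (𝕜 := ℝ)
  have h2 : Tendsto (fun j : ℕ => (2 : ℝ) / (j + 1 : ℕ)) atTop (nhds 0) := by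
    have := h1.const_mul 2
    simpa [div_eq_mul_inv] using this
  have r1 : Tendsto (fun j : ℕ => ((1 : ℝ) / (j + 1 : ℕ)) ^ ν) atTop (nhds 0) := by
    have := h1.rpow_const (p := ν) (Or.inr hν.le)
    rwa [Real.zero_rpow hν.ne'] at this
  have r2 : Tendsto (fun j : ℕ => ((2 : ℝ) / (j + 1 : ℕ)) ^ ν) atTop (nhds 0) := by
    have := h2.rpow_const (p := ν) (Or.inr hν.le)
    rwa [Real.zero_rpow hν.ne'] at this
  have tot : Tendsto (fun j : ℕ => C * 2 * ((2 : ℝ) / (j + 1 : ℕ)) ^ ν +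
      D * (((1 : ℝ) / (j + 1 : ℕ)) * ((1 : ℝ) / (j + 1 : ℕ)) ^ ν)) atTop (nhds 0) := by
    simpa using (r2.const_mul (C * 2)).add ((h1.mul r1).const_mul D)
  refine tot.congr fun j => ?_
  have hj : (0 : ℝ) < (j + 1 : ℕ) := by positivity
  have q1 : ((2 : ℝ) / (j + 1 : ℕ)) ^ (1 + ν) = 2 / (j + 1 : ℕ) * ((2 : ℝ) / (j + 1 : ℕ)) ^ ν := by
    rw [Real.rpow_add (by positivity), Real.rpow_one]
  -- the exponent of the fine mesh satisfies `(4(p+1) + 1) ν = 2 + ν`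
  have q2 : ((1 : ℝ) / (((j + 1) * (j + 1) ^ (4 * (p + 1)) : ℕ) : ℝ)) ^ ν =
      (1 / (j + 1 : ℕ)) ^ 2 * ((1 : ℝ) / (j + 1 : ℕ)) ^ ν := by
    have e : (1 : ℝ) / (((j + 1) * (j + 1) ^ (4 * (p + 1)) : ℕ) : ℝ) =
        (1 / (j + 1 : ℕ)) ^ (4 * (p + 1)) * (1 / (j + 1 : ℕ)) := by
      push_cast
      rw [div_pow, one_pow]
      field_simp
    rw [e, Real.mul_rpow (by positivity) (by positivity)]
    congr 1
    rw [← Real.rpow_natCast, ← Real.rpow_mul (by positivity), ← Real.rpow_natCast]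
    congr 1
    have := h.eq
    push_cast at this ⊢
    linarith
  rw [q1, q2]
  field_simp

end

/-! ### The weighted limit theorem -/

section

variable {P : Measure Ω} {ν : ℝ} {x : ℝ → Ω → ℝ}

/-- The conditional characteristic function at `lam` of the limit, given `x` and the controlled
family. -/
def limChar (ν : ℝ) (y : ℕ → ℝ → Ω → ℝ) (p : ℕ) (lam : ℝ) (ω : Ω) : ℂ :=
  Complex.exp ((lam * ((-(1 : ℝ) / 2) ^ (p + 1) * ∫ v in (0 : ℝ)..1, y (p + 1) v ω) : ℝ) *
      Complex.I) *
    (Real.exp (-(sigma2 ν (p + 1) * ∫ v in (0 : ℝ)..1, (lam * y 0 v ω) ^ 2) / 2) : ℝ)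

/-- The weighted sum `n^{-1/2} J_0^1(y^{(0)}; h^{n,q})`, `q = p + 1`. -/
def wSum (x : ℝ → Ω → ℝ) (ν : ℝ) (y : ℕ → ℝ → Ω → ℝ) (p n : ℕ) (ω : Ω) : ℝ :=
  ∑ k ∈ Finset.range n, y 0 ((k : ℝ) / n) ω * hz x ν n (p + 1) k ω

lemma norm_limChar_le {y : ℕ → ℝ → Ω → ℝ} {p : ℕ} (hσ : 0 ≤ sigma2 ν (p + 1)) (lam : ℝ) (ω : Ω) :
    ‖limChar ν y p lam ω‖ ≤ 1 := by
  rw [limChar, norm_mul, Complex.norm_exp_ofReal_mul_I, one_mul, Complex.norm_real,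
    Real.norm_of_nonneg (Real.exp_pos _).le, Real.exp_le_one_iff]
  have : 0 ≤ ∫ v in (0 : ℝ)..1, (lam * y 0 v ω) ^ 2 :=
    intervalIntegral.integral_nonneg zero_le_one fun _ _ => sq_nonneg _
  have := mul_nonneg hσ this
  linarith

lemma measurable_limChar {y : ℕ → ℝ → Ω → ℝ} {p : ℕ} (hy : ∀ i ≤ p + 1, ∀ t, Measurable (y i t))
    (hc : ∀ i ≤ p + 1, ∀ ω, ContinuousOn (fun t => y i t ω) (Set.Icc 0 1)) (lam : ℝ) :
    Measurable (limChar ν y p lam) := by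
  have h1 := measurable_integral_cont (hy (p + 1) le_rfl) (hc (p + 1) le_rfl)
  have h2 := measurable_integral_cont (f := fun v ω => (lam * y 0 v ω) ^ 2)
    (fun t => ((hy 0 (Nat.zero_le _) t).const_mul lam).pow_const 2)
    (fun ω => ((hc 0 (Nat.zero_le _) ω).const_smul lam).pow 2)
  unfold limChar
  fun_prop

lemma measurable_wSum {y : ℕ → ℝ → Ω → ℝ} {p : ℕ} (hx : IsFBM P ν x)
    (hy : ∀ i ≤ p + 1, ∀ t, Measurable (y i t)) (n : ℕ) : Measurable (wSum x ν y p n) := by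
  unfold wSum
  exact Finset.measurable_sum _ fun k _ => (hy 0 (Nat.zero_le _) _).mul (measurable_hz hx _ n k)

/-- Comparison of two characteristic functions localized on `A`. -/
lemma norm_integral_cexp_sub_le [IsProbabilityMeasure P] {Z : Ω → ℂ} {K : ℝ}
    (hZm : AEStronglyMeasurable Z P) (hZ : ∀ ω, ‖Z ω‖ ≤ K) {A : Set Ω} (hA : MeasurableSet A)
    {f g B : Ω → ℝ} (hf : Measurable f) (hg : Measurable g) (hB : Integrable B P)
    (hB0 : ∀ ω, 0 ≤ B ω) (hfg : ∀ ω ∈ A, |f ω - g ω| ≤ B ω) :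
    ‖(∫ ω, A.indicator Z ω * Complex.exp ((f ω : ℝ) * Complex.I) ∂P) -
      ∫ ω, A.indicator Z ω * Complex.exp ((g ω : ℝ) * Complex.I) ∂P‖ ≤ K * ∫ ω, B ω ∂P := by
  obtain ⟨ω₀⟩ := nonempty_of_isProbabilityMeasure P
  have hK : 0 ≤ K := (norm_nonneg _).trans (hZ ω₀)
  have hZA : ∀ ω, ‖A.indicator Z ω‖ ≤ K := fun ω => (norm_indicator_le_norm_self _ _).trans (hZ ω)
  have i : ∀ {f : Ω → ℝ}, Measurable f → Integrable
      (fun ω => A.indicator Z ω * Complex.exp ((f ω : ℝ) * Complex.I)) P := fun hf =>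
    (integrable_cexp hf).bdd_mul (hZm.indicator hA) (ae_of_all _ hZA)
  rw [← integral_sub (i hf) (i hg), ← integral_const_mul]
  refine norm_integral_le_of_norm_le (hB.const_mul K) (ae_of_all _ fun ω => ?_)
  rw [← mul_sub, norm_mul]
  by_cases hω : ω ∈ A
  · exact mul_le_mul (hZA ω) ((norm_cexp_sub_le _ _).trans (hfg ω hω)) (norm_nonneg _) hK
  · rw [Set.indicator_of_notMem hω, norm_zero, zero_mul]
    exact mul_nonneg hK (hB0 ω)

/-- The weighted limit theorem on a localizing event. -/
lemma clt_local [IsProbabilityMeasure P] {p : ℕ} {K₀ : ℝ} {y : ℕ → ℝ → Ω → ℝ}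
    (hx : IsFBM P ν x) (h : Crit ν p) (hy : Controlled P ν (p + 2) K₀ (xlift x) y) (lam : ℝ)
    {Z : Ω → ℂ} (hZm : AEStronglyMeasurable Z P) {K : ℝ} (hZ : ∀ ω, ‖Z ω‖ ≤ K) {R : ℝ}
    (hR : 0 ≤ R) :
    Tendsto (fun n => ∫ ω, (locSet x y p R).indicator Z ω *
        Complex.exp ((lam * wSum x ν y p n ω : ℝ) * Complex.I) ∂P) atTop
      (nhds (∫ ω, (locSet x y p R).indicator Z ω * limChar ν y p lam ω ∂P)) := by
  have hym : ∀ i ≤ p + 1, ∀ t, Measurable (y i t) := hy.1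
  have hyc : ∀ i ≤ p + 1, ∀ ω, ContinuousOn (fun t => y i t ω) (Set.Icc 0 1) := hy.2.1
  have hσ := sigma2_nonneg h.pos h.le_one hx p
  obtain ⟨C, hC, hcb⟩ := coarse_bound hx h hy
  set A := locSet x y p R with hAdef
  have hA : MeasurableSet A := measurableSet_locSet hx.1 hym R
  have hZA : ∀ ω, ‖A.indicator Z ω‖ ≤ K := fun ω => (norm_indicator_le_norm_self _ _).trans (hZ ω)
  set d : ℝ := (-(1 : ℝ) / 2) ^ (p + 1) with hd
  -- the second grid is so fine that errors of order `(m * N) ^ (-ν)` in `m` cells still vanish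
  set N : ℕ → ℕ := fun j => (j + 1) ^ (4 * (p + 1)) with hN
  have hN0 : ∀ j, 0 < N j := fun j => by simp only [hN]; positivity
  have hM0 : ∀ j, 0 < (j + 1) * N j := fun j => Nat.mul_pos (Nat.succ_pos _) (hN0 j)
  set D : ℕ → Ω → ℝ := fun j ω => lam * (d / (j + 1 : ℕ) *
    ∑ b ∈ Finset.range (j + 1), y (p + 1) ((b : ℝ) / (j + 1 : ℕ)) ω) with hD
  have hDm : ∀ j, Measurable (D j) := fun j =>
    ((Finset.measurable_sum _ fun b _ => hym (p + 1) le_rfl _).const_mul _).const_mul _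
  set w : ℕ → ℕ → Ω → ℝ := fun j b => if b < (j + 1) * N j then
    A.indicator (fun ω => lam * coarseW x y p (j + 1) (N j) b ω) else 0 with hw
  have hwm : ∀ j b, Measurable (w j b) := fun j b => by
    simp only [hw]
    split_ifs
    · exact ((measurable_coarseW hx hym _ _ _).const_mul _).indicator hA
    · exact measurable_const
  set G : ℝ := |lam| * ∑ i ∈ Finset.range (p + 2), R * (2 * R) ^ i with hG
  have hG0 : 0 ≤ G := by positivity
  have hwb : ∀ j b ω, |w j b ω| ≤ G := fun j b ω => by
    simp only [hw]
    split_ifs with hb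
    · by_cases hω : ω ∈ A
      · rw [Set.indicator_of_mem hω, abs_mul]
        exact mul_le_mul_of_nonneg_left (abs_coarseW_le hR hω hb) (abs_nonneg _)
      · rwa [Set.indicator_of_notMem hω, abs_zero]
    · simpa using hG0
  have hwA : ∀ j n, ∀ ω ∈ A, ranSum x ν (p + 1) ((j + 1) * N j) (w j) n ω =
      lam * ranSum x ν (p + 1) ((j + 1) * N j) (coarseW x y p (j + 1) (N j)) n ω := by
    intro j n ω hω
    simp only [ranSum, Finset.mul_sum]
    refine Finset.sum_congr rfl fun k hk => ?_
    have hk := Finset.mem_range.1 hk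
    have : (j + 1) * N j * k / n < (j + 1) * N j := by
      rw [Nat.div_lt_iff_lt_mul (by omega)]
      exact Nat.mul_lt_mul_of_pos_left hk (hM0 j)
    simp only [hw, if_pos this, Set.indicator_of_mem hω]
    ring
  -- the drift does not depend on `n`: its exponential is absorbed in the test variable
  set Zj : ℕ → Ω → ℂ := fun j ω => A.indicator Z ω * Complex.exp ((D j ω : ℝ) * Complex.I) with hZj
  have hZjm : ∀ j, AEStronglyMeasurable (Zj j) P := fun j =>
    (hZm.indicator hA).mul (integrable_cexp (hDm j)).aestronglyMeasurable
  have hZjb : ∀ j ω, ‖Zj j ω‖ ≤ K := fun j ω => by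
    simp only [hZj]
    rw [norm_mul, Complex.norm_exp_ofReal_mul_I, mul_one]
    exact hZA ω
  refine tendsto_approx
    (fun j n => ∫ ω, Zj j ω * Complex.exp
      ((ranSum x ν (p + 1) ((j + 1) * N j) (w j) n ω : ℝ) * Complex.I) ∂P)
    (fun j => ∫ ω, Zj j ω * (Real.exp (-(sigma2 ν (p + 1) *
        ((∑ b ∈ Finset.range ((j + 1) * N j), w j b ω ^ 2) / ((j + 1) * N j : ℕ))) / 2) : ℝ) ∂P)
    (fun j => K * (|lam| * (((j + 1 : ℕ) : ℝ) * (C * (2 / (j + 1 : ℕ)) ^ (1 + ν) +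
      R * C * (1 / (((j + 1) * N j : ℕ) : ℝ)) ^ ν))))
    (fun j => clt_random hx h (hM0 j) (hwm j) (hwb j) (hZjm j) (hZjb j)) ?_ (fun j => ?_) ?_
  · refine tendsto_integral_of_dominated_convergence (fun _ => K) (fun j => ?_)
      (integrable_const _) (fun j => ae_of_all _ fun ω => ?_) ?_
    · refine (hZjm j).mul (Measurable.aestronglyMeasurable ?_)
      have : Measurable fun ω => ∑ b ∈ Finset.range ((j + 1) * N j), w j b ω ^ 2 :=
        Finset.measurable_sum _ fun b _ => (hwm j b).pow_const 2
      fun_prop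
    · rw [norm_mul, Complex.norm_real, Real.norm_of_nonneg (Real.exp_pos _).le]
      refine (mul_le_of_le_one_right (norm_nonneg _) ?_).trans (hZjb j ω)
      rw [Real.exp_le_one_iff]
      have : 0 ≤ (∑ b ∈ Finset.range ((j + 1) * N j), w j b ω ^ 2) / ((j + 1) * N j : ℕ) := by
        positivity
      have := mul_nonneg hσ this
      linarith
    · filter_upwards [hx.2.1] with ω hxc
      by_cases hω : ω ∈ A
      · have hyω : ∀ i ≤ p + 1, ContinuousOn (fun t => y i t ω) (Set.Icc 0 1) :=
          fun i hi => hyc i hi ω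
        have t1 : Tendsto (fun j => D j ω) atTop
            (nhds (lam * (d * ∫ v in (0 : ℝ)..1, y (p + 1) v ω))) := by
          have := ((tendsto_riemann_cont (hyω (p + 1) le_rfl)).const_mul d).const_mul lam
          refine this.congr fun j => ?_
          simp only [hD]
          ring
        have t2 : Tendsto (fun j => (∑ b ∈ Finset.range ((j + 1) * N j), w j b ω ^ 2) /
            ((j + 1) * N j : ℕ)) atTop (nhds (∫ v in (0 : ℝ)..1, (lam * y 0 v ω) ^ 2)) := by
          refine tendsto_riemann (M := fun j => (j + 1) * N j) (g := fun j b => w j b ω ^ 2) hM0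
            (B := G ^ 2) (fun j b _ => ?_) fun t h0 h1 => ?_
          · rw [abs_pow]
            exact pow_le_pow_left₀ (abs_nonneg _) (hwb j b ω) 2
          · refine (((tendsto_coarseW hxc hyω (tendsto_add_atTop_nat 1) hN0 h0 h1).const_mul
              lam).pow 2).congr fun j => ?_
            have : ⌊(((j + 1) * N j : ℕ) : ℝ) * t⌋₊ < (j + 1) * N j := by
              have hp : (0 : ℝ) < ((j + 1) * N j : ℕ) := by exact_mod_cast hM0 j
              rw [Nat.floor_lt (by positivity)]
              exact mul_lt_of_lt_one_right hp h1
            simp only [hw, if_pos this, Set.indicator_of_mem hω]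
        simp only [hZj, limChar, mul_assoc]
        refine Tendsto.const_mul _ (Tendsto.mul ?_ ?_)
        · exact (Complex.continuous_exp.tendsto _).comp
            (((Complex.continuous_ofReal.tendsto _).comp t1).mul_const _)
        · exact (Complex.continuous_ofReal.tendsto _).comp ((Real.continuous_exp.tendsto _).comp
            ((t2.const_mul _).neg.div_const 2))
      · simp only [hZj, Set.indicator_of_notMem hω, zero_mul]
        exact tendsto_const_nhds
  · have := hcb (j + 1) (N j) (Nat.succ_pos _) (hN0 j) A R hA hR
      (fun ω hω i hi b hb => (locSet_bound hω hb.le).1 i (Finset.mem_range.2 (by omega)))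
    filter_upwards [this] with n hn
    obtain ⟨B, hBi, hB0, hB, hBint⟩ := hn
    have hrm := measurable_ranSum hx (p + 1) ((j + 1) * N j) (hwm j) n
    have key := norm_integral_cexp_sub_le hZm hZ hA
      ((measurable_wSum hx hym n).const_mul lam) (hrm.add (hDm j)) (hBi.const_mul |lam|)
      (fun ω => mul_nonneg (abs_nonneg _) (hB0 ω)) (fun ω hω => by
        simp only [Pi.add_apply]
        rw [hwA j n ω hω]
        simp only [hD]
        rw [← mul_add, ← mul_sub, abs_mul]
        exact mul_le_mul_of_nonneg_left (hB ω hω) (abs_nonneg _))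
    obtain ⟨ω₀⟩ := nonempty_of_isProbabilityMeasure P
    have hK : 0 ≤ K := (norm_nonneg _).trans (hZ ω₀)
    rw [integral_const_mul] at key
    refine le_trans (le_of_eq ?_) (key.trans (mul_le_mul_of_nonneg_left
      (mul_le_mul_of_nonneg_left hBint (abs_nonneg _)) hK))
    congr 2
    refine integral_congr_ae (ae_of_all _ fun ω => ?_)
    simp only [hZj, Pi.add_apply]
    rw [mul_assoc, ← Complex.exp_add]
    push_cast
    ring_nf
  · have := ((tendsto_mesh_bound h C (R * C)).const_mul |lam|).const_mul K
    rwa [mul_zero, mul_zero] at this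

/-- The weighted limit theorem tested against bounded random variables. -/
lemma clt_weighted [IsProbabilityMeasure P] {p : ℕ} {K₀ : ℝ} {y : ℕ → ℝ → Ω → ℝ}
    (hx : IsFBM P ν x) (h : Crit ν p) (hy : Controlled P ν (p + 2) K₀ (xlift x) y) (lam : ℝ)
    {Z : Ω → ℂ} (hZm : AEStronglyMeasurable Z P) {K : ℝ} (hZ : ∀ ω, ‖Z ω‖ ≤ K) :
    Tendsto (fun n => ∫ ω, Z ω *
        Complex.exp ((lam * wSum x ν y p n ω : ℝ) * Complex.I) ∂P) atTop
      (nhds (∫ ω, Z ω * limChar ν y p lam ω ∂P)) := by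
  have hym : ∀ i ≤ p + 1, ∀ t, Measurable (y i t) := hy.1
  have hyc : ∀ i ≤ p + 1, ∀ ω, ContinuousOn (fun t => y i t ω) (Set.Icc 0 1) := hy.2.1
  have hσ := sigma2_nonneg h.pos h.le_one hx p
  have hA : ∀ R : ℕ, MeasurableSet (locSet x y p R) := fun R => measurableSet_locSet hx.1 hym R
  have hL := (measurable_limChar (ν := ν) hym hyc lam)
  obtain ⟨ω₀⟩ := nonempty_of_isProbabilityMeasure P
  have hK : 0 ≤ K := (norm_nonneg _).trans (hZ ω₀)
  have hev : ∀ᵐ ω ∂P, ∀ᶠ R : ℕ in atTop, ω ∈ locSet x y p R := by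
    filter_upwards [hx.2.1] with ω hω
    exact eventually_mem_locSet hω fun i hi => hyc i hi ω
  refine tendsto_approx
    (fun (R : ℕ) n => ∫ ω, (locSet x y p R).indicator Z ω *
        Complex.exp ((lam * wSum x ν y p n ω : ℝ) * Complex.I) ∂P)
    (fun (R : ℕ) => ∫ ω, (locSet x y p R).indicator Z ω * limChar ν y p lam ω ∂P)
    (fun R : ℕ => ∫ ω, (locSet x y p R)ᶜ.indicator (fun _ => K) ω ∂P)
    (fun R => clt_local hx h hy lam hZm hZ (Nat.cast_nonneg R)) ?_
    (fun R => Eventually.of_forall fun n => ?_) ?_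
  · refine tendsto_integral_of_dominated_convergence (fun _ => K) (fun R =>
      (hZm.indicator (hA R)).mul hL.aestronglyMeasurable) (integrable_const _)
      (fun R => ae_of_all _ fun ω => ?_) ?_
    · rw [norm_mul]
      exact (mul_le_of_le_one_right (norm_nonneg _) (norm_limChar_le hσ lam ω)).trans
        ((norm_indicator_le_norm_self _ _).trans (hZ ω))
    · filter_upwards [hev] with ω hω
      refine tendsto_const_nhds.congr' ?_
      filter_upwards [hω] with R hR
      rw [Set.indicator_of_mem hR]
  · have hm := (measurable_wSum hx hym n).const_mul lam
    rw [← integral_sub ((integrable_cexp hm).bdd_mul hZm (ae_of_all _ hZ))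
      ((integrable_cexp hm).bdd_mul (hZm.indicator (hA R)) (ae_of_all _ fun ω =>
        (norm_indicator_le_norm_self _ _).trans (hZ ω)))]
    refine norm_integral_le_of_norm_le ((integrable_const K).indicator (hA R).compl)
      (ae_of_all _ fun ω => ?_)
    rw [← sub_mul, norm_mul, Complex.norm_exp_ofReal_mul_I, mul_one]
    by_cases hω : ω ∈ locSet x y p R
    · simp [hω]
    · simpa [hω] using hZ ω
  · have : (0 : ℝ) = ∫ _ω, (0 : ℝ) ∂P := by simp
    rw [this]
    refine tendsto_integral_of_dominated_convergence (fun _ => K) (fun R =>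
      (measurable_const.indicator (hA R).compl).aestronglyMeasurable) (integrable_const _)
      (fun R => ae_of_all _ fun ω => ?_) ?_
    · refine (norm_indicator_le_norm_self _ _).trans ?_
      rw [Real.norm_of_nonneg hK]
    · filter_upwards [hev] with ω hω
      refine tendsto_const_nhds.congr' ?_
      filter_upwards [hω] with R hR
      rw [Set.indicator_of_notMem (by simpa using hR)]

/-- As `y^{(0)}_0 = 0`, the base point drops out of `Jone` on `[0,1]`. -/
lemma Jone_eq {y : ℕ → ℝ → Ω → ℝ} {p : ℕ} (hy0 : ∀ ω, y 0 0 ω = 0) (n : ℕ) (ω : Ω) :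
    (n : ℝ) ^ (-(1 : ℝ) / 2) * Jone n (y 0) (hermIncr x ν n (p + 1)) 0 1 ω = wSum x ν y p n ω := by
  rw [Jone, wSum, Finset.mul_sum]
  refine Finset.sum_congr rfl fun k hk => ?_
  have hk := Finset.mem_range.1 hk
  have hn : (0 : ℝ) < n := by exact_mod_cast (by omega : 0 < n)
  have h1 : (k : ℝ) / n < 1 := by
    rw [div_lt_one hn]
    exact_mod_cast hk
  have e0 : eps n 0 = 0 := by simp [eps]
  rw [if_pos ⟨by positivity, h1⟩, e0, hy0, sub_zero, hz]
  ring

end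

/-- **Critical weighted Hermite variation** (Proposition 4.10 (i)): for fBm with
`ν = 1/(2q)` and a weight controlled by the canonical lift of `x` with `ℓ = q+1`,
`n^{-1/2} J_0^1(y^{(0)};h^{n,q})` converges stably to
`σ ∫₀¹ y^{(0)} dW + (-1/2)^q ∫₀¹ y^{(q)}_u du`, `W` independent of `x`
(characteristic-function formulation). -/
theorem critical_weighted_hermite_variation
    {Ω : Type*} [MeasurableSpace Ω] (P : Measure Ω) [IsProbabilityMeasure P]
    (q : ℕ) (hq : 2 ≤ q) (ν : ℝ) (hν : ν = 1 / (2 * (q : ℝ)))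
    (x : ℝ → Ω → ℝ) (hx : IsFBM P ν x)
    (K₀ : ℝ) (y : ℕ → ℝ → Ω → ℝ) (hy : Controlled P ν (q + 1) K₀ (xlift x) y) :
    ∀ (m : ℕ) (u : Fin m → ℝ), (∀ j, u j ∈ Set.Icc (0 : ℝ) 1) →
      ∀ g : (Fin m → ℝ) → ℂ, Continuous g → (∃ M, ∀ v, ‖g v‖ ≤ M) →
      ∀ lam : ℝ,
      Tendsto (fun n : ℕ => ∫ ω, g (fun j => x (u j) ω) *
            Complex.exp (Complex.I * ((lam * ((n : ℝ) ^ (-(1 : ℝ) / 2) *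
              Jone n (y 0) (hermIncr x ν n q) 0 1 ω) : ℝ) : ℂ)) ∂P)
        atTop (nhds (∫ ω, g (fun j => x (u j) ω) *
          Complex.exp (Complex.I *
              ((lam * (-(1 : ℝ) / 2) ^ q * ∫ v in (0 : ℝ)..1, y q v ω : ℝ) : ℂ) -
            ((lam ^ 2 * ((Nat.factorial q : ℝ) * ∑' k : ℤ, (rho ν k) ^ q) / 2 *
              ∫ v in (0 : ℝ)..1, (y 0 v ω) ^ 2 : ℝ) : ℂ)) ∂P)) := by
  intro m u _ g hg hgb lam
  obtain ⟨M, hM⟩ := hgb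
  obtain ⟨p, rfl⟩ : ∃ p, q = p + 1 := ⟨q - 1, by omega⟩
  have h : Crit ν p := ⟨by
    rw [hν]
    push_cast
    field_simp, by omega⟩
  have hZ : Measurable fun ω => g (fun j => x (u j) ω) :=
    hg.measurable.comp (measurable_pi_lambda _ fun j => hx.1 _)
  have key := clt_weighted hx h hy lam hZ.aestronglyMeasurable (fun ω => hM _)
  convert key using 5 with n ω ω
  · rw [Jone_eq hy.2.2.1, mul_comm]
  · rw [limChar, Complex.ofReal_exp, ← Complex.exp_add]
    congr 1
    simp only [mul_pow, intervalIntegral.integral_const_mul, sigma2]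
    push_cast
    ring

end
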